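/- arXiv:2603.04121 — 2 statements merged into one kernel-verified Lean document; each statement's English description precedes it below -/
import Mathlib

section
/- Let 𝓡 > 0 and let h be a nonnegative continuous weak solution of v∂ₓh − ∂_vvh = 0 in (0,𝓡³)×(−𝓡,𝓡). (a) For every v₀ ∈ [0, 𝓡/2] and all x₀, x₁ with 0 < x₀ ≤ x₁ < 𝓡³/2 there is a constant c > 0 depending only on x₀, v₀ and 𝓡 such that h(x₀, v₀) ≤ c · h(x₁, v₀). (b) If moreover h extends continuously to ({0}×(−𝓡,0)) ∪ ((0,𝓡³)×(−𝓡,𝓡)), then for every v₀ ∈ [−𝓡/2, 0) and all x₀, x₁ with 0 ≤ x₀ ≤ x₁ < 𝓡³/2 there is a constant c > 0 depending only on |v₀| and 𝓡 such that h(x₁, v₀) ≤ c · h(x₀, v₀). -/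
noncomputable section

open MeasureTheory Set Filter
open scoped ENNReal

/-- The one-dimensional phase space, with points `p = (x, v)`. -/
abbrev P2 : Type := ℝ × ℝ

/-- `hv` is the weak derivative of `h` in the second (velocity) variable on `D`. -/
def IsWeakVDeriv (D : Set P2) (h hv : P2 → ℝ) : Prop :=
  ∀ ψ : P2 → ℝ, ContDiff ℝ ((⊤ : ℕ∞) : WithTop ℕ∞) ψ → HasCompactSupport ψ →
    tsupport ψ ⊆ D →
    (∫ p in D, h p * fderiv ℝ ψ p ((0:ℝ), (1:ℝ))) = -∫ p in D, hv p * ψ p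

/-- The box `H_r = (0, r³) × (−r, r)`. -/
def Hrect (r : ℝ) : Set P2 := Set.Ioo (0:ℝ) (r ^ 3) ×ˢ Set.Ioo (-r) r

/-- Weak solution of `v ∂ₓ h − ∂ᵥᵥ h = 0` in `(0,R³) × (−R,R)` with `h = 0` on `{0} × (0,R)`. -/
def IsWeakSolRect (R : ℝ) (h hv : P2 → ℝ) : Prop :=
  LocallyIntegrableOn (fun p => h p ^ 2) (Hrect R) ∧
  LocallyIntegrableOn (fun p => hv p ^ 2) (Hrect R) ∧
  IsWeakVDeriv (Hrect R) h hv ∧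
  ∀ ψ : P2 → ℝ, ContDiff ℝ ((⊤ : ℕ∞) : WithTop ℕ∞) ψ → HasCompactSupport ψ →
    tsupport ψ ⊆ Set.Ico 0 (R ^ 3) ×ˢ Set.Ioo (-R) R →
    tsupport ψ ∩ {p : P2 | p.1 = 0} ⊆ {(0:ℝ)} ×ˢ Set.Ioo (0:ℝ) R →
    (-∫ p in Hrect R, h p * (p.2 * fderiv ℝ ψ p ((1:ℝ), (0:ℝ))))
        + (∫ p in Hrect R, hv p * fderiv ℝ ψ p ((0:ℝ), (1:ℝ))) = 0

/-- Weak solution of `v ∂ₓ h − ∂ᵥᵥ h = 0` in an (open) set `Q` (interior notion, no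
boundary condition). -/
def IsWeakSolOpen (Q : Set P2) (h hv : P2 → ℝ) : Prop :=
  LocallyIntegrableOn (fun p => h p ^ 2) Q ∧
  LocallyIntegrableOn (fun p => hv p ^ 2) Q ∧
  IsWeakVDeriv Q h hv ∧
  ∀ ψ : P2 → ℝ, ContDiff ℝ ((⊤ : ℕ∞) : WithTop ℕ∞) ψ → HasCompactSupport ψ →
    tsupport ψ ⊆ Q →
    (-∫ p in Q, h p * (p.2 * fderiv ℝ ψ p ((1:ℝ), (0:ℝ))))
        + (∫ p in Q, hv p * fderiv ℝ ψ p ((0:ℝ), (1:ℝ))) = 0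

/-!
Let `Ψ (t, ·)` be a family of nonnegative test functions depending on an auxiliary time `t`. If `h`
is a weak solution, then `∫ h Ψ (t, ·)` has derivative `∫ h (∂ₜ + v ∂ₓ + ∂ᵥᵥ) Ψ (t, ·)`, so for
`h ≥ 0` it is nondecreasing as soon as `Ψ` is a subsolution. Two test functions are compared. A
smooth convex truncation of the Kolmogorov kernel with vertex `P₀` is a subsolution supported in a
cone with vertex `P₀`, and its pairing with `h` tends, as `t → 0⁻`, to at most a multiple of
`h P₀`. The kernel whose vertex `P₁` lies one unit of kinetic time earlier, cut off in phase space,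
has a pairing that recovers a multiple of `h P₁` at its vertex. A large multiple of the first minus
the second is again a subsolution, since the error produced by the cutoff is bounded and sits where
the first is a strict subsolution. Hence `h P₁ ≤ C * h P₀`.

For `P₀ = (y, w)` and scale `r`, the point `P₁` is `(y - r² w ± r³, w)`; the sign is chosen so that
the two points differ by `r² |w| + r³`, and chaining finitely many such steps gives both estimates.
Only the cone below `P₀` has to stay in the domain, so for `w < 0` the vertex `P₀` may lie on
`{x = 0}`.
-/

open Topology
open scoped ContDiff

/-! ### The Kolmogorov operator -/

section KolmogorovOperator

variable {f g : ℝ × P2 → ℝ} {p : ℝ × P2}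

/-- The transport derivative `∂ₜf + v ∂ₓf` at `p = (t, x, v)`. -/
def transportDeriv (f : ℝ × P2 → ℝ) (p : ℝ × P2) : ℝ :=
  fderiv ℝ f p (1, p.2.2, 0)

/-- The velocity derivative `∂ᵥf` at `p = (t, x, v)`. -/
def velDeriv (f : ℝ × P2 → ℝ) (p : ℝ × P2) : ℝ :=
  fderiv ℝ f p (0, 0, 1)

/-- The Kolmogorov operator `∂ₜf + v ∂ₓf + ∂ᵥᵥf`: the derivative in an auxiliary time `t`, minus
the formal adjoint of `h ↦ v ∂ₓh - ∂ᵥᵥh`. -/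
def kolOp (f : ℝ × P2 → ℝ) (p : ℝ × P2) : ℝ :=
  transportDeriv f p + velDeriv (velDeriv f) p

lemma transportDeriv_eq_of_hasDerivAt {f' : ℝ} (hf : DifferentiableAt ℝ f p)
    (h : HasDerivAt (fun s : ℝ => f (p + s • (1, p.2.2, 0))) f' 0) : transportDeriv f p = f' := by
  rw [transportDeriv, ← hf.lineDeriv_eq_fderiv]
  exact HasLineDerivAt.lineDeriv h

lemma velDeriv_eq_of_hasDerivAt {f' : ℝ} (hf : DifferentiableAt ℝ f p)
    (h : HasDerivAt (fun v => f (p.1, p.2.1, v)) f' p.2.2) : velDeriv f p = f' := by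
  have hline : HasDerivAt (fun v : ℝ => ((p.1, p.2.1, v) : ℝ × P2)) (0, 0, 1) p.2.2 :=
    (hasDerivAt_const _ _).prodMk ((hasDerivAt_const _ _).prodMk (hasDerivAt_id _))
  exact (hf.hasFDerivAt.comp_hasDerivAt p.2.2 hline).unique h

lemma velDeriv_congr (h : f =ᶠ[𝓝 p] g) : velDeriv f p = velDeriv g p := by
  rw [velDeriv, velDeriv, h.fderiv_eq]

lemma contDiffAt_velDeriv {m n : WithTop ℕ∞} (hf : ContDiffAt ℝ n f p) (hmn : m + 1 ≤ n) :
    ContDiffAt ℝ m (velDeriv f) p :=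
  (hf.fderiv_right hmn).clm_apply contDiffAt_const

lemma eventually_differentiableAt (hf : ContDiffAt ℝ 2 f p) :
    ∀ᶠ q in 𝓝 p, DifferentiableAt ℝ f q :=
  (hf.eventually (by simp)).mono fun _ hq => hq.differentiableAt (by simp)

lemma differentiableAt_velDeriv (hf : ContDiffAt ℝ 2 f p) : DifferentiableAt ℝ (velDeriv f) p :=
  (contDiffAt_velDeriv (m := 1) hf (by norm_num)).differentiableAt (by simp)

lemma velDeriv_sub (hf : DifferentiableAt ℝ f p) (hg : DifferentiableAt ℝ g p) :
    velDeriv (fun q => f q - g q) p = velDeriv f p - velDeriv g p := by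
  simp [velDeriv, fderiv_fun_sub hf hg]

lemma velDeriv_const_mul (c : ℝ) (hf : DifferentiableAt ℝ f p) :
    velDeriv (fun q => c * f q) p = c * velDeriv f p := by
  simp [velDeriv, fderiv_const_mul hf]

lemma velDeriv_add (hf : DifferentiableAt ℝ f p) (hg : DifferentiableAt ℝ g p) :
    velDeriv (fun q => f q + g q) p = velDeriv f p + velDeriv g p := by
  simp [velDeriv, fderiv_fun_add hf hg]

lemma velDeriv_mul (hf : DifferentiableAt ℝ f p) (hg : DifferentiableAt ℝ g p) :
    velDeriv (fun q => f q * g q) p = f p * velDeriv g p + g p * velDeriv f p := by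
  simp [velDeriv, fderiv_fun_mul hf hg]

lemma fderiv_fun_scalar_comp {F : ℝ → ℝ} (hF : DifferentiableAt ℝ F (f p))
    (hf : DifferentiableAt ℝ f p) :
    fderiv ℝ (fun q => F (f q)) p = deriv F (f p) • fderiv ℝ f p :=
  (hF.hasDerivAt.comp_hasFDerivAt p hf.hasFDerivAt).fderiv

lemma velDeriv_comp {F : ℝ → ℝ} (hF : DifferentiableAt ℝ F (f p)) (hf : DifferentiableAt ℝ f p) :
    velDeriv (fun q => F (f q)) p = deriv F (f p) * velDeriv f p := by
  simp [velDeriv, fderiv_fun_scalar_comp hF hf]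

lemma kolOp_sub (hf : ContDiffAt ℝ 2 f p) (hg : ContDiffAt ℝ 2 g p) :
    kolOp (fun q => f q - g q) p = kolOp f p - kolOp g p := by
  have hvel : velDeriv (fun q => f q - g q) =ᶠ[𝓝 p] fun q => velDeriv f q - velDeriv g q := by
    filter_upwards [eventually_differentiableAt hf, eventually_differentiableAt hg] with q hfq hgq
    exact velDeriv_sub hfq hgq
  rw [kolOp, velDeriv_congr hvel,
    velDeriv_sub (differentiableAt_velDeriv hf) (differentiableAt_velDeriv hg), kolOp, kolOp,
    transportDeriv, transportDeriv, transportDeriv,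
    fderiv_fun_sub (hf.differentiableAt (by simp)) (hg.differentiableAt (by simp)),
    sub_apply]
  ring

lemma kolOp_const_mul (c : ℝ) (hf : ContDiffAt ℝ 2 f p) :
    kolOp (fun q => c * f q) p = c * kolOp f p := by
  have hvel : velDeriv (fun q => c * f q) =ᶠ[𝓝 p] fun q => c * velDeriv f q :=
    (eventually_differentiableAt hf).mono fun q hq => velDeriv_const_mul c hq
  rw [kolOp, velDeriv_congr hvel, velDeriv_const_mul c (differentiableAt_velDeriv hf), kolOp,
    transportDeriv, transportDeriv, fderiv_const_mul (hf.differentiableAt (by simp))]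
  simp [mul_add]

lemma kolOp_mul (hf : ContDiffAt ℝ 2 f p) (hg : ContDiffAt ℝ 2 g p) :
    kolOp (fun q => f q * g q) p =
      f p * kolOp g p + g p * kolOp f p + 2 * velDeriv f p * velDeriv g p := by
  have hf' := hf.differentiableAt (by simp)
  have hg' := hg.differentiableAt (by simp)
  have hvel : velDeriv (fun q => f q * g q) =ᶠ[𝓝 p]
      fun q => f q * velDeriv g q + g q * velDeriv f q := by
    filter_upwards [eventually_differentiableAt hf, eventually_differentiableAt hg] with q hfq hgq
    exact velDeriv_mul hfq hgq
  have hvf := differentiableAt_velDeriv hf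
  have hvg := differentiableAt_velDeriv hg
  rw [kolOp, velDeriv_congr hvel, velDeriv_add (hf'.fun_mul hvg) (hg'.fun_mul hvf),
    velDeriv_mul hf' hvg, velDeriv_mul hg' hvf, kolOp, kolOp, transportDeriv, transportDeriv,
    transportDeriv, fderiv_fun_mul hf' hg']
  simp only [add_apply, smul_apply, smul_eq_mul]
  ring

lemma kolOp_comp {F : ℝ → ℝ} (hF : ContDiff ℝ 2 F) (hf : ContDiffAt ℝ 2 f p) :
    kolOp (fun q => F (f q)) p =
      deriv F (f p) * kolOp f p + deriv (deriv F) (f p) * velDeriv f p ^ 2 := by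
  have hf' := hf.differentiableAt (by simp)
  have hF1 : Differentiable ℝ F := hF.differentiable (by simp)
  have hF2 : Differentiable ℝ (deriv F) := hF.differentiable_deriv_two
  have hvel : velDeriv (fun q => F (f q)) =ᶠ[𝓝 p] fun q => deriv F (f q) * velDeriv f q :=
    (eventually_differentiableAt hf).mono fun q hq => velDeriv_comp (hF1 _) hq
  rw [kolOp, velDeriv_congr hvel,
    velDeriv_mul ((hF2 _).fun_comp' p hf') (differentiableAt_velDeriv hf),
    velDeriv_comp (hF2 _) hf', kolOp, transportDeriv, transportDeriv,
    fderiv_fun_scalar_comp (hF1 _) hf']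
  simp only [smul_apply, smul_eq_mul]
  ring

end KolmogorovOperator

section KineticCoordinates

variable {f : ℝ × P2 → ℝ} {z p : ℝ × P2} {r : ℝ}

/-- The kinetic coordinates of `p` centred at `z` with scale `r`: the coordinates in the Galilean
frame at `z`, in which `∂ₜ + v ∂ₓ` keeps its form, divided by `r²`, `r³` and `r`. -/
def kinCoord (z : ℝ × P2) (r : ℝ) (p : ℝ × P2) : ℝ × P2 :=
  ((p.1 - z.1) / r ^ 2, (p.2.1 - z.2.1 - (p.1 - z.1) * z.2.2) / r ^ 3, (p.2.2 - z.2.2) / r)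

/-- The point with kinetic coordinates `p` centred at `z` with scale `r`. -/
def kinPoint (z : ℝ × P2) (r : ℝ) (p : ℝ × P2) : ℝ × P2 :=
  (z.1 + r ^ 2 * p.1, z.2.1 + r ^ 2 * p.1 * z.2.2 + r ^ 3 * p.2.1, z.2.2 + r * p.2.2)

lemma kinPoint_kinCoord (hr : r ≠ 0) : kinPoint z r (kinCoord z r p) = p := by
  ext <;> simp only [kinPoint, kinCoord] <;> field_simp <;> ring

lemma kinCoord_kinCoord {y w δ : ℝ} (hr : r ≠ 0) :
    kinCoord (-1, δ, 0) 1 (kinCoord (0, y, w) r p) =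
      kinCoord (-r ^ 2, y - r ^ 2 * w + r ^ 3 * δ, w) r p := by
  ext <;> simp only [kinCoord] <;> field_simp <;> ring

lemma contDiff_kinCoord : ContDiff ℝ ∞ (kinCoord z r) := by
  unfold kinCoord
  fun_prop

lemma fderiv_comp_kinCoord (hf : DifferentiableAt ℝ f (kinCoord z r p)) (u : ℝ × P2) :
    fderiv ℝ (fun q => f (kinCoord z r q)) p u =
      fderiv ℝ f (kinCoord z r p) (u.1 / r ^ 2, (u.2.1 - u.1 * z.2.2) / r ^ 3, u.2.2 / r) := by
  have hkin : HasFDerivAt (kinCoord z r) (fderiv ℝ (kinCoord z r) p) p :=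
    (contDiff_kinCoord.differentiable (by simp) p).hasFDerivAt
  have hline : HasLineDerivAt ℝ (kinCoord z r)
      (u.1 / r ^ 2, (u.2.1 - u.1 * z.2.2) / r ^ 3, u.2.2 / r) p u := by
    have hpath (a b : ℝ) : HasDerivAt (fun s : ℝ => a + s * b) b 0 := by
      simpa using ((hasDerivAt_id (0 : ℝ)).mul_const b).const_add a
    refine HasDerivAt.prodMk ?_ (HasDerivAt.prodMk ?_ ?_)
    · exact ((hpath p.1 u.1).sub_const z.1).div_const _
    · exact (((hpath p.2.1 u.2.1).sub_const z.2.1).sub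
        (((hpath p.1 u.1).sub_const z.1).mul_const z.2.2)).div_const _
    · exact ((hpath p.2.2 u.2.2).sub_const z.2.2).div_const _
  rw [fderiv_fun_comp p hf hkin.differentiableAt, ContinuousLinearMap.comp_apply,
    ← hkin.differentiableAt.lineDeriv_eq_fderiv, hline.lineDeriv]

lemma velDeriv_comp_kinCoord (hf : DifferentiableAt ℝ f (kinCoord z r p)) :
    velDeriv (fun q => f (kinCoord z r q)) p = r⁻¹ * velDeriv f (kinCoord z r p) := by
  rw [velDeriv, velDeriv, fderiv_comp_kinCoord hf, ← smul_eq_mul (r⁻¹), ← map_smul]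
  simp

lemma transportDeriv_comp_kinCoord (hf : DifferentiableAt ℝ f (kinCoord z r p)) :
    transportDeriv (fun q => f (kinCoord z r q)) p =
      (r ^ 2)⁻¹ * transportDeriv f (kinCoord z r p) := by
  rw [transportDeriv, transportDeriv, fderiv_comp_kinCoord hf, ← smul_eq_mul (r ^ 2)⁻¹,
    ← map_smul]
  simp only [kinCoord, Prod.smul_mk, smul_eq_mul]
  congr 3 <;> ring

lemma kolOp_comp_kinCoord (hf : ContDiffAt ℝ 2 f (kinCoord z r p)) :
    kolOp (fun q => f (kinCoord z r q)) p = (r ^ 2)⁻¹ * kolOp f (kinCoord z r p) := by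
  have hvel : velDeriv (fun q => f (kinCoord z r q)) =ᶠ[𝓝 p]
      fun q => r⁻¹ * velDeriv f (kinCoord z r q) :=
    (contDiff_kinCoord.continuous.continuousAt.eventually (eventually_differentiableAt hf)).mono
      fun q hq => velDeriv_comp_kinCoord hq
  have hvf : DifferentiableAt ℝ (velDeriv f) (kinCoord z r p) := differentiableAt_velDeriv hf
  have hcomp : DifferentiableAt ℝ (fun q => velDeriv f (kinCoord z r q)) p :=
    hvf.fun_comp' p (contDiff_kinCoord.differentiable (by simp) p)
  rw [kolOp, velDeriv_congr hvel, velDeriv_const_mul _ hcomp, velDeriv_comp_kinCoord hvf,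
    transportDeriv_comp_kinCoord (hf.differentiableAt (by simp)), kolOp]
  ring

end KineticCoordinates

/-! ### Pairing a weak solution with a family of test functions -/

section WeakFormulation

variable {Q K : Set P2} {h hv g : P2 → ℝ}

/-- The operator `v ∂ₓg + ∂ᵥᵥg` at `P = (x, v)`, the spatial part of `kolOp`. -/
def spatialOp (g : P2 → ℝ) (P : P2) : ℝ :=
  P.2 * fderiv ℝ g P (1, 0) + fderiv ℝ (fun q => fderiv ℝ g q (0, 1)) P (0, 1)

lemma integrableOn_mul_of_tsupport_subset (hQ : IsOpen Q) (hc : ContinuousOn h Q)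
    (hK : IsCompact K) (hKQ : K ⊆ Q) (hg : Continuous g) (hgK : tsupport g ⊆ K) :
    IntegrableOn (fun P => h P * g P) Q := by
  refine IntegrableOn.of_forall_sdiff_eq_zero (s := K)
    (((hc.mono hKQ).mul hg.continuousOn).integrableOn_compact hK) hQ.measurableSet ?_
  intro P hP
  simp [image_eq_zero_of_notMem_tsupport fun h => hP.2 (hgK h)]

lemma contDiff_fderiv_const_apply (hg : ContDiff ℝ ∞ g) (u : P2) :
    ContDiff ℝ ∞ fun P => fderiv ℝ g P u :=
  (hg.fderiv_right (by simp)).clm_apply contDiff_const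

lemma integrableOn_mul_transport (hQ : IsOpen Q) (hc : ContinuousOn h Q) (hg : ContDiff ℝ ∞ g)
    (hK : HasCompactSupport g) (hgQ : tsupport g ⊆ Q) :
    IntegrableOn (fun P => h P * (P.2 * fderiv ℝ g P (1, 0))) Q :=
  integrableOn_mul_of_tsupport_subset hQ hc hK hgQ
    (continuous_snd.mul (contDiff_fderiv_const_apply hg _).continuous)
    (tsupport_mul_subset_right.trans (tsupport_fderiv_apply_subset ℝ _))

lemma integrableOn_mul_diffusion (hQ : IsOpen Q) (hc : ContinuousOn h Q) (hg : ContDiff ℝ ∞ g)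
    (hK : HasCompactSupport g) (hgQ : tsupport g ⊆ Q) :
    IntegrableOn (fun P => h P * fderiv ℝ (fun q => fderiv ℝ g q (0, 1)) P (0, 1)) Q :=
  integrableOn_mul_of_tsupport_subset hQ hc hK hgQ
    (contDiff_fderiv_const_apply (contDiff_fderiv_const_apply hg _) _).continuous
    ((tsupport_fderiv_apply_subset ℝ _).trans (tsupport_fderiv_apply_subset ℝ _))

lemma integrableOn_mul_spatialOp (hQ : IsOpen Q) (hc : ContinuousOn h Q) (hg : ContDiff ℝ ∞ g)
    (hK : HasCompactSupport g) (hgQ : tsupport g ⊆ Q) :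
    IntegrableOn (fun P => h P * spatialOp g P) Q := by
  simp only [spatialOp, mul_add]
  exact (integrableOn_mul_transport hQ hc hg hK hgQ).add
    (integrableOn_mul_diffusion hQ hc hg hK hgQ)

lemma setIntegral_mul_spatialOp_eq_zero (hQ : IsOpen Q) (hsol : IsWeakSolOpen Q h hv)
    (hc : ContinuousOn h Q) (hg : ContDiff ℝ ∞ g) (hK : HasCompactSupport g)
    (hgQ : tsupport g ⊆ Q) : ∫ P in Q, h P * spatialOp g P = 0 := by
  obtain ⟨-, -, hweakDeriv, hweak⟩ := hsol
  have htsupport : tsupport (fun P => fderiv ℝ g P (0, 1)) ⊆ tsupport g :=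
    tsupport_fderiv_apply_subset ℝ _
  have htransport := hweak g hg hK hgQ
  have hdiffusion := hweakDeriv _ (contDiff_fderiv_const_apply hg (0, 1))
    (hK.of_isClosed_subset (isClosed_tsupport _) htsupport) (htsupport.trans hgQ)
  simp only [spatialOp, mul_add]
  rw [integral_add (integrableOn_mul_transport hQ hc hg hK hgQ)
    (integrableOn_mul_diffusion hQ hc hg hK hgQ)]
  linarith

end WeakFormulation

section TestFamilies

variable {I J : Set ℝ} {Q : Set P2} {h hv : P2 → ℝ} {Ψ Φ : ℝ × P2 → ℝ} {t a b : ℝ}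
  {P : P2}

lemma fderiv_slice (hΨ : DifferentiableAt ℝ Ψ (t, P)) (u : P2) :
    fderiv ℝ (fun q => Ψ (t, q)) P u = fderiv ℝ Ψ (t, P) (0, u) := by
  have hslice : HasFDerivAt (fun q => Ψ (t, q)) _ P :=
    hΨ.hasFDerivAt.comp P (hasFDerivAt_prodMk_right t P)
  simp [hslice.fderiv]

lemma hasDerivAt_time (hΨ : DifferentiableAt ℝ Ψ (t, P)) :
    HasDerivAt (fun τ => Ψ (τ, P)) (fderiv ℝ Ψ (t, P) (1, 0)) t :=
  hΨ.hasFDerivAt.comp_hasDerivAt t ((hasDerivAt_id t).prodMk (hasDerivAt_const t P))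

lemma fderiv_time_eq_zero {K : Set P2} (hΨ : DifferentiableAt ℝ Ψ (t, P))
    (hsupp : ∀ᶠ τ in 𝓝 t, Function.support (fun P => Ψ (τ, P)) ⊆ K) (hP : P ∉ K) :
    fderiv ℝ Ψ (t, P) (1, 0) = 0 :=
  (hasDerivAt_time hΨ).unique <| (hasDerivAt_const t (0 : ℝ)).congr_of_eventuallyEq <|
    hsupp.mono fun _ hτ => Function.notMem_support.1 fun h => hP (hτ h)

/-- `t ↦ Ψ (t, ·)`, `t ∈ I`, is a family of test functions on `Q`: `Ψ` is smooth, and the supports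
of its slices stay in a compact subset of `Q` locally uniformly in `t`. -/
structure IsTestFamily (I : Set ℝ) (Q : Set P2) (Ψ : ℝ × P2 → ℝ) : Prop where
  contDiffAt : ∀ t ∈ I, ∀ P, ContDiffAt ℝ ∞ Ψ (t, P)
  exists_support_subset : ∀ t ∈ I, ∃ K ⊆ Q, IsCompact K ∧
    ∀ᶠ τ in 𝓝 t, Function.support (fun P => Ψ (τ, P)) ⊆ K

namespace IsTestFamily

lemma mono (hΨ : IsTestFamily I Q Ψ) (hJ : J ⊆ I) : IsTestFamily J Q Ψ :=
  ⟨fun t ht => hΨ.contDiffAt t (hJ ht), fun t ht => hΨ.exists_support_subset t (hJ ht)⟩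

lemma const_mul (hΨ : IsTestFamily I Q Ψ) (c : ℝ) : IsTestFamily I Q fun p => c * Ψ p := by
  refine ⟨fun t ht P => contDiffAt_const.mul (hΨ.contDiffAt t ht P), fun t ht => ?_⟩
  obtain ⟨K, hKQ, hK, hsupp⟩ := hΨ.exists_support_subset t ht
  exact ⟨K, hKQ, hK, hsupp.mono fun τ hτ =>
    (Function.support_mul_subset_right (fun _ => c) _).trans hτ⟩

lemma sub (hΨ : IsTestFamily I Q Ψ) (hΦ : IsTestFamily I Q Φ) :
    IsTestFamily I Q fun p => Ψ p - Φ p := by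
  refine ⟨fun t ht P => (hΨ.contDiffAt t ht P).sub (hΦ.contDiffAt t ht P), fun t ht => ?_⟩
  obtain ⟨K, hKQ, hK, hKsupp⟩ := hΨ.exists_support_subset t ht
  obtain ⟨L, hLQ, hL, hLsupp⟩ := hΦ.exists_support_subset t ht
  refine ⟨K ∪ L, union_subset hKQ hLQ, hK.union hL, ?_⟩
  filter_upwards [hKsupp, hLsupp] with τ hKτ hLτ
  exact (Function.support_sub _ _).trans (union_subset_union hKτ hLτ)

lemma contDiff_slice (hΨ : IsTestFamily I Q Ψ) (ht : t ∈ I) :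
    ContDiff ℝ ∞ fun P => Ψ (t, P) :=
  contDiff_iff_contDiffAt.2 fun P =>
    (hΨ.contDiffAt t ht P).comp P (contDiffAt_const.prodMk contDiffAt_id)

lemma hasCompactSupport_slice (hΨ : IsTestFamily I Q Ψ) (ht : t ∈ I) :
    HasCompactSupport fun P => Ψ (t, P) := by
  obtain ⟨K, -, hK, hsupp⟩ := hΨ.exists_support_subset t ht
  exact HasCompactSupport.of_support_subset_isCompact hK hsupp.self_of_nhds

lemma tsupport_slice_subset (hΨ : IsTestFamily I Q Ψ) (ht : t ∈ I) :
    tsupport (fun P => Ψ (t, P)) ⊆ Q := by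
  obtain ⟨K, hKQ, hK, hsupp⟩ := hΨ.exists_support_subset t ht
  exact (closure_minimal hsupp.self_of_nhds hK.isClosed).trans hKQ

lemma integrableOn_slice (hΨ : IsTestFamily I Q Ψ) (hQ : IsOpen Q) (hc : ContinuousOn h Q)
    (ht : t ∈ I) : IntegrableOn (fun P => h P * Ψ (t, P)) Q :=
  integrableOn_mul_of_tsupport_subset hQ hc (hΨ.hasCompactSupport_slice ht)
    (hΨ.tsupport_slice_subset ht) (hΨ.contDiff_slice ht).continuous subset_rfl

lemma kolOp_eq (hΨ : IsTestFamily I Q Ψ) (ht : t ∈ I) (P : P2) :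
    kolOp Ψ (t, P) = fderiv ℝ Ψ (t, P) (1, 0) + spatialOp (fun q => Ψ (t, q)) P := by
  have hdiff (q : P2) : DifferentiableAt ℝ Ψ (t, q) :=
    (hΨ.contDiffAt t ht q).differentiableAt (by simp)
  have hvel : (fun q => fderiv ℝ (fun q => Ψ (t, q)) q (0, 1)) = fun q => velDeriv Ψ (t, q) :=
    funext fun q => fderiv_slice (hdiff q) _
  have hvelDiff : DifferentiableAt ℝ (velDeriv Ψ) (t, P) :=
    differentiableAt_velDeriv ((hΨ.contDiffAt t ht P).of_le (ENat.LEInfty.out))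
  rw [spatialOp, hvel, fderiv_slice hvelDiff, fderiv_slice (hdiff P), kolOp, transportDeriv,
    ← smul_eq_mul, ← map_smul, ← add_assoc, ← map_add]
  simp [velDeriv]

lemma continuousOn_fderiv_time (hΨ : IsTestFamily I Q Ψ) :
    ContinuousOn (fun z => fderiv ℝ Ψ z (1, 0)) (I ×ˢ univ) := fun z hz =>
  (((hΨ.contDiffAt z.1 hz.1 z.2).continuousAt_fderiv (by simp)).clm_apply
    continuousAt_const).continuousWithinAt

lemma hasDerivAt_setIntegral_mul (hΨ : IsTestFamily I Q Ψ) (hI : IsOpen I) (hQ : IsOpen Q)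
    (hc : ContinuousOn h Q) (ht : t ∈ I) :
    IntegrableOn (fun P => h P * fderiv ℝ Ψ (t, P) (1, 0)) Q ∧
      HasDerivAt (fun τ => ∫ P in Q, h P * Ψ (τ, P))
        (∫ P in Q, h P * fderiv ℝ Ψ (t, P) (1, 0)) t := by
  obtain ⟨K, hKQ, hK, hsupp⟩ := hΨ.exists_support_subset t ht
  obtain ⟨ρ, hρ, hball⟩ := Metric.nhds_basis_closedBall.mem_iff.1
    (inter_mem (hI.mem_nhds ht) (eventually_eventually_nhds.2 hsupp))
  have hdiff {τ} (hτ : τ ∈ I) (P : P2) : DifferentiableAt ℝ Ψ (τ, P) :=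
    (hΨ.contDiffAt τ hτ P).differentiableAt (by simp)
  obtain ⟨B, hB⟩ := ((isCompact_closedBall t ρ).prod hK).exists_bound_of_continuousOn
    (hΨ.continuousOn_fderiv_time.mono
      (prod_mono (fun τ hτ => (hball hτ).1) (subset_univ K)))
  have hmeas : AEStronglyMeasurable h (volume.restrict Q) :=
    hc.aestronglyMeasurable hQ.measurableSet
  have hbound : IntegrableOn (fun P => ‖h P‖ * B) K :=
    ((hc.mono hKQ).norm.mul continuousOn_const).integrableOn_compact hK
  refine hasDerivAt_integral_of_dominated_loc_of_deriv_le (𝕜 := ℝ)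
    (F := fun τ P => h P * Ψ (τ, P)) (F' := fun τ P => h P * fderiv ℝ Ψ (τ, P) (1, 0))
    (s := Metric.closedBall t ρ) (bound := K.indicator fun P => ‖h P‖ * B)
    (Metric.closedBall_mem_nhds t hρ) ?_ (hΨ.integrableOn_slice hQ hc ht) ?_ ?_ ?_ ?_
  · filter_upwards [hI.mem_nhds ht] with τ hτ
    exact hmeas.mul (hΨ.contDiff_slice hτ).continuous.aestronglyMeasurable
  · refine hmeas.mul (Continuous.aestronglyMeasurable (continuousOn_univ.1 ?_))
    exact hΨ.continuousOn_fderiv_time.comp (f := fun P : P2 => (t, P)) (by fun_prop)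
      fun P _ => ⟨ht, mem_univ _⟩
  · refine Eventually.of_forall fun P τ hτ => ?_
    by_cases hP : P ∈ K
    · rw [indicator_of_mem hP, norm_mul]
      gcongr
      exact hB (τ, P) ⟨hτ, hP⟩
    · simp [fderiv_time_eq_zero (hdiff (hball hτ).1 P) (hball hτ).2 hP, hP]
  · exact ((integrable_indicator_iff hK.measurableSet).2 hbound).integrableOn
  · exact Eventually.of_forall fun P τ hτ =>
      (hasDerivAt_time (hdiff (hball hτ).1 P)).const_mul _

lemma hasDerivAt_setIntegral_mul_kolOp (hΨ : IsTestFamily I Q Ψ) (hI : IsOpen I)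
    (hQ : IsOpen Q) (hsol : IsWeakSolOpen Q h hv) (hc : ContinuousOn h Q) (ht : t ∈ I) :
    HasDerivAt (fun τ => ∫ P in Q, h P * Ψ (τ, P)) (∫ P in Q, h P * kolOp Ψ (t, P)) t := by
  obtain ⟨hint, hderiv⟩ := hΨ.hasDerivAt_setIntegral_mul hI hQ hc ht
  have hsmooth := hΨ.contDiff_slice ht
  have hK := hΨ.hasCompactSupport_slice ht
  have hsupp := hΨ.tsupport_slice_subset ht
  refine hderiv.congr_deriv ?_
  simp only [hΨ.kolOp_eq ht, mul_add]
  rw [integral_add hint (integrableOn_mul_spatialOp hQ hc hsmooth hK hsupp),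
    setIntegral_mul_spatialOp_eq_zero hQ hsol hc hsmooth hK hsupp, add_zero]

lemma monotoneOn_setIntegral_mul (hΨ : IsTestFamily (Ioo a b) Q Ψ) (hQ : IsOpen Q)
    (hsol : IsWeakSolOpen Q h hv) (hc : ContinuousOn h Q) (hpos : ∀ P ∈ Q, 0 ≤ h P)
    (hL : ∀ t ∈ Ioo a b, ∀ P ∈ Q, 0 ≤ kolOp Ψ (t, P)) :
    MonotoneOn (fun t => ∫ P in Q, h P * Ψ (t, P)) (Ioo a b) := by
  have hderiv (t) (ht : t ∈ Ioo a b) :=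
    hΨ.hasDerivAt_setIntegral_mul_kolOp isOpen_Ioo hQ hsol hc ht
  refine monotoneOn_of_deriv_nonneg (convex_Ioo a b)
    (fun t ht => (hderiv t ht).continuousAt.continuousWithinAt) ?_ ?_ <;> rw [interior_Ioo]
  · exact fun t ht => (hderiv t ht).differentiableAt.differentiableWithinAt
  · intro t ht
    rw [(hderiv t ht).deriv]
    exact setIntegral_nonneg hQ.measurableSet fun P hP => mul_nonneg (hpos P hP) (hL t ht P hP)

end IsTestFamily

end TestFamilies

/-! ### The Kolmogorov kernel -/

section Kernel

variable {p : ℝ × P2} {η : ℝ}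

/-- The fundamental solution of the adjoint Kolmogorov equation, without its normalizing constant:
with `s = -t`, it is `s⁻² exp (-(v² / s + 3 x v / s² + 3 x² / s³))`. It is meaningful for
`t < 0`. -/
def kolKernel (p : ℝ × P2) : ℝ :=
  (p.1 ^ 2)⁻¹ *
    Real.exp (p.2.2 ^ 2 / p.1 - 3 * p.2.1 * p.2.2 / p.1 ^ 2 + 3 * p.2.1 ^ 2 / p.1 ^ 3)

/-- The logarithmic velocity derivative of `kolKernel`. -/
def kolSlope (p : ℝ × P2) : ℝ :=
  2 * p.2.2 / p.1 - 3 * p.2.1 / p.1 ^ 2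

/-- The quantity `v² / s + x² / s³` with `s = -t`, comparable to minus the exponent of
`kolKernel`. -/
def kinQuad (p : ℝ × P2) : ℝ :=
  p.2.2 ^ 2 / -p.1 + p.2.1 ^ 2 / (-p.1) ^ 3

lemma contDiffAt_kolKernel {n : WithTop ℕ∞} (hp : p.1 ≠ 0) : ContDiffAt ℝ n kolKernel p := by
  have h2 : p.1 ^ 2 ≠ 0 := pow_ne_zero _ hp
  have h3 : p.1 ^ 3 ≠ 0 := pow_ne_zero _ hp
  unfold kolKernel
  fun_prop (disch := assumption)

lemma contDiffAt_kolSlope {n : WithTop ℕ∞} (hp : p.1 ≠ 0) : ContDiffAt ℝ n kolSlope p := by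
  have h2 : p.1 ^ 2 ≠ 0 := pow_ne_zero _ hp
  unfold kolSlope
  fun_prop (disch := assumption)

lemma kolKernel_pos (hp : p.1 ≠ 0) : 0 < kolKernel p := by
  unfold kolKernel
  positivity

lemma velDeriv_kolKernel (hp : p.1 ≠ 0) : velDeriv kolKernel p = kolSlope p * kolKernel p := by
  refine velDeriv_eq_of_hasDerivAt
    ((contDiffAt_kolKernel (n := 1) hp).differentiableAt (by simp)) ?_
  have hsq : HasDerivAt (fun v : ℝ => v ^ 2) (2 * p.2.2) p.2.2 := by
    simpa using hasDerivAt_pow 2 p.2.2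
  refine (((((hsq.div_const p.1).sub (((hasDerivAt_id p.2.2).const_mul (3 * p.2.1)).div_const
    (p.1 ^ 2))).add_const (3 * p.2.1 ^ 2 / p.1 ^ 3)).exp).const_mul (p.1 ^ 2)⁻¹).congr_deriv ?_
  simp only [kolKernel, kolSlope, Pi.sub_apply, id]
  field_simp

lemma velDeriv_kolSlope (hp : p.1 ≠ 0) : velDeriv kolSlope p = 2 / p.1 := by
  refine velDeriv_eq_of_hasDerivAt ((contDiffAt_kolSlope (n := 1) hp).differentiableAt (by simp)) ?_
  simpa [kolSlope] using
    (((hasDerivAt_id p.2.2).const_mul 2).div_const p.1).sub_const (3 * p.2.1 / p.1 ^ 2)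

lemma velDeriv_velDeriv_kolKernel (hp : p.1 ≠ 0) :
    velDeriv (velDeriv kolKernel) p = (2 / p.1 + kolSlope p ^ 2) * kolKernel p := by
  have hvel : velDeriv kolKernel =ᶠ[𝓝 p] fun q => kolSlope q * kolKernel q :=
    (continuousAt_fst.eventually_ne hp).mono fun q hq => velDeriv_kolKernel hq
  rw [velDeriv_congr hvel,
    velDeriv_mul ((contDiffAt_kolSlope (n := 1) hp).differentiableAt (by simp))
      ((contDiffAt_kolKernel (n := 1) hp).differentiableAt (by simp)),
    velDeriv_kolKernel hp, velDeriv_kolSlope hp]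
  ring

lemma transportDeriv_kolKernel (hp : p.1 ≠ 0) :
    transportDeriv kolKernel p = -(2 / p.1 + kolSlope p ^ 2) * kolKernel p := by
  refine transportDeriv_eq_of_hasDerivAt
    ((contDiffAt_kolKernel (n := 1) hp).differentiableAt (by simp)) ?_
  have ht : HasDerivAt (fun s : ℝ => p.1 + s * 1) 1 0 := by
    simpa using (hasDerivAt_id (0 : ℝ)).const_add p.1
  have hx : HasDerivAt (fun s : ℝ => p.2.1 + s * p.2.2) p.2.2 0 := by
    simpa using ((hasDerivAt_id (0 : ℝ)).mul_const p.2.2).const_add p.2.1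
  have hv : HasDerivAt (fun s : ℝ => p.2.2 + s * 0) 0 0 := by
    simpa using hasDerivAt_const (0 : ℝ) p.2.2
  have h0 : p.1 + 0 * 1 ≠ 0 := by simpa using hp
  refine (((ht.pow 2).inv (pow_ne_zero 2 h0)).mul
    ((((hv.pow 2).div ht h0).sub (((hx.const_mul 3).mul hv).div (ht.pow 2) (pow_ne_zero 2 h0))).add
      (((hx.pow 2).const_mul 3).div (ht.pow 3) (pow_ne_zero 3 h0))).exp).congr_deriv ?_
  simp only [kolKernel, kolSlope, Pi.pow_apply, Pi.add_apply, Pi.sub_apply, Pi.div_apply,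
    Pi.mul_apply, Pi.inv_apply, Nat.cast_ofNat, Nat.add_one_sub_one, pow_one, mul_one, mul_zero,
    zero_mul, add_zero, zero_sub]
  field_simp
  ring

lemma kolOp_kolKernel (hp : p.1 ≠ 0) : kolOp kolKernel p = 0 := by
  rw [kolOp, transportDeriv_kolKernel hp, velDeriv_velDeriv_kolKernel hp]
  ring

lemma kinQuad_nonneg (hp : p.1 < 0) : 0 ≤ kinQuad p := by
  have : 0 < -p.1 := neg_pos.2 hp
  unfold kinQuad
  positivity

lemma kolKernel_le (hp : p.1 < 0) :
    kolKernel p ≤ (p.1 ^ 2)⁻¹ * Real.exp (-(kinQuad p / 8)) := by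
  unfold kolKernel kinQuad
  gcongr
  have hs : 0 < -p.1 := neg_pos.2 hp
  have hsquare : 0 ≤ (7 / 8 * (p.2.2 + 12 / 7 * (p.2.1 / -p.1)) ^ 2 +
      17 / 56 * (p.2.1 / -p.1) ^ 2) / -p.1 := by positivity
  refine le_of_sub_nonneg (hsquare.trans_eq ?_)
  have := hp.ne
  field_simp
  ring

lemma kolKernel_mul_kinQuad_pow_le (hp : p.1 < 0) (n : ℕ) :
    kolKernel p * kinQuad p ^ n ≤ n.factorial * 8 ^ n / p.1 ^ 2 := by
  have hq := kinQuad_nonneg hp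
  have hpow : (kinQuad p / 8) ^ n ≤ n.factorial * Real.exp (kinQuad p / 8) := by
    have := Real.pow_div_factorial_le_exp (kinQuad p / 8) (by positivity) n
    rwa [div_le_iff₀' (by positivity)] at this
  calc kolKernel p * kinQuad p ^ n
      ≤ (p.1 ^ 2)⁻¹ * Real.exp (-(kinQuad p / 8)) * (8 ^ n * (kinQuad p / 8) ^ n) := by
        rw [← mul_pow, mul_div_cancel₀ _ (by norm_num)]
        gcongr
        exact kolKernel_le hp
    _ ≤ (p.1 ^ 2)⁻¹ * Real.exp (-(kinQuad p / 8)) *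
          (8 ^ n * (n.factorial * Real.exp (kinQuad p / 8))) := by gcongr
    _ = n.factorial * 8 ^ n / p.1 ^ 2 := by
        rw [Real.exp_neg]
        field_simp

lemma le_kolKernel (hp : p.1 < 0) (hx : p.2.1 ^ 2 ≤ 4 * (-p.1) ^ 3) (hv : p.2.2 ^ 2 ≤ -p.1) :
    Real.exp (-19) / p.1 ^ 2 ≤ kolKernel p := by
  have hs : 0 < -p.1 := neg_pos.2 hp
  have hx' : p.2.1 ^ 2 / (-p.1) ^ 3 ≤ 4 := by rwa [div_le_iff₀ (by positivity)]
  have hv' : p.2.2 ^ 2 / -p.1 ≤ 1 := by rwa [div_le_one hs]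
  have hcross : 0 ≤ 3 / 4 * (2 * p.2.2 - p.2.1 / -p.1) ^ 2 / -p.1 := by positivity
  have hexponent : p.2.2 ^ 2 / p.1 - 3 * p.2.1 * p.2.2 / p.1 ^ 2 + 3 * p.2.1 ^ 2 / p.1 ^ 3 =
      3 / 4 * (2 * p.2.2 - p.2.1 / -p.1) ^ 2 / -p.1 - 4 * (p.2.2 ^ 2 / -p.1) -
        15 / 4 * (p.2.1 ^ 2 / (-p.1) ^ 3) := by
    have := hp.ne
    field_simp
    ring
  rw [kolKernel, div_eq_inv_mul, hexponent]
  gcongr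
  linarith

lemma kolKernel_le_of_half_le (hp : p.1 < 0) (hp2 : -2 ≤ p.1)
    (hxv : 1 / 2 ≤ |p.2.1| ∨ 1 / 2 ≤ |p.2.2|) : kolKernel p ≤ 24 * 128 ^ 4 * p.1 ^ 2 := by
  have hs : 0 < -p.1 := neg_pos.2 hp
  have hquad : 1 / (16 * -p.1) ≤ kinQuad p := by
    have hsum : 1 / 16 ≤ p.2.2 ^ 2 + (p.2.1 / -p.1) ^ 2 := by
      rcases hxv with hx | hv
      · have : 1 / 4 ≤ |p.2.1 / -p.1| := by
          rw [abs_div, abs_of_pos hs, le_div_iff₀ hs]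
          linarith
        nlinarith [sq_nonneg p.2.2, sq_abs (p.2.1 / -p.1)]
      · nlinarith [sq_nonneg (p.2.1 / -p.1), sq_abs p.2.2]
    calc 1 / (16 * -p.1) = 1 / 16 / -p.1 := by field_simp
      _ ≤ (p.2.2 ^ 2 + (p.2.1 / -p.1) ^ 2) / -p.1 := by gcongr
      _ = kinQuad p := by rw [kinQuad, add_div, div_pow, div_div, ← pow_succ]
  have hbound : kolKernel p * (1 / (16 * -p.1)) ^ 4 ≤ 24 * 8 ^ 4 / p.1 ^ 2 :=
    (mul_le_mul_of_nonneg_left (pow_le_pow_left₀ (by positivity) hquad 4)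
      (kolKernel_pos hp.ne).le).trans (kolKernel_mul_kinQuad_pow_le hp 4)
  have hne := hp.ne
  calc kolKernel p = kolKernel p * (1 / (16 * -p.1)) ^ 4 * (16 * -p.1) ^ 4 := by field_simp
    _ ≤ 24 * 8 ^ 4 / p.1 ^ 2 * (16 * -p.1) ^ 4 := by gcongr
    _ = 24 * 128 ^ 4 * p.1 ^ 2 := by
        field_simp
        norm_num

lemma pow_six_le_of_le_kolKernel (hη : 0 < η) (hp : p.1 < 0) (hΓ : η ≤ kolKernel p) :
    p.2.1 ^ 6 ≤ 6 * 8 ^ 3 / η * (-p.1) ^ 7 ∧ p.2.2 ^ 6 ≤ 6 * 8 ^ 3 / η * -p.1 := by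
  have hs : 0 < -p.1 := neg_pos.2 hp
  have hquad : kinQuad p ^ 3 ≤ 6 * 8 ^ 3 / η / (-p.1) ^ 2 := by
    rw [div_right_comm, le_div_iff₀' hη, neg_sq]
    exact (mul_le_mul_of_nonneg_right hΓ (pow_nonneg (kinQuad_nonneg hp) 3)).trans
      (kolKernel_mul_kinQuad_pow_le hp 3)
  have hx : (p.2.1 ^ 2 / (-p.1) ^ 3) ^ 3 ≤ 6 * 8 ^ 3 / η / (-p.1) ^ 2 :=
    (pow_le_pow_left₀ (by positivity) (le_add_of_nonneg_left (by positivity)) 3).trans hquad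
  have hv : (p.2.2 ^ 2 / -p.1) ^ 3 ≤ 6 * 8 ^ 3 / η / (-p.1) ^ 2 :=
    (pow_le_pow_left₀ (by positivity) (le_add_of_nonneg_right (by positivity)) 3).trans hquad
  rw [div_pow, div_le_div_iff₀ (by positivity) (by positivity)] at hx hv
  constructor <;> refine le_of_mul_le_mul_right ?_ (pow_pos hs 2) <;> linarith

/-- The bound `|x| ≤ M s` is linear in `s = -t`: the level sets stay in a cone, so that the vertex
may lie on the boundary of the domain. -/
lemma exists_bounds_of_le_kolKernel (hη : 0 < η) : ∃ M : ℝ, 3 ≤ M ∧ ∀ p : ℝ × P2, -3 ≤ p.1 →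
    p.1 < 0 → η ≤ kolKernel p → |p.2.1| ≤ M * -p.1 ∧ |p.2.2| ≤ M ∧ p.2.2 ^ 6 ≤ M * -p.1 := by
  obtain ⟨C, hC⟩ : ∃ C : ℝ, 6 * 8 ^ 3 / η = C := ⟨_, rfl⟩
  have hC0 : 0 < C := by
    rw [← hC]
    positivity
  have hM : 3 * C ≤ (3 + 3 * C) ^ 6 :=
    (le_add_of_nonneg_left (by norm_num)).trans (le_self_pow₀ (by linarith) (by norm_num))
  refine ⟨3 + 3 * C, by linarith, fun p hp3 hp hΓ => ?_⟩
  have hs : 0 < -p.1 := neg_pos.2 hp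
  obtain ⟨hx, hv⟩ := pow_six_le_of_le_kolKernel hη hp hΓ
  rw [hC] at hx hv
  refine ⟨le_of_pow_le_pow_left₀ (n := 6) (by norm_num) (by positivity) ?_,
    le_of_pow_le_pow_left₀ (n := 6) (by norm_num) (by positivity) ?_, by nlinarith⟩
  · calc |p.2.1| ^ 6 = p.2.1 ^ 6 := Even.pow_abs (by decide) _
      _ ≤ C * -p.1 * (-p.1) ^ 6 := hx.trans_eq (by ring)
      _ ≤ (3 + 3 * C) ^ 6 * (-p.1) ^ 6 := by
        gcongr
        nlinarith
      _ = ((3 + 3 * C) * -p.1) ^ 6 := by ring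
  · rw [Even.pow_abs (by decide)]
    nlinarith

end Kernel

/-! ### The two test functions -/

section SmoothRamp

variable {y z : ℝ}

/-- A smooth convex nondecreasing function that vanishes exactly on `(-∞, 0]`. Composed with a
solution it produces compactly supported subsolutions. -/
def smoothRamp (y : ℝ) : ℝ :=
  y * expNegInvGlue y

lemma contDiff_smoothRamp {n : ℕ∞} : ContDiff ℝ n smoothRamp :=
  contDiff_id.mul expNegInvGlue.contDiff

lemma smoothRamp_of_nonpos (hy : y ≤ 0) : smoothRamp y = 0 := by
  simp [smoothRamp, expNegInvGlue.zero_of_nonpos hy]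

lemma smoothRamp_pos (hy : 0 < y) : 0 < smoothRamp y :=
  mul_pos hy (expNegInvGlue.pos_of_pos hy)

lemma smoothRamp_nonneg (y : ℝ) : 0 ≤ smoothRamp y := by
  rcases le_or_gt y 0 with hy | hy
  · exact (smoothRamp_of_nonpos hy).ge
  · exact (smoothRamp_pos hy).le

lemma smoothRamp_le (hyz : y ≤ z) (hz : 0 ≤ z) : smoothRamp y ≤ z := by
  rcases le_or_gt y 0 with hy | hy
  · exact (smoothRamp_of_nonpos hy).trans_le hz
  · have hglue : expNegInvGlue y ≤ 1 := by
      rw [expNegInvGlue, if_neg hy.not_ge, Real.exp_le_one_iff, neg_nonpos]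
      positivity
    exact (mul_le_of_le_one_right hy.le hglue).trans hyz

lemma deriv_smoothRamp : deriv smoothRamp = fun y => (1 + y⁻¹) * expNegInvGlue y := by
  funext y
  have hglue := expNegInvGlue.hasDerivAt_polynomial_eval_inv_mul 1 y
  simp only [Polynomial.eval_one, one_mul, Polynomial.derivative_one, sub_zero, mul_one,
    Polynomial.eval_pow, Polynomial.eval_X] at hglue
  refine (((hasDerivAt_id y).mul hglue).congr_deriv ?_).deriv
  simp only [id]
  rcases eq_or_ne y 0 with rfl | hy
  · simp
  · field_simp

lemma deriv_deriv_smoothRamp :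
    deriv (deriv smoothRamp) = fun y => y⁻¹ ^ 3 * expNegInvGlue y := by
  funext y
  have hglue := expNegInvGlue.hasDerivAt_polynomial_eval_inv_mul (1 + Polynomial.X) y
  simp only [Polynomial.eval_one, Polynomial.eval_add, Polynomial.eval_X] at hglue
  rw [deriv_smoothRamp, hglue.deriv]
  simp only [Polynomial.derivative_add, Polynomial.derivative_one, Polynomial.derivative_X,
    Polynomial.eval_mul, Polynomial.eval_pow, Polynomial.eval_sub, Polynomial.eval_add,
    Polynomial.eval_one, Polynomial.eval_X, Polynomial.eval_zero]
  ring

lemma deriv_smoothRamp_nonneg (y : ℝ) : 0 ≤ deriv smoothRamp y := by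
  rw [deriv_smoothRamp]
  rcases le_or_gt y 0 with hy | hy
  · simp [expNegInvGlue.zero_of_nonpos hy]
  · exact mul_nonneg (by positivity) (expNegInvGlue.nonneg y)

lemma deriv_deriv_smoothRamp_nonneg (y : ℝ) : 0 ≤ deriv (deriv smoothRamp) y := by
  rw [deriv_deriv_smoothRamp]
  rcases le_or_gt y 0 with hy | hy
  · simp [expNegInvGlue.zero_of_nonpos hy]
  · exact mul_nonneg (by positivity) (expNegInvGlue.nonneg y)

lemma monotone_smoothRamp : Monotone smoothRamp :=
  monotone_of_deriv_nonneg ((contDiff_smoothRamp (n := 1)).differentiable (by simp))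
    deriv_smoothRamp_nonneg

lemma monotone_deriv_smoothRamp : Monotone (deriv smoothRamp) :=
  monotone_of_deriv_nonneg (contDiff_smoothRamp (n := 2)).differentiable_deriv_two
    deriv_deriv_smoothRamp_nonneg

lemma smoothRamp_le_mul_deriv (hy : 0 < y) : smoothRamp y ≤ y * deriv smoothRamp y := by
  rw [deriv_smoothRamp, smoothRamp]
  have hglue := expNegInvGlue.nonneg y
  have hinv : 0 < y⁻¹ := by positivity
  gcongr
  nlinarith

end SmoothRamp

section SubTest

variable {η : ℝ} {p : ℝ × P2}

/-- The compactly supported subsolution below the Kolmogorov kernel: it vanishes where the kernel is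
below the level `η (1 - t)`. -/
def subTest (η : ℝ) (p : ℝ × P2) : ℝ :=
  smoothRamp (kolKernel p - η * (1 - p.1))

lemma contDiffAt_level {n : WithTop ℕ∞} (hp : p.1 ≠ 0) :
    ContDiffAt ℝ n (fun q : ℝ × P2 => kolKernel q - η * (1 - q.1)) p :=
  (contDiffAt_kolKernel hp).sub (by fun_prop)

lemma contDiffAt_subTest {n : ℕ∞} (hp : p.1 ≠ 0) : ContDiffAt ℝ n (subTest η) p :=
  contDiff_smoothRamp.contDiffAt.comp p (contDiffAt_level hp)

lemma kolOp_level (hp : p.1 ≠ 0) :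
    kolOp (fun q : ℝ × P2 => kolKernel q - η * (1 - q.1)) p = η := by
  have hfderiv (q : ℝ × P2) :
      fderiv ℝ (fun q : ℝ × P2 => 1 - q.1) q = -ContinuousLinearMap.fst ℝ ℝ P2 := by
    rw [fderiv_const_sub, fderiv_fst]
  have htime : kolOp (fun q : ℝ × P2 => 1 - q.1) p = -1 := by
    have hvel : velDeriv (fun q : ℝ × P2 => 1 - q.1) = fun _ => 0 := by
      funext q
      simp [velDeriv, hfderiv]
    rw [kolOp, hvel, transportDeriv, hfderiv]
    simp [velDeriv]
  rw [kolOp_sub (contDiffAt_kolKernel hp) (by fun_prop), kolOp_const_mul η (by fun_prop), htime,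
    kolOp_kolKernel hp]
  ring

lemma mul_deriv_smoothRamp_le_kolOp_subTest (hp : p.1 ≠ 0) :
    η * deriv smoothRamp (kolKernel p - η * (1 - p.1)) ≤ kolOp (subTest η) p := by
  have hkol : kolOp (subTest η) p = _ :=
    kolOp_comp (contDiff_smoothRamp (n := 2)) (contDiffAt_level (η := η) hp)
  rw [hkol, kolOp_level hp, mul_comm]
  exact le_add_of_nonneg_right (mul_nonneg (deriv_deriv_smoothRamp_nonneg _) (sq_nonneg _))

lemma kolOp_subTest_nonneg (hη : 0 ≤ η) (hp : p.1 ≠ 0) : 0 ≤ kolOp (subTest η) p :=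
  (mul_nonneg hη (deriv_smoothRamp_nonneg _)).trans (mul_deriv_smoothRamp_le_kolOp_subTest hp)

lemma subTest_le_kolKernel (hη : 0 ≤ η) (hp : p.1 < 0) : subTest η p ≤ kolKernel p :=
  smoothRamp_le (sub_le_self _ (mul_nonneg hη (by linarith))) (kolKernel_pos hp.ne).le

lemma le_kolKernel_of_subTest_ne_zero (hη : 0 ≤ η) (hp : p.1 < 0) (h : subTest η p ≠ 0) :
    η ≤ kolKernel p := by
  by_contra! hlt
  exact h (smoothRamp_of_nonpos (by nlinarith))

end SubTest

section CutTest

variable {p : ℝ × P2}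

/-- A smooth bump function on phase space: it equals `1` on the square of half side `1 / 2` and is
supported in the square of half side `1`, both centred at `0`. -/
def phaseBump : ContDiffBump (0 : P2) :=
  ⟨1 / 2, 1, by norm_num, by norm_num⟩

/-- The Kolmogorov kernel cut off in phase space, uniformly in time. -/
def cutTest (p : ℝ × P2) : ℝ :=
  phaseBump p.2 * kolKernel p

lemma mem_closedBall_zero_iff_abs {P : P2} {ρ : ℝ} :
    P ∈ Metric.closedBall (0 : P2) ρ ↔ |P.1| ≤ ρ ∧ |P.2| ≤ ρ := by
  rw [mem_closedBall_zero_iff, Prod.norm_def, sup_le_iff, Real.norm_eq_abs, Real.norm_eq_abs]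

lemma phaseBump_eq_one {P : P2} (hP : |P.1| ≤ 1 / 2 ∧ |P.2| ≤ 1 / 2) : phaseBump P = 1 :=
  phaseBump.one_of_mem_closedBall (mem_closedBall_zero_iff_abs.2 hP)

lemma abs_le_one_of_cutTest_ne_zero (h : cutTest p ≠ 0) : |p.2.1| ≤ 1 ∧ |p.2.2| ≤ 1 := by
  have hsupp : p.2 ∈ Function.support phaseBump := left_ne_zero_of_mul h
  rw [phaseBump.support_eq] at hsupp
  exact mem_closedBall_zero_iff_abs.1 (Metric.ball_subset_closedBall hsupp)

lemma contDiffAt_phaseBump_snd {n : ℕ∞} : ContDiffAt ℝ n (fun q : ℝ × P2 => phaseBump q.2) p :=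
  (phaseBump.contDiff.comp contDiff_snd).contDiffAt

lemma contDiffAt_cutTest {n : ℕ∞} (hp : p.1 ≠ 0) : ContDiffAt ℝ n cutTest p :=
  contDiffAt_phaseBump_snd.mul (contDiffAt_kolKernel hp)

lemma cutTest_nonneg (hp : p.1 ≠ 0) : 0 ≤ cutTest p :=
  mul_nonneg phaseBump.nonneg (kolKernel_pos hp).le

lemma cutTest_le_kolKernel (hp : p.1 ≠ 0) : cutTest p ≤ kolKernel p :=
  mul_le_of_le_one_left (kolKernel_pos hp).le phaseBump.le_one

lemma fderiv_comp_snd {g : P2 → ℝ} (hg : DifferentiableAt ℝ g p.2) (u : ℝ × P2) :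
    fderiv ℝ (fun q : ℝ × P2 => g q.2) p u = fderiv ℝ g p.2 u.2 := by
  rw [fderiv_fun_comp p hg differentiableAt_snd, fderiv_snd]
  rfl

lemma velDeriv_comp_snd {g : P2 → ℝ} (hg : DifferentiableAt ℝ g p.2) :
    velDeriv (fun q : ℝ × P2 => g q.2) p = fderiv ℝ g p.2 (0, 1) :=
  fderiv_comp_snd hg _

lemma kolOp_comp_snd {g : P2 → ℝ} (hg : ContDiff ℝ ∞ g) (p : ℝ × P2) :
    kolOp (fun q : ℝ × P2 => g q.2) p = spatialOp g p.2 := by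
  have hdiff : Differentiable ℝ g := hg.differentiable (by simp)
  have hvel : velDeriv (fun q : ℝ × P2 => g q.2) = fun q => fderiv ℝ g q.2 (0, 1) :=
    funext fun q => velDeriv_comp_snd (hdiff _)
  rw [kolOp, hvel,
    velDeriv_comp_snd ((contDiff_fderiv_const_apply hg (0, 1)).differentiable (by simp) _),
    transportDeriv, fderiv_comp_snd (hdiff _), spatialOp, ← smul_eq_mul, ← map_smul]
  simp

lemma kolOp_cutTest (hp : p.1 ≠ 0) :
    kolOp cutTest p = (spatialOp phaseBump p.2 +
      2 * fderiv ℝ phaseBump p.2 (0, 1) * kolSlope p) * kolKernel p := by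
  have hmul : kolOp cutTest p = _ :=
    kolOp_mul (contDiffAt_phaseBump_snd (n := 2)) (contDiffAt_kolKernel hp)
  rw [hmul, kolOp_kolKernel hp, kolOp_comp_snd phaseBump.contDiff, velDeriv_kolKernel hp,
    velDeriv_comp_snd ((phaseBump.contDiff (n := 1)).differentiable (by simp) _)]
  ring

end CutTest

/-! ### The barrier -/

section Barrier

variable {p : ℝ × P2} {g : P2 → ℝ} {P : P2} {b k δ : ℝ}

lemma continuous_spatialOp (hg : ContDiff ℝ ∞ g) : Continuous (spatialOp g) :=
  (continuous_snd.mul (contDiff_fderiv_const_apply hg (1, 0)).continuous).add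
    (contDiff_fderiv_const_apply (contDiff_fderiv_const_apply hg (0, 1)) (0, 1)).continuous

lemma fderiv_eventuallyEq_zero (hg : g =ᶠ[𝓝 P] fun _ => b) (u : P2) :
    (fun q => fderiv ℝ g q u) =ᶠ[𝓝 P] fun _ => 0 :=
  (hg.fderiv (𝕜 := ℝ)).mono fun q hq => by simp [hq]

lemma spatialOp_eq_zero (hg : g =ᶠ[𝓝 P] fun _ => b) : spatialOp g P = 0 := by
  simp [spatialOp, hg.fderiv_eq, (fderiv_eventuallyEq_zero hg (0, 1)).fderiv_eq]

lemma kolOp_cutTest_eq_zero (hp : p.1 ≠ 0) (hconst : phaseBump =ᶠ[𝓝 p.2] fun _ => b) :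
    kolOp cutTest p = 0 := by
  simp [kolOp_cutTest hp, spatialOp_eq_zero hconst, hconst.fderiv_eq]

lemma abs_kolSlope_mul_sq_le (hp : p.1 < 0) (hx : |p.2.1| ≤ 1) (hv : |p.2.2| ≤ 1) :
    |kolSlope p| * p.1 ^ 2 ≤ 2 * -p.1 + 3 := by
  have hslope : kolSlope p * p.1 ^ 2 = 2 * p.2.2 * p.1 - 3 * p.2.1 := by
    rw [kolSlope]
    field_simp [hp.ne]
  rw [← abs_of_nonneg (sq_nonneg p.1), ← abs_mul, hslope]
  refine (abs_sub _ _).trans ?_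
  simp only [abs_mul, abs_of_neg hp, Nat.abs_ofNat]
  nlinarith

lemma kolOp_cutTest_eq_zero_or (hp : p.1 ≠ 0) : kolOp cutTest p = 0 ∨
    p.2 ∈ Metric.closedBall (0 : P2) 1 ∧ (1 / 2 ≤ |p.2.1| ∨ 1 / 2 ≤ |p.2.2|) := by
  by_cases hout : p.2 ∈ Metric.closedBall (0 : P2) 1
  · by_cases hin : p.2 ∈ Metric.ball (0 : P2) (1 / 2)
    · exact .inl (kolOp_cutTest_eq_zero hp (phaseBump.eventuallyEq_one_of_mem_ball hin))
    · refine .inr ⟨hout, ?_⟩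
      rwa [mem_ball_zero_iff, not_lt, Prod.norm_def, le_sup_iff] at hin
  · refine .inl (kolOp_cutTest_eq_zero (b := 0) hp ?_)
    refine notMem_tsupport_iff_eventuallyEq.1 ?_
    rwa [phaseBump.tsupport_eq]

lemma exists_kolOp_cutTest_le :
    ∃ B : ℝ, 0 ≤ B ∧ ∀ p : ℝ × P2, -2 ≤ p.1 → p.1 < 0 → kolOp cutTest p ≤ B := by
  have hsmooth : ContDiff ℝ ∞ phaseBump := phaseBump.contDiff
  obtain ⟨A, hA⟩ := (isCompact_closedBall (0 : P2) 1).exists_bound_of_continuousOn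
    (continuous_spatialOp hsmooth).continuousOn
  obtain ⟨B, hB⟩ := (isCompact_closedBall (0 : P2) 1).exists_bound_of_continuousOn
    (contDiff_fderiv_const_apply hsmooth (0, 1)).continuous.continuousOn
  have hA0 : 0 ≤ A := (norm_nonneg _).trans (hA 0 (by simp))
  have hB0 : 0 ≤ B := (norm_nonneg _).trans (hB 0 (by simp))
  refine ⟨(4 * A + 14 * B) * (24 * 128 ^ 4), by positivity, fun p hp2 hp => ?_⟩
  rcases kolOp_cutTest_eq_zero_or hp.ne with hzero | ⟨hball, hhalf⟩
  · rw [hzero]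
    positivity
  obtain ⟨hx, hv⟩ := mem_closedBall_zero_iff_abs.1 hball
  have hslope := abs_kolSlope_mul_sq_le hp hx hv
  have hsq : p.1 ^ 2 ≤ 4 := by nlinarith
  calc kolOp cutTest p
      = (spatialOp phaseBump p.2 + 2 * fderiv ℝ phaseBump p.2 (0, 1) * kolSlope p) *
          kolKernel p := kolOp_cutTest hp.ne
    _ ≤ (A + 2 * B * |kolSlope p|) * (24 * 128 ^ 4 * p.1 ^ 2) := by
      have hfderiv : fderiv ℝ phaseBump p.2 (0, 1) * kolSlope p ≤ B * |kolSlope p| :=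
        (le_abs_self _).trans ((abs_mul _ _).trans_le (by gcongr; exact hB _ hball))
      have hspatial : spatialOp phaseBump p.2 ≤ A := (le_abs_self _).trans (hA _ hball)
      exact mul_le_mul (by linarith) (kolKernel_le_of_half_le hp hp2 hhalf)
        (kolKernel_pos hp.ne).le (by positivity)
    _ = (A * p.1 ^ 2 + 2 * B * (|kolSlope p| * p.1 ^ 2)) * (24 * 128 ^ 4) := by ring
    _ ≤ (A * 4 + 2 * B * 7) * (24 * 128 ^ 4) := by
      gcongr
      linarith
    _ = (4 * A + 14 * B) * (24 * 128 ^ 4) := by ring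

/-- The level at which the subsolution below the kernel is cut. The value is small enough for the
subsolution to be positive where the shifted truncated kernel lives, see `harnackLevel_le`. -/
def harnackLevel : ℝ :=
  Real.exp (-19) / 45

lemma harnackLevel_pos : 0 < harnackLevel := by
  unfold harnackLevel
  positivity

/-- The difference between a multiple of the subsolution at the vertex `0` and the truncated kernel
with vertex at time `-1` and position `δ`. -/
def barrier (k δ : ℝ) (p : ℝ × P2) : ℝ :=
  k * subTest harnackLevel p - cutTest (kinCoord (-1, δ, 0) 1 p)

lemma kinCoord_neg_one (p : ℝ × P2) :
    kinCoord (-1, δ, 0) 1 p = (p.1 + 1, p.2.1 - δ, p.2.2) := by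
  simp [kinCoord]

lemma contDiffAt_cutTest_kinCoord {n : ℕ∞} (hp : p.1 ≠ -1) :
    ContDiffAt ℝ n (fun q => cutTest (kinCoord (-1, δ, 0) 1 q)) p := by
  refine (contDiffAt_cutTest ?_).comp p (contDiff_kinCoord.of_le (by simp)).contDiffAt
  rw [kinCoord_neg_one]
  exact fun h => hp (by linarith)

lemma kolOp_barrier (hp : p.1 < -1) : kolOp (barrier k δ) p =
    k * kolOp (subTest harnackLevel) p - kolOp cutTest (kinCoord (-1, δ, 0) 1 p) := by
  have hsub : ContDiffAt ℝ 2 (subTest harnackLevel) p :=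
    contDiffAt_subTest (n := 2) (by linarith : p.1 < 0).ne
  have hcut : ContDiffAt ℝ 2 (fun q => cutTest (kinCoord (-1, δ, 0) 1 q)) p :=
    contDiffAt_cutTest_kinCoord (n := 2) hp.ne
  have hp' : (kinCoord (-1, δ, 0) 1 p).1 ≠ 0 := by
    rw [kinCoord_neg_one]
    exact (by linarith : p.1 + 1 < 0).ne
  have hkin := kolOp_comp_kinCoord (contDiffAt_cutTest (n := 2) hp')
  unfold barrier
  rw [kolOp_sub (contDiffAt_const.mul hsub) hcut, kolOp_const_mul k hsub, hkin]
  simp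

lemma harnackLevel_le (hp3 : -3 ≤ p.1) (hp1 : p.1 ≤ -1) (hδ : |δ| ≤ 1)
    (hx : |(kinCoord (-1, δ, 0) 1 p).2.1| ≤ 1) (hv : |(kinCoord (-1, δ, 0) 1 p).2.2| ≤ 1) :
    harnackLevel ≤ kolKernel p - harnackLevel * (1 - p.1) := by
  rw [kinCoord_neg_one, abs_le] at hx hv
  rw [abs_le] at hδ
  have hker : Real.exp (-19) / p.1 ^ 2 ≤ kolKernel p := by
    refine le_kolKernel (by linarith) ?_ (by nlinarith)
    have hcube : 1 ≤ (-p.1) ^ 3 := one_le_pow₀ (by linarith)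
    nlinarith
  have hsq : Real.exp (-19) / 9 ≤ Real.exp (-19) / p.1 ^ 2 := by
    gcongr
    · nlinarith
    · nlinarith
  have hlevel := harnackLevel_pos
  have hexp : Real.exp (-19) / 9 = 5 * harnackLevel := by
    unfold harnackLevel
    ring
  nlinarith

lemma smoothRamp_harnackLevel_le_kolOp_subTest (hp : p.1 ≠ 0)
    (h : harnackLevel ≤ kolKernel p - harnackLevel * (1 - p.1)) :
    smoothRamp harnackLevel ≤ kolOp (subTest harnackLevel) p :=
  calc smoothRamp harnackLevel
      ≤ harnackLevel * deriv smoothRamp harnackLevel := smoothRamp_le_mul_deriv harnackLevel_pos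
    _ ≤ harnackLevel * deriv smoothRamp (kolKernel p - harnackLevel * (1 - p.1)) :=
      mul_le_mul_of_nonneg_left (monotone_deriv_smoothRamp h) harnackLevel_pos.le
    _ ≤ kolOp (subTest harnackLevel) p := mul_deriv_smoothRamp_le_kolOp_subTest hp

lemma kolOp_barrier_nonneg (hk : 0 ≤ k) (hδ : |δ| ≤ 1) (hp3 : -3 ≤ p.1) (hp1 : p.1 < -1)
    (hcut : kolOp cutTest (kinCoord (-1, δ, 0) 1 p) ≤ k * smoothRamp harnackLevel) :
    0 ≤ kolOp (barrier k δ) p := by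
  have hp : p.1 ≠ 0 := by linarith
  have hp' : (kinCoord (-1, δ, 0) 1 p).1 ≠ 0 := by
    rw [kinCoord_neg_one]
    exact (by linarith : p.1 + 1 < 0).ne
  rw [kolOp_barrier hp1, sub_nonneg]
  rcases kolOp_cutTest_eq_zero_or hp' with hzero | ⟨hball, -⟩
  · rw [hzero]
    exact mul_nonneg hk (kolOp_subTest_nonneg harnackLevel_pos.le hp)
  · obtain ⟨hx, hv⟩ := mem_closedBall_zero_iff_abs.1 hball
    exact hcut.trans (mul_le_mul_of_nonneg_left (smoothRamp_harnackLevel_le_kolOp_subTest hp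
      (harnackLevel_le hp3 hp1.le hδ hx hv)) hk)

lemma barrier_nonneg (hδ : |δ| ≤ 1) (hk : 1 ≤ k * smoothRamp harnackLevel) (hp : p.1 = -2) :
    0 ≤ barrier k δ p := by
  have hk0 : 0 ≤ k :=
    le_of_mul_le_mul_right (by linarith) (smoothRamp_pos harnackLevel_pos)
  have hp' : (kinCoord (-1, δ, 0) 1 p).1 = -1 := by
    rw [kinCoord_neg_one, hp]
    norm_num
  rw [barrier, sub_nonneg]
  by_cases hcut : cutTest (kinCoord (-1, δ, 0) 1 p) = 0
  · rw [hcut]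
    exact mul_nonneg hk0 (smoothRamp_nonneg _)
  obtain ⟨hx, hv⟩ := abs_le_one_of_cutTest_ne_zero hcut
  have hker : kolKernel (kinCoord (-1, δ, 0) 1 p) ≤ 1 := by
    have hquad := kinQuad_nonneg (p := kinCoord (-1, δ, 0) 1 p) (by linarith)
    refine (kolKernel_le (by linarith)).trans ?_
    rw [hp', neg_one_sq, inv_one, one_mul, Real.exp_le_one_iff]
    linarith
  calc cutTest (kinCoord (-1, δ, 0) 1 p)
      ≤ kolKernel (kinCoord (-1, δ, 0) 1 p) := cutTest_le_kolKernel (by linarith)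
    _ ≤ k * smoothRamp harnackLevel := hker.trans hk
    _ ≤ k * subTest harnackLevel p := mul_le_mul_of_nonneg_left
      (monotone_smoothRamp (harnackLevel_le (by linarith) (by linarith) hδ hx hv)) hk0

lemma exists_barrier_nonneg : ∃ k : ℝ, 0 ≤ k ∧ ∀ δ : ℝ, |δ| ≤ 1 →
    (∀ p : ℝ × P2, -3 ≤ p.1 → p.1 < -1 → 0 ≤ kolOp (barrier k δ) p) ∧
      ∀ p : ℝ × P2, p.1 = -2 → 0 ≤ barrier k δ p := by
  obtain ⟨B, hB0, hB⟩ := exists_kolOp_cutTest_le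
  have hramp := smoothRamp_pos harnackLevel_pos
  have hk : (B + 1) / smoothRamp harnackLevel * smoothRamp harnackLevel = B + 1 :=
    div_mul_cancel₀ _ hramp.ne'
  refine ⟨(B + 1) / smoothRamp harnackLevel, by positivity, fun δ hδ =>
    ⟨fun p hp3 hp1 => kolOp_barrier_nonneg (by positivity) hδ hp3 hp1 ?_,
      fun p hp => barrier_nonneg hδ (by linarith) hp⟩⟩
  rw [hk, kinCoord_neg_one]
  exact (hB _ (by linarith) (by linarith)).trans (by linarith)

end Barrier

/-! ### Behaviour of the pairings at the vertices -/

section Cone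

variable {M a b α β r : ℝ} {Q : Set P2} {ψ : ℝ × P2 → ℝ} {P₀ : P2}

/-- The backward cone with vertex `0` that contains the supports of the test functions, in kinetic
coordinates. -/
def kinCone (M : ℝ) : Set (ℝ × P2) :=
  {p | p.1 ∈ Ico (-3) 0 ∧ |p.2.1| ≤ M * -p.1 ∧ |p.2.2| ≤ M}

lemma isCompact_kinCone_inter (hα : -3 ≤ α) (hβ : β < 0) :
    IsCompact (kinCone M ∩ Prod.fst ⁻¹' Icc α β) := by
  have hset : kinCone M ∩ Prod.fst ⁻¹' Icc α β = (Prod.fst ⁻¹' Icc α β) ∩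
      ({p : ℝ × P2 | |p.2.1| ≤ M * -p.1} ∩ {p : ℝ × P2 | |p.2.2| ≤ M}) := by
    ext p
    simp only [kinCone, mem_inter_iff, mem_ofPred_eq, mem_preimage, mem_Icc, mem_Ico]
    grind
  refine ((isCompact_Icc (a := α) (b := β)).prod ((isCompact_Icc (a := -(M * 3)) (b := M * 3)).prod
    (isCompact_Icc (a := -M) (b := M)))).of_isClosed_subset ?_ ?_
  · rw [hset]
    exact (isClosed_Icc.preimage continuous_fst).inter
      ((isClosed_le (by fun_prop) (by fun_prop)).inter (isClosed_le (by fun_prop) (by fun_prop)))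
  · rintro p ⟨⟨hp, hx, hv⟩, hpI⟩
    have hM : 0 ≤ M := (abs_nonneg _).trans hv
    exact ⟨hpI, abs_le.1 (hx.trans (by gcongr; linarith [hp.1])), abs_le.1 hv⟩

lemma isTestFamily_comp_kinCoord (hr : 0 < r) (ha : -3 ≤ a) (hb : b ≤ 0)
    (hsmooth : ∀ p : ℝ × P2, p.1 ∈ Ioo a b → ContDiffAt ℝ ∞ ψ p)
    (hsupp : ∀ p : ℝ × P2, p.1 ∈ Ioo a b → ψ p ≠ 0 → p ∈ kinCone M)
    (hcone : MapsTo (fun p => (kinPoint (0, P₀) r p).2) (kinCone M) Q) :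
    IsTestFamily (Ioo (r ^ 2 * a) (r ^ 2 * b)) Q fun p => ψ (kinCoord (0, P₀) r p) := by
  have hr2 : 0 < r ^ 2 := by positivity
  have htime {t : ℝ} (P : P2) (ht : t ∈ Ioo (r ^ 2 * a) (r ^ 2 * b)) :
      (kinCoord (0, P₀) r (t, P)).1 ∈ Ioo a b := by
    rw [kinCoord, sub_zero, mem_Ioo, lt_div_iff₀' hr2, div_lt_iff₀' hr2]
    exact ht
  refine ⟨fun t ht P => (hsmooth _ (htime P ht)).comp _ contDiff_kinCoord.contDiffAt,
    fun t ht => ?_⟩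
  obtain ⟨hat, htb⟩ := htime 0 ht
  obtain ⟨α, haα, hαt⟩ := exists_between hat
  obtain ⟨β, htβ, hβb⟩ := exists_between htb
  refine ⟨(fun p => (kinPoint (0, P₀) r p).2) '' (kinCone M ∩ Prod.fst ⁻¹' Icc α β),
    (hcone.mono_left inter_subset_left).image_subset,
    (isCompact_kinCone_inter (by linarith) (by linarith)).image (by unfold kinPoint; fun_prop), ?_⟩
  have hcont : Continuous fun τ => (kinCoord (0, P₀) r (τ, (0 : P2))).1 :=
    (contDiff_kinCoord.continuous.comp (by fun_prop)).fst
  filter_upwards [isOpen_Ioo.mem_nhds ht, hcont.continuousAt (Icc_mem_nhds hαt htβ)]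
    with τ hτ hτI P hP
  exact ⟨kinCoord (0, P₀) r (τ, P), ⟨hsupp _ (htime P hτ) hP, hτI⟩,
    congrArg Prod.snd (kinPoint_kinCoord hr.ne')⟩

end Cone

section UpperLimit

variable {P P₀ : P2} {t r m η M : ℝ} {z p : ℝ × P2} {Q : Set P2} {h : P2 → ℝ}

lemma exp_neg_kinQuad_eq (t : ℝ) (P : P2) : Real.exp (-(kinQuad (t, P) / 8)) =
    Real.exp (-(8 * (-t) ^ 3)⁻¹ * P.1 ^ 2) * Real.exp (-(8 * -t)⁻¹ * P.2 ^ 2) := by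
  rw [← Real.exp_add, kinQuad]
  congr 1
  field_simp
  ring

lemma integrable_exp_neg_kinQuad (ht : t < 0) :
    Integrable fun P : P2 => Real.exp (-(kinQuad (t, P) / 8)) := by
  have hs : 0 < -t := neg_pos.2 ht
  simp only [exp_neg_kinQuad_eq]
  exact (integrable_exp_neg_mul_sq (by positivity)).mul_prod
    (integrable_exp_neg_mul_sq (by positivity))

lemma integral_exp_neg_kinQuad (ht : t < 0) :
    ∫ P : P2, Real.exp (-(kinQuad (t, P) / 8)) = 8 * Real.pi * t ^ 2 := by
  have hs : 0 < -t := neg_pos.2 ht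
  simp only [exp_neg_kinQuad_eq]
  rw [Measure.volume_eq_prod, integral_prod_mul (fun x : ℝ => Real.exp (-(8 * (-t) ^ 3)⁻¹ * x ^ 2))
    (fun v : ℝ => Real.exp (-(8 * -t)⁻¹ * v ^ 2)), integral_gaussian, integral_gaussian,
    ← Real.sqrt_mul (by positivity), ← Real.sqrt_sq (by positivity : 0 ≤ 8 * Real.pi * t ^ 2)]
  congr 1
  field_simp

lemma kinQuad_kinCoord (hr : r ≠ 0) : kinQuad (kinCoord z r p) = kinQuad
    (p.1 - z.1, p.2 - (z.2.1 + (p.1 - z.1) * z.2.2, z.2.2)) := by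
  simp only [kinQuad, kinCoord, Prod.fst_sub, Prod.snd_sub]
  congr 1 <;> field_simp
  ring

lemma kolKernel_kinCoord_le (hr : 0 < r) (ht : t < z.1) (P : P2) : kolKernel (kinCoord z r (t, P)) ≤
    r ^ 4 / (t - z.1) ^ 2 * Real.exp
      (-(kinQuad (t - z.1, P - (z.2.1 + (t - z.1) * z.2.2, z.2.2)) / 8)) := by
  have hp : (kinCoord z r (t, P)).1 < 0 := div_neg_of_neg_of_pos (sub_neg.2 ht) (by positivity)
  refine (kolKernel_le hp).trans_eq ?_
  rw [kinQuad_kinCoord hr.ne', kinCoord]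
  congr 1
  field_simp

/-- The constant `8πr⁴` bounds the mass of the kernel. -/
lemma setIntegral_mul_le_of_le_kolKernel {φ : P2 → ℝ} (hQ : MeasurableSet Q) (hr : 0 < r)
    (ht : t < z.1) (hm : 0 ≤ m) (hpos : ∀ P ∈ Q, 0 ≤ h P) (hφ : ∀ P, 0 ≤ φ P)
    (hker : ∀ P, φ P ≤ kolKernel (kinCoord z r (t, P))) (hle : ∀ P ∈ Q, φ P ≠ 0 → h P ≤ m) :
    ∫ P in Q, h P * φ P ≤ m * (8 * Real.pi * r ^ 4) := by
  have hs : t - z.1 < 0 := sub_neg.2 ht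
  set G : P2 → ℝ := fun P => r ^ 4 / (t - z.1) ^ 2 * Real.exp
      (-(kinQuad (t - z.1, P - (z.2.1 + (t - z.1) * z.2.2, z.2.2)) / 8)) with hG
  have hGint : Integrable G := ((integrable_exp_neg_kinQuad hs).comp_sub_right _).const_mul _
  have hGmass : ∫ P, G P = 8 * Real.pi * r ^ 4 := by
    simp only [hG]
    rw [integral_const_mul,
      integral_sub_right_eq_self (fun P => Real.exp (-(kinQuad (t - z.1, P) / 8))),
      integral_exp_neg_kinQuad hs]
    field_simp [hs.ne]
  have hG0 (P : P2) : 0 ≤ G P := by positivity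
  calc ∫ P in Q, h P * φ P
      ≤ ∫ P in Q, m * G P := by
        refine integral_mono_of_nonneg ?_ (hGint.const_mul m).integrableOn ?_
        · exact (ae_restrict_mem hQ).mono fun P hP => mul_nonneg (hpos P hP) (hφ P)
        · refine (ae_restrict_mem hQ).mono fun P hP => ?_
          rcases eq_or_ne (φ P) 0 with hzero | hne
          · simpa only [hzero, mul_zero] using mul_nonneg hm (hG0 P)
          · exact mul_le_mul (hle P hP hne) ((hker P).trans (kolKernel_kinCoord_le hr ht P))
              (hφ P) hm
    _ ≤ ∫ P, m * G P := setIntegral_le_integral (hGint.const_mul m)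
        (Eventually.of_forall fun P => mul_nonneg hm (hG0 P))
    _ = m * (8 * Real.pi * r ^ 4) := by rw [integral_const_mul, hGmass]

lemma abs_fst_sub_le_of_kinCoord (hr : 0 < r)
    (hx : |(kinCoord (0, P₀) r (t, P)).2.1| ≤ M * -(kinCoord (0, P₀) r (t, P)).1) :
    |P.1 - P₀.1| ≤ |t * P₀.2| + r * M * -t := by
  simp only [kinCoord, sub_zero] at hx
  rw [abs_div, abs_of_pos (pow_pos hr 3), div_le_iff₀ (pow_pos hr 3)] at hx
  calc |P.1 - P₀.1| = |t * P₀.2 + (P.1 - P₀.1 - t * P₀.2)| := by ring_nf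
    _ ≤ |t * P₀.2| + |P.1 - P₀.1 - t * P₀.2| := abs_add_le _ _
    _ ≤ |t * P₀.2| + M * -(t / r ^ 2) * r ^ 3 := by gcongr
    _ = |t * P₀.2| + r * M * -t := by field_simp

lemma snd_sub_pow_six_le_of_kinCoord (hr : 0 < r)
    (hv : (kinCoord (0, P₀) r (t, P)).2.2 ^ 6 ≤ M * -(kinCoord (0, P₀) r (t, P)).1) :
    (P.2 - P₀.2) ^ 6 ≤ r ^ 4 * M * -t := by
  simp only [kinCoord, sub_zero] at hv
  rw [div_pow, div_le_iff₀ (pow_pos hr 6)] at hv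
  refine hv.trans_eq ?_
  field_simp

lemma eventually_mem_of_subTest_ne_zero {U : Set P2} (hη : 0 < η) (hr : 0 < r) (hU : U ∈ 𝓝 P₀) :
    ∀ᶠ t in 𝓝[<] (0 : ℝ), ∀ P, subTest η (kinCoord (0, P₀) r (t, P)) ≠ 0 → P ∈ U := by
  obtain ⟨M, -, hM⟩ := exists_bounds_of_le_kolKernel hη
  obtain ⟨ρ, hρ, hball⟩ := Metric.mem_nhds_iff.1 hU
  have hsmall {f : ℝ → ℝ} (c : ℝ) (hc : f 0 < c) (hf : Continuous f) : ∀ᶠ t in 𝓝[<] 0, f t < c :=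
    nhdsWithin_le_nhds ((hf.tendsto 0).eventually_lt_const hc)
  have hr2 : 0 < r ^ 2 := by positivity
  filter_upwards [self_mem_nhdsWithin,
    hsmall (f := fun t => -t) (3 * r ^ 2) (by simpa using hr2) (by fun_prop),
    hsmall (f := fun t => |t * P₀.2| + r * M * -t) ρ (by simpa) (by fun_prop),
    hsmall (f := fun t => r ^ 4 * M * -t) (ρ ^ 6) (by simpa using pow_pos hρ 6) (by fun_prop)]
    with t ht htr hx hv P hne
  have hp0 : (kinCoord (0, P₀) r (t, P)).1 < 0 := div_neg_of_neg_of_pos (sub_neg.2 ht) hr2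
  have hp3 : -3 ≤ (kinCoord (0, P₀) r (t, P)).1 := by
    rw [kinCoord, sub_zero, le_div_iff₀ hr2]
    linarith
  obtain ⟨hpx, -, hpv⟩ := hM _ hp3 hp0 (le_kolKernel_of_subTest_ne_zero hη.le hp0 hne)
  refine hball ?_
  rw [Metric.mem_ball, Prod.dist_eq, max_lt_iff, Real.dist_eq, Real.dist_eq]
  refine ⟨(abs_fst_sub_le_of_kinCoord hr hpx).trans_lt hx, lt_of_pow_lt_pow_left₀ 6 hρ.le ?_⟩
  rw [Even.pow_abs (by decide)]
  exact (snd_sub_pow_six_le_of_kinCoord hr hpv).trans_lt hv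

lemma eventually_setIntegral_mul_subTest_le (hη : 0 < η) (hr : 0 < r) (hQ : MeasurableSet Q)
    (hpos : ∀ P ∈ Q, 0 ≤ h P) (hcont : ContinuousWithinAt h Q P₀) (hm : 0 ≤ m) (hlt : h P₀ < m) :
    ∀ᶠ t in 𝓝[<] (0 : ℝ),
      ∫ P in Q, h P * subTest η (kinCoord (0, P₀) r (t, P)) ≤ m * (8 * Real.pi * r ^ 4) := by
  obtain ⟨U, hU, hUm⟩ : ∃ U ∈ 𝓝 P₀, U ∩ Q ⊆ {P | h P < m} :=
    mem_nhdsWithin_iff_exists_mem_nhds_inter.1 (hcont.eventually_lt_const hlt)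
  filter_upwards [self_mem_nhdsWithin, eventually_mem_of_subTest_ne_zero hη hr hU] with t ht hsupp
  have htime (P : P2) : (kinCoord (0, P₀) r (t, P)).1 < 0 :=
    div_neg_of_neg_of_pos (sub_neg.2 ht) (by positivity)
  exact setIntegral_mul_le_of_le_kolKernel hQ hr ht hm hpos (fun P => smoothRamp_nonneg _)
    (fun P => subTest_le_kolKernel hη.le (htime P)) fun P hP hne =>
      (hUm ⟨hsupp P hne, hP⟩ : h P < m).le

end UpperLimit

section LowerLimit

variable {P : P2} {r m ρ : ℝ} {z : ℝ × P2} {Q : Set P2} {h : P2 → ℝ}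

/-- The box in phase space, at time `-ρ²` relative to `z`, on which the kernel with vertex `z` is
bounded below; it is centred on the free trajectory through `z`. -/
def kinBox (z : ℝ × P2) (ρ : ℝ) : Set P2 :=
  Metric.closedBall (z.2.1 - ρ ^ 2 * z.2.2) (ρ ^ 3) ×ˢ Metric.closedBall z.2.2 ρ

lemma isCompact_kinBox : IsCompact (kinBox z ρ) :=
  (isCompact_closedBall _ _).prod (isCompact_closedBall _ _)

lemma volume_real_kinBox (hρ : 0 ≤ ρ) : volume.real (kinBox z ρ) = 4 * ρ ^ 4 := by
  rw [kinBox, Measure.volume_eq_prod, measureReal_prod_prod,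
    Real.volume_real_closedBall (by positivity), Real.volume_real_closedBall hρ]
  ring

lemma eventually_kinBox_subset {U : Set P2} (hU : U ∈ 𝓝 z.2) :
    ∀ᶠ ρ in 𝓝[>] (0 : ℝ), kinBox z ρ ⊆ U := by
  obtain ⟨ε, hε, hball⟩ := Metric.mem_nhds_iff.1 hU
  have hsmall {f : ℝ → ℝ} (hf0 : f 0 < ε) (hf : Continuous f) : ∀ᶠ ρ in 𝓝[>] 0, f ρ < ε :=
    nhdsWithin_le_nhds ((hf.tendsto 0).eventually_lt_const hf0)
  filter_upwards [hsmall (f := fun ρ => ρ) hε continuous_id,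
    hsmall (f := fun ρ => ρ ^ 3 + |ρ ^ 2 * z.2.2|) (by simpa) (by fun_prop)]
    with ρ hv hx P ⟨hPx, hPv⟩
  refine hball ?_
  rw [Metric.mem_ball, Prod.dist_eq, max_lt_iff]
  refine ⟨?_, hPv.trans_lt hv⟩
  calc dist P.1 z.2.1
      ≤ dist P.1 (z.2.1 - ρ ^ 2 * z.2.2) + dist (z.2.1 - ρ ^ 2 * z.2.2) z.2.1 := dist_triangle _ _ _
    _ ≤ ρ ^ 3 + |ρ ^ 2 * z.2.2| := by
        refine add_le_add hPx ?_
        rw [Real.dist_eq, sub_sub_cancel_left, abs_neg]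
    _ < ε := hx

lemma le_cutTest_of_mem_kinBox (hr : 0 < r) (hρ : 0 < ρ) (hρr : ρ ≤ r / 2) (hP : P ∈ kinBox z ρ) :
    Real.exp (-19) * r ^ 4 / ρ ^ 4 ≤ cutTest (kinCoord z r (z.1 - ρ ^ 2, P)) := by
  obtain ⟨p, hp⟩ : ∃ p, kinCoord z r (z.1 - ρ ^ 2, P) = p := ⟨_, rfl⟩
  obtain ⟨hPx, hPv⟩ := hP
  rw [Metric.mem_closedBall, Real.dist_eq] at hPx hPv
  have hq : ρ / r ≤ 1 / 2 := by
    rw [div_le_iff₀ hr]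
    linarith
  have hq0 : 0 < ρ / r := by positivity
  have htime : p.1 = -(ρ / r) ^ 2 := by
    rw [← hp, kinCoord]
    ring
  have hx : |p.2.1| ≤ (ρ / r) ^ 3 := by
    rw [← hp, kinCoord, abs_div, abs_of_pos (pow_pos hr 3), div_pow]
    gcongr
    refine (congrArg abs ?_).trans_le hPx
    ring
  have hv : |p.2.2| ≤ ρ / r := by
    rw [← hp, kinCoord, abs_div, abs_of_pos hr]
    gcongr
  have hcube : (ρ / r) ^ 3 ≤ 1 / 2 := (pow_le_of_le_one hq0.le (by linarith) (by simp)).trans hq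
  have hker : Real.exp (-19) / p.1 ^ 2 ≤ kolKernel p := by
    refine le_kolKernel (by rw [htime]; exact neg_neg_of_pos (by positivity)) ?_ ?_
    · rw [htime, neg_neg, ← sq_abs]
      calc |p.2.1| ^ 2 ≤ ((ρ / r) ^ 3) ^ 2 := by gcongr
        _ ≤ 4 * ((ρ / r) ^ 2) ^ 3 := by
          rw [← pow_mul, ← pow_mul]
          exact le_mul_of_one_le_left (by positivity) (by norm_num)
    · rw [htime, neg_neg, ← sq_abs]
      gcongr
  rw [hp, cutTest, phaseBump_eq_one ⟨hx.trans hcube, hv.trans hq⟩, one_mul]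
  convert hker using 1
  rw [htime]
  field_simp

lemma eventually_le_setIntegral_mul_cutTest (hr : 0 < r) (hQ : IsOpen Q)
    (hpos : ∀ P ∈ Q, 0 ≤ h P) (hc : ContinuousOn h Q) (hz : z.2 ∈ Q) (hlt : m < h z.2)
    (hint : ∀ᶠ ρ in 𝓝[>] (0 : ℝ),
      IntegrableOn (fun P => h P * cutTest (kinCoord z r (z.1 - ρ ^ 2, P))) Q) :
    ∀ᶠ ρ in 𝓝[>] (0 : ℝ), m * (4 * Real.exp (-19) * r ^ 4) ≤
      ∫ P in Q, h P * cutTest (kinCoord z r (z.1 - ρ ^ 2, P)) := by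
  have hU : Q ∩ {P | m < h P} ∈ 𝓝 z.2 :=
    inter_mem (hQ.mem_nhds hz) ((hc.continuousAt (hQ.mem_nhds hz)).eventually_const_lt hlt)
  filter_upwards [self_mem_nhdsWithin, eventually_kinBox_subset hU, hint,
    nhdsWithin_le_nhds (eventually_le_nhds (half_pos hr))] with ρ hρ hbox hint hρr
  have hboxQ : kinBox z ρ ⊆ Q := fun P hP => (hbox hP).1
  have htime (P : P2) : (kinCoord z r (z.1 - ρ ^ 2, P)).1 ≠ 0 := by
    have : ρ ≠ 0 := (mem_Ioi.1 hρ).ne'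
    simp [kinCoord, hr.ne', this]
  have hvol : volume.real (kinBox z ρ) = 4 * ρ ^ 4 := volume_real_kinBox (mem_Ioi.1 hρ).le
  calc m * (4 * Real.exp (-19) * r ^ 4)
      = ∫ _ in kinBox z ρ, m * (Real.exp (-19) * r ^ 4 / ρ ^ 4) := by
        rw [setIntegral_const, hvol, smul_eq_mul]
        field_simp [(mem_Ioi.1 hρ).ne']
    _ ≤ ∫ P in kinBox z ρ, h P * cutTest (kinCoord z r (z.1 - ρ ^ 2, P)) := by
        refine setIntegral_mono_on (integrableOn_const isCompact_kinBox.measure_ne_top)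
          (hint.mono_set hboxQ) isCompact_kinBox.measurableSet fun P hP => ?_
        exact mul_le_mul (hbox hP).2.le (le_cutTest_of_mem_kinBox hr hρ hρr hP) (by positivity)
          (hpos P (hboxQ hP))
    _ ≤ ∫ P in Q, h P * cutTest (kinCoord z r (z.1 - ρ ^ 2, P)) :=
        setIntegral_mono_set hint ((ae_restrict_mem hQ.measurableSet).mono fun P hP =>
          mul_nonneg (hpos P hP) (cutTest_nonneg (htime P))) hboxQ.eventuallyLE

end LowerLimit

/-! ### One Harnack step -/

section HarnackStep

variable {Q : Set P2} {h hv : P2 → ℝ} {P₀ : P2} {r δ k η M a t : ℝ}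

lemma isTestFamily_subTest (hr : 0 < r)
    (hM : ∀ p : ℝ × P2, p.1 ∈ Ioo (-3) 0 → subTest η p ≠ 0 → p ∈ kinCone M)
    (hcone : MapsTo (fun p => (kinPoint (0, P₀) r p).2) (kinCone M) Q) :
    IsTestFamily (Ioo (-(3 * r ^ 2)) 0) Q fun p => subTest η (kinCoord (0, P₀) r p) := by
  convert isTestFamily_comp_kinCoord hr le_rfl le_rfl
    (fun p hp => contDiffAt_subTest (n := ⊤) hp.2.ne) hM hcone using 2 <;> ring

lemma mem_kinCone_of_cutTest_ne_zero {p : ℝ × P2} (hM : 2 ≤ M) (hδ : |δ| ≤ 1)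
    (hp : p.1 ∈ Ioo (-3) (-1)) (hne : cutTest (kinCoord (-1, δ, 0) 1 p) ≠ 0) : p ∈ kinCone M := by
  obtain ⟨hx, hv⟩ := abs_le_one_of_cutTest_ne_zero hne
  rw [kinCoord_neg_one] at hx hv
  have hx2 : |p.2.1| ≤ 2 := by
    have htri := abs_add_le (p.2.1 - δ) δ
    rw [sub_add_cancel] at htri
    linarith
  exact ⟨⟨hp.1.le, by linarith [hp.2]⟩, by nlinarith [hp.2], hv.trans (by linarith)⟩

lemma isTestFamily_cutTest (hr : 0 < r) (hM : 2 ≤ M) (hδ : |δ| ≤ 1)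
    (hcone : MapsTo (fun p => (kinPoint (0, P₀) r p).2) (kinCone M) Q) :
    IsTestFamily (Ioo (-(3 * r ^ 2)) (-r ^ 2)) Q
      fun p => cutTest (kinCoord (-1, δ, 0) 1 (kinCoord (0, P₀) r p)) := by
  convert isTestFamily_comp_kinCoord (b := -1) hr le_rfl (by norm_num)
    (fun p hp => contDiffAt_cutTest_kinCoord (n := ⊤) hp.2.ne)
    (fun p => mem_kinCone_of_cutTest_ne_zero hM hδ) hcone using 2 <;> ring

lemma IsTestFamily.setIntegral_subTest_le (hQ : IsOpen Q) (hsol : IsWeakSolOpen Q h hv)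
    (hc : ContinuousOn h Q) (hpos : ∀ P ∈ Q, 0 ≤ h P) (hcont : ContinuousWithinAt h Q P₀)
    (hP₀ : 0 ≤ h P₀) (hη : 0 < η) (hr : 0 < r)
    (hΨ : IsTestFamily (Ioo a 0) Q fun p => subTest η (kinCoord (0, P₀) r p)) (ht : t ∈ Ioo a 0) :
    ∫ P in Q, h P * subTest η (kinCoord (0, P₀) r (t, P)) ≤ h P₀ * (8 * Real.pi * r ^ 4) := by
  have hr4 : 0 < 8 * Real.pi * r ^ 4 := by positivity
  have hkol (τ : ℝ) (hτ : τ ∈ Ioo a 0) (P : P2) :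
      0 ≤ kolOp (fun p => subTest η (kinCoord (0, P₀) r p)) (τ, P) := by
    have hp : (kinCoord (0, P₀) r (τ, P)).1 ≠ 0 := by
      simp [kinCoord, hτ.2.ne, hr.ne']
    rw [kolOp_comp_kinCoord (contDiffAt_subTest (n := 2) hp)]
    exact mul_nonneg (by positivity) (kolOp_subTest_nonneg hη.le hp)
  have hmono := hΨ.monotoneOn_setIntegral_mul hQ hsol hc hpos fun τ hτ P _ => hkol τ hτ P
  rw [← div_le_iff₀ hr4]
  refine le_of_forall_gt_imp_ge_of_dense fun m hm => ?_
  rw [div_le_iff₀ hr4]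
  obtain ⟨s, hs, hst, hs0⟩ := ((eventually_setIntegral_mul_subTest_le hη hr hQ.measurableSet hpos
    hcont (hP₀.trans hm.le) hm).and (Ioo_mem_nhdsLT ht.2)).exists
  exact (hmono ht ⟨ht.1.trans hst, hs0⟩ hst.le).trans hs

lemma kolOp_barrier_comp_kinCoord_nonneg (hr : 0 < r)
    (hkol : ∀ p : ℝ × P2, -3 ≤ p.1 → p.1 < -1 → 0 ≤ kolOp (barrier k δ) p)
    (ht : t ∈ Ioo (-(3 * r ^ 2)) (-r ^ 2)) (P : P2) :
    0 ≤ kolOp (fun p => barrier k δ (kinCoord (0, P₀) r p)) (t, P) := by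
  have hr2 : 0 < r ^ 2 := by positivity
  have hp3 : -3 ≤ (kinCoord (0, P₀) r (t, P)).1 := by
    rw [kinCoord, sub_zero, le_div_iff₀ hr2]
    linarith [ht.1]
  have hp1 : (kinCoord (0, P₀) r (t, P)).1 < -1 := by
    rw [kinCoord, sub_zero, div_lt_iff₀ hr2]
    linarith [ht.2]
  have hsmooth : ContDiffAt ℝ 2 (barrier k δ) (kinCoord (0, P₀) r (t, P)) :=
    (contDiffAt_const.mul (contDiffAt_subTest (n := 2) (by linarith : _ < (0 : ℝ)).ne)).sub
      (contDiffAt_cutTest_kinCoord (n := 2) hp1.ne)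
  rw [kolOp_comp_kinCoord hsmooth]
  exact mul_nonneg (by positivity) (hkol _ hp3 hp1)

lemma setIntegral_cutTest_le (hQ : IsOpen Q) (hsol : IsWeakSolOpen Q h hv)
    (hc : ContinuousOn h Q) (hpos : ∀ P ∈ Q, 0 ≤ h P) (hr : 0 < r)
    (hsub : IsTestFamily (Ioo (-(3 * r ^ 2)) 0) Q
      fun p => subTest harnackLevel (kinCoord (0, P₀) r p))
    (hcut : IsTestFamily (Ioo (-(3 * r ^ 2)) (-r ^ 2)) Q
      fun p => cutTest (kinCoord (-1, δ, 0) 1 (kinCoord (0, P₀) r p)))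
    (hkol : ∀ p : ℝ × P2, -3 ≤ p.1 → p.1 < -1 → 0 ≤ kolOp (barrier k δ) p)
    (hinit : ∀ p : ℝ × P2, p.1 = -2 → 0 ≤ barrier k δ p)
    (ht : t ∈ Ico (-(2 * r ^ 2)) (-r ^ 2)) :
    ∫ P in Q, h P * cutTest (kinCoord (-1, δ, 0) 1 (kinCoord (0, P₀) r (t, P))) ≤
      k * ∫ P in Q, h P * subTest harnackLevel (kinCoord (0, P₀) r (t, P)) := by
  have hr2 : 0 < r ^ 2 := by positivity
  have htI : t ∈ Ioo (-(3 * r ^ 2)) (-r ^ 2) := ⟨by linarith [ht.1], ht.2⟩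
  have hsub' := hsub.mono (Ioo_subset_Ioo_right (neg_nonpos.2 hr2.le))
  have hfam : IsTestFamily (Ioo (-(3 * r ^ 2)) (-r ^ 2)) Q
      fun p => barrier k δ (kinCoord (0, P₀) r p) := (hsub'.const_mul k).sub hcut
  have hstart : 0 ≤ ∫ P in Q, h P * barrier k δ (kinCoord (0, P₀) r (-(2 * r ^ 2), P)) := by
    refine setIntegral_nonneg hQ.measurableSet fun P hP => mul_nonneg (hpos P hP) (hinit _ ?_)
    rw [kinCoord, sub_zero]
    field_simp
  have hmono := hfam.monotoneOn_setIntegral_mul hQ hsol hc hpos fun τ hτ P _ =>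
    kolOp_barrier_comp_kinCoord_nonneg hr hkol hτ P
  have hsplit : ∫ P in Q, h P * barrier k δ (kinCoord (0, P₀) r (t, P)) =
      k * (∫ P in Q, h P * subTest harnackLevel (kinCoord (0, P₀) r (t, P))) -
        ∫ P in Q, h P * cutTest (kinCoord (-1, δ, 0) 1 (kinCoord (0, P₀) r (t, P))) := by
    rw [← integral_const_mul, ← integral_sub ((hsub'.integrableOn_slice hQ hc htI).const_mul k)
      (hcut.integrableOn_slice hQ hc htI)]
    simp only [barrier, mul_sub, mul_left_comm]
  rw [← sub_nonneg, ← hsplit]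
  exact hstart.trans (hmono ⟨by linarith, by linarith⟩ htI ht.1)

lemma setIntegral_cutTest_le_apply (hQ : IsOpen Q) (hsol : IsWeakSolOpen Q h hv)
    (hc : ContinuousOn h Q) (hpos : ∀ P ∈ Q, 0 ≤ h P) (hcont : ContinuousWithinAt h Q P₀)
    (hP₀ : 0 ≤ h P₀) (hr : 0 < r) (hk : 0 ≤ k)
    (hsub : IsTestFamily (Ioo (-(3 * r ^ 2)) 0) Q
      fun p => subTest harnackLevel (kinCoord (0, P₀) r p))
    (hcut : IsTestFamily (Ioo (-(3 * r ^ 2)) (-r ^ 2)) Q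
      fun p => cutTest (kinCoord (-1, δ, 0) 1 (kinCoord (0, P₀) r p)))
    (hkol : ∀ p : ℝ × P2, -3 ≤ p.1 → p.1 < -1 → 0 ≤ kolOp (barrier k δ) p)
    (hinit : ∀ p : ℝ × P2, p.1 = -2 → 0 ≤ barrier k δ p)
    (ht : t ∈ Ico (-(2 * r ^ 2)) (-r ^ 2)) :
    ∫ P in Q, h P * cutTest (kinCoord (-1, δ, 0) 1 (kinCoord (0, P₀) r (t, P))) ≤
      k * (h P₀ * (8 * Real.pi * r ^ 4)) := by
  have hr2 : 0 < r ^ 2 := by positivity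
  exact (setIntegral_cutTest_le hQ hsol hc hpos hr hsub hcut hkol hinit ht).trans
    (mul_le_mul_of_nonneg_left (hsub.setIntegral_subTest_le hQ hsol hc hpos hcont hP₀
      harnackLevel_pos hr ⟨by linarith [ht.1], by linarith [ht.2]⟩) hk)

lemma le_mul_of_setIntegral_cutTest_le {y w c : ℝ} (hQ : IsOpen Q) (hc : ContinuousOn h Q)
    (hpos : ∀ P ∈ Q, 0 ≤ h P) (hr : 0 < r) (hvertex : (y - r ^ 2 * w + r ^ 3 * δ, w) ∈ Q)
    (hcut : IsTestFamily (Ioo (-(3 * r ^ 2)) (-r ^ 2)) Q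
      fun p => cutTest (kinCoord (-1, δ, 0) 1 (kinCoord (0, y, w) r p)))
    (hle : ∀ t ∈ Ico (-(2 * r ^ 2)) (-r ^ 2),
      ∫ P in Q, h P * cutTest (kinCoord (-1, δ, 0) 1 (kinCoord (0, y, w) r (t, P))) ≤
        c * (4 * Real.exp (-19) * r ^ 4)) :
    h (y - r ^ 2 * w + r ^ 3 * δ, w) ≤ c := by
  refine le_of_forall_lt_imp_le_of_dense fun m hm => ?_
  have htime : ∀ᶠ ρ in 𝓝[>] (0 : ℝ), -r ^ 2 - ρ ^ 2 ∈ Ico (-(2 * r ^ 2)) (-r ^ 2) := by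
    filter_upwards [Ioc_mem_nhdsGT hr] with ρ hρ
    have hρ0 : 0 < ρ ^ 2 := pow_pos hρ.1 2
    have hρr : ρ ^ 2 ≤ r ^ 2 := pow_le_pow_left₀ hρ.1.le hρ.2 2
    constructor <;> linarith
  have hr2 : 0 < r ^ 2 := by positivity
  obtain ⟨ρ, hlow, hρ⟩ := ((eventually_le_setIntegral_mul_cutTest
    (z := (-r ^ 2, y - r ^ 2 * w + r ^ 3 * δ, w)) hr hQ hpos hc hvertex hm
    (htime.mono fun ρ hρ => by
      simpa only [kinCoord_kinCoord hr.ne'] using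
        hcut.integrableOn_slice hQ hc ⟨by linarith [hρ.1], hρ.2⟩)).and htime).exists
  have hup := hle _ hρ
  simp only [kinCoord_kinCoord hr.ne'] at hup
  exact le_of_mul_le_mul_right (hlow.trans hup) (by positivity)

lemma exists_harnack_step : ∃ M C : ℝ, 3 ≤ M ∧ 1 ≤ C ∧ ∀ (Q : Set P2) (h hv : P2 → ℝ), IsOpen Q →
    IsWeakSolOpen Q h hv → ContinuousOn h Q → (∀ P ∈ Q, 0 ≤ h P) →
    ∀ y w r δ : ℝ, 0 < r → |δ| ≤ 1 →
    MapsTo (fun p => (kinPoint (0, y, w) r p).2) (kinCone M) Q →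
    ContinuousWithinAt h Q (y, w) → 0 ≤ h (y, w) →
    h (y - r ^ 2 * w + r ^ 3 * δ, w) ≤ C * h (y, w) := by
  obtain ⟨M, hM3, hM⟩ := exists_bounds_of_le_kolKernel harnackLevel_pos
  obtain ⟨k, hk, hbarrier⟩ := exists_barrier_nonneg
  refine ⟨M, max 1 (2 * Real.pi * k * Real.exp 19), hM3, le_max_left _ _,
    fun Q h hv hQ hsol hc hpos y w r δ hr hδ hcone hcont hP₀ => ?_⟩
  obtain ⟨hkol, hinit⟩ := hbarrier δ hδ
  have hsupp (p : ℝ × P2) (hp : p.1 ∈ Ioo (-3) 0) (hne : subTest harnackLevel p ≠ 0) :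
      p ∈ kinCone M := by
    obtain ⟨hx, hv, -⟩ :=
      hM p hp.1.le hp.2 (le_kolKernel_of_subTest_ne_zero harnackLevel_pos.le hp.2 hne)
    exact ⟨⟨hp.1.le, hp.2⟩, hx, hv⟩
  have hcut := isTestFamily_cutTest hr (by linarith) hδ hcone
  have hvertex : (y - r ^ 2 * w + r ^ 3 * δ, w) ∈ Q := by
    have hmem : ((-1, δ, 0) : ℝ × P2) ∈ kinCone M :=
      ⟨by norm_num, by simpa using hδ.trans (by linarith), by simpa using by linarith⟩
    simpa [kinPoint, sub_eq_add_neg] using hcone hmem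
  have hC : h (y - r ^ 2 * w + r ^ 3 * δ, w) ≤ 2 * Real.pi * k * Real.exp 19 * h (y, w) := by
    refine le_mul_of_setIntegral_cutTest_le hQ hc hpos hr hvertex hcut fun t ht => ?_
    refine (setIntegral_cutTest_le_apply hQ hsol hc hpos hcont hP₀ hr hk
      (isTestFamily_subTest hr hsupp hcone) hcut hkol hinit ht).trans_eq ?_
    rw [Real.exp_neg]
    field_simp
    ring
  exact hC.trans (mul_le_mul_of_nonneg_right (le_max_right _ _) hP₀)

end HarnackStep

/-! ### Harnack chains -/

section Chaining

variable {g : ℝ → ℝ} {C d₀ lo hi u r₀ : ℝ}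

lemma chain_le (hC : 1 ≤ C) (hd₀ : 0 < d₀) (hg : ∀ x ∈ Icc lo hi, 0 ≤ g x)
    (hstep : ∀ x d, lo ≤ x → 0 < d → d ≤ d₀ → x + d ≤ hi → g x ≤ C * g (x + d)) (n : ℕ) :
    ∀ a b, lo ≤ a → a ≤ b → b ≤ hi → b - a ≤ n * d₀ → g a ≤ C ^ n * g b := by
  induction n with
  | zero =>
    intro a b _ hab _ hlen
    rw [Nat.cast_zero, zero_mul, sub_nonpos] at hlen
    simp [hab.antisymm hlen]
  | succ n ih =>
    intro a b ha hab hb hlen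
    rcases hab.eq_or_lt with rfl | hab
    · exact le_mul_of_one_le_left (hg a ⟨ha, hb⟩) (one_le_pow₀ hC)
    set d := min d₀ (b - a) with hd
    have hd0 : 0 < d := lt_min hd₀ (sub_pos.2 hab)
    have hdb : a + d ≤ b := by linarith [min_le_right d₀ (b - a)]
    have hrest : b - (a + d) ≤ n * d₀ := by
      have : 0 ≤ n * d₀ := by positivity
      push_cast at hlen
      rcases min_choice d₀ (b - a) with h | h <;> rw [hd, h] <;> linarith
    calc g a ≤ C * g (a + d) := hstep a d ha hd0 (min_le_left _ _) (hdb.trans hb)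
      _ ≤ C * (C ^ n * g b) := by
        gcongr
        exact ih (a + d) b (by linarith) hdb hb hrest
      _ = C ^ (n + 1) * g b := by ring

lemma exists_radius_eq {d : ℝ} (hr₀ : 0 < r₀) (hd : 0 < d) (hdr : d ≤ r₀ ^ 2 * u + r₀ ^ 3) :
    ∃ r ∈ Ioc 0 r₀, r ^ 2 * u + r ^ 3 = d :=
  intermediate_value_Ioc hr₀.le (by fun_prop : ContinuousOn (fun r : ℝ => r ^ 2 * u + r ^ 3) _)
    ⟨by simpa using hd, hdr⟩

lemma exists_chain_le (hC : 1 ≤ C) (hr₀ : 0 < r₀) (hu : 0 ≤ u) (L : ℝ) :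
    ∃ c, 0 < c ∧ ∀ (g : ℝ → ℝ) (a b : ℝ), a ≤ b → b - a ≤ L → (∀ x ∈ Icc a b, 0 ≤ g x) →
      (∀ x, ∀ r ∈ Ioc 0 r₀, a ≤ x → x + (r ^ 2 * u + r ^ 3) ≤ b →
        g x ≤ C * g (x + (r ^ 2 * u + r ^ 3))) → g a ≤ c * g b := by
  have hd₀ : 0 < r₀ ^ 2 * u + r₀ ^ 3 := by positivity
  obtain ⟨n, hn⟩ := exists_nat_ge (L / (r₀ ^ 2 * u + r₀ ^ 3))
  rw [div_le_iff₀ hd₀] at hn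
  refine ⟨C ^ n, by positivity, fun g a b hab hL hg hstep => ?_⟩
  refine chain_le hC hd₀ hg (fun x d hx hd hdd hxd => ?_) n a b le_rfl hab le_rfl (hL.trans hn)
  obtain ⟨r, hr, rfl⟩ := exists_radius_eq hr₀ hd hdd
  exact hstep x r hr hx hxd

lemma exists_radius_lt (M u : ℝ) {a b : ℝ} (ha : 0 < a) (hb : 0 < b) :
    ∃ r₀, 0 < r₀ ∧ ∀ r ∈ Ioc 0 r₀, r * M < a ∧ 3 * (r ^ 2 * (u + r * M)) < b := by
  have hsmall : ∀ᶠ r in 𝓝[>] (0 : ℝ), r * M < a ∧ 3 * (r ^ 2 * (u + r * M)) < b := by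
    refine Eventually.and ?_ ?_ <;>
    exact nhdsWithin_le_nhds ((isOpen_lt (by fun_prop) continuous_const).mem_nhds (by simpa))
  exact mem_nhdsGT_iff_exists_Ioc_subset.1 hsmall

end Chaining

section Rectangle

variable {R M r y w : ℝ}

lemma isOpen_Hrect : IsOpen (Hrect R) := isOpen_Ioo.prod isOpen_Ioo

lemma mapsTo_kinPoint_Hrect (hr : 0 < r)
    (hvel : |w| + r * M < R)
    (hlow : ∀ s ∈ Ioc (0 : ℝ) 3, 0 < y - s * (r ^ 2 * (w + r * M)))
    (hup : ∀ s ∈ Ioc (0 : ℝ) 3, y + s * (r ^ 2 * (-w + r * M)) < R ^ 3) :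
    MapsTo (fun p => (kinPoint (0, y, w) r p).2) (kinCone M) (Hrect R) := by
  rintro ⟨τ, x, v⟩ ⟨⟨hτ3, hτ0⟩, hx, hv⟩
  have hs : -τ ∈ Ioc (0 : ℝ) 3 := ⟨by linarith, by linarith⟩
  have hx' : |r ^ 3 * x| ≤ -τ * (r ^ 2 * (r * M)) := by
    rw [abs_mul, abs_of_pos (pow_pos hr 3)]
    calc r ^ 3 * |x| ≤ r ^ 3 * (M * -τ) := mul_le_mul_of_nonneg_left hx (pow_pos hr 3).le
      _ = -τ * (r ^ 2 * (r * M)) := by ring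
  have hv' : |r * v| ≤ r * M := by
    rw [abs_mul, abs_of_pos hr]
    exact mul_le_mul_of_nonneg_left hv hr.le
  have hlow := hlow _ hs
  have hup := hup _ hs
  have hspeed := abs_lt.1 ((abs_add_le w (r * v)).trans_lt (by linarith : _ < R))
  rw [abs_le] at hx'
  exact ⟨⟨by simp only [kinPoint]; linarith, by simp only [kinPoint]; linarith⟩, hspeed⟩

lemma mem_closure_Hrect {x v : ℝ} (hx : x ∈ Icc 0 (R ^ 3)) (hv : v ∈ Icc (-R) R) (hR : 0 < R) :
    (x, v) ∈ closure (Hrect R) := by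
  rw [Hrect, closure_prod_eq, closure_Ioo (pow_pos hR 3).ne, closure_Ioo (by linarith)]
  exact ⟨hx, hv⟩

end Rectangle

lemma exists_le_mul_of_vel_nonneg {R v₀ x₀ X : ℝ} (hv₀ : 0 ≤ v₀) (hv₀R : v₀ < R) (hx₀ : 0 < x₀)
    (hX : X < R ^ 3) :
    ∃ c, 0 < c ∧ ∀ h hv : P2 → ℝ, IsWeakSolOpen (Hrect R) h hv → ContinuousOn h (Hrect R) →
      (∀ p ∈ Hrect R, 0 ≤ h p) → ∀ x₁, x₀ ≤ x₁ → x₁ < X → h (x₀, v₀) ≤ c * h (x₁, v₀) := by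
  obtain ⟨M, C, hM, hC, hstep⟩ := exists_harnack_step
  obtain ⟨r₀, hr₀, hsmall⟩ := exists_radius_lt M v₀ (sub_pos.2 hv₀R)
    (lt_min hx₀ (sub_pos.2 hX))
  obtain ⟨c, hc, hchain⟩ := exists_chain_le hC hr₀ hv₀ (X - x₀)
  refine ⟨c, hc, fun h hv hsol hcont hpos x₁ hx₁ hx₁X => ?_⟩
  have hmem (x : ℝ) (hx : x ∈ Icc x₀ x₁) : (x, v₀) ∈ Hrect R :=
    ⟨⟨hx₀.trans_le hx.1, by linarith [hx.2]⟩, by linarith, hv₀R⟩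
  refine hchain (fun x => h (x, v₀)) x₀ x₁ hx₁ (by linarith) (fun x hx => hpos _ (hmem x hx))
    fun x r hr hx hxr => ?_
  obtain ⟨hvel, hdisp⟩ := hsmall r hr
  rw [lt_min_iff] at hdisp
  have : 0 ≤ r ^ 2 * (r * M) := mul_nonneg (sq_nonneg r) (mul_nonneg hr.1.le (by linarith))
  have hrv : 0 ≤ r ^ 2 * v₀ := by positivity
  have hr3 : 0 < r ^ 3 := pow_pos hr.1 3
  have hend := hmem (x + (r ^ 2 * v₀ + r ^ 3)) ⟨by linarith, hxr⟩
  have hone := hstep (Hrect R) h hv isOpen_Hrect hsol hcont hpos _ v₀ r (-1) hr.1 (by simp)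
    (mapsTo_kinPoint_Hrect hr.1 (by rw [abs_of_nonneg hv₀]; linarith)
      (fun s hs => by nlinarith [hs.1, hs.2])
      fun s hs => by nlinarith [hs.1, hs.2]) (hcont _ hend) (hpos _ hend)
  convert hone using 3
  ring

lemma exists_le_mul_of_vel_neg {R v₀ X : ℝ} (hv₀R : -R < v₀) (hv₀ : v₀ < 0) (hX : X < R ^ 3) :
    ∃ c, 0 < c ∧ ∀ h hv : P2 → ℝ, IsWeakSolOpen (Hrect R) h hv →
      ContinuousOn h (({0} ×ˢ Ioo (-R) 0) ∪ Hrect R) → (∀ p ∈ Hrect R, 0 ≤ h p) →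
      ∀ x₀ x₁, 0 ≤ x₀ → x₀ ≤ x₁ → x₁ < X → h (x₁, v₀) ≤ c * h (x₀, v₀) := by
  obtain ⟨M, C, hM, hC, hstep⟩ := exists_harnack_step
  obtain ⟨r₀, hr₀, hsmall⟩ := exists_radius_lt M (-v₀)
    (lt_min (neg_lt_iff_pos_add.1 hv₀R) (neg_pos.2 hv₀)) (sub_pos.2 hX)
  obtain ⟨c, hc, hchain⟩ := exists_chain_le hC hr₀ (neg_pos.2 hv₀).le X
  refine ⟨c, hc, fun h hv hsol hcont hpos x₀ x₁ hx₀ hx₁ hx₁X => ?_⟩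
  have hcontx (x : ℝ) (hx : x ∈ Icc 0 X) : ContinuousWithinAt h (Hrect R) (x, v₀) := by
    refine (hcont (x, v₀) ?_).mono subset_union_right
    rcases hx.1.eq_or_lt with rfl | hx0
    · exact Or.inl ⟨rfl, hv₀R, hv₀⟩
    · exact Or.inr ⟨⟨hx0, hx.2.trans_lt hX⟩, hv₀R, by linarith⟩
  have hnonneg (x : ℝ) (hx : x ∈ Icc 0 X) : 0 ≤ h (x, v₀) :=
    ContinuousWithinAt.closure_le (mem_closure_Hrect ⟨hx.1, hx.2.trans hX.le⟩
      ⟨hv₀R.le, by linarith⟩ (by linarith)) continuousWithinAt_const (hcontx x hx) hpos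
  have hback := hchain (fun x => h (-x, v₀)) (-x₁) (-x₀) (by linarith) (by linarith)
    (fun x hx => hnonneg (-x) ⟨by linarith [hx.2], by linarith [hx.1]⟩) fun x r hr hx hxr => ?_
  · simpa using hback
  obtain ⟨hvel, hdisp⟩ := hsmall r hr
  rw [lt_min_iff] at hvel
  have hr2 : 0 < r ^ 2 := pow_pos hr.1 2
  have hr3 : 0 < r ^ 3 := pow_pos hr.1 3
  have hrv : 0 < r ^ 2 * -v₀ := by nlinarith
  have : 0 ≤ r ^ 2 * (r * M) := mul_nonneg hr2.le (mul_nonneg hr.1.le (by linarith))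
  have hend : -(x + (r ^ 2 * -v₀ + r ^ 3)) ∈ Icc 0 X := ⟨by linarith, by linarith⟩
  have hone := hstep (Hrect R) h hv isOpen_Hrect hsol (hcont.mono subset_union_right) hpos _ v₀ r 1
    hr.1 (by simp) (mapsTo_kinPoint_Hrect hr.1 (by rw [abs_of_neg hv₀]; linarith)
      (fun s hs => by nlinarith [hs.1, hs.2, mul_pos hs.1 (mul_pos hr2 (sub_pos.2 hvel.2)), hend.1])
      fun s hs => by nlinarith [hs.1, hs.2]) (hcontx _ hend) (hnonneg _ hend)
  convert hone using 3
  ring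

theorem statement_11_general (R : ℝ) :
    (∀ v₀ : ℝ, 0 ≤ v₀ → v₀ < R → ∀ x₀ X : ℝ, 0 < x₀ → X < R ^ 3 →
      ∃ c : ℝ, 0 < c ∧ ∀ h hv : P2 → ℝ, IsWeakSolOpen (Hrect R) h hv →
        ContinuousOn h (Hrect R) → (∀ p ∈ Hrect R, 0 ≤ h p) →
        ∀ x₁ : ℝ, x₀ ≤ x₁ → x₁ < X → h (x₀, v₀) ≤ c * h (x₁, v₀)) ∧
    (∀ v₀ : ℝ, -R < v₀ → v₀ < 0 → ∀ X : ℝ, X < R ^ 3 →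
      ∃ c : ℝ, 0 < c ∧ ∀ h hv : P2 → ℝ, IsWeakSolOpen (Hrect R) h hv →
        ContinuousOn h (({0} ×ˢ Ioo (-R) 0) ∪ Hrect R) → (∀ p ∈ Hrect R, 0 ≤ h p) →
        ∀ x₀ x₁ : ℝ, 0 ≤ x₀ → x₀ ≤ x₁ → x₁ < X → h (x₁, v₀) ≤ c * h (x₀, v₀)) :=
  ⟨fun _ hv₀ hv₀R _ _ hx₀ hX => exists_le_mul_of_vel_nonneg hv₀ hv₀R hx₀ hX,
    fun _ hv₀R hv₀ _ hX => exists_le_mul_of_vel_neg hv₀R hv₀ hX⟩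

theorem statement_11 (RR : ℝ) (hRR : 0 < RR) :
    -- part (a)
    (∀ v₀ : ℝ, 0 ≤ v₀ → v₀ ≤ RR / 2 →
      ∀ x₀ : ℝ, 0 < x₀ → x₀ < RR ^ 3 / 2 →
      ∃ c : ℝ, 0 < c ∧
        ∀ h hv : P2 → ℝ, IsWeakSolOpen (Hrect RR) h hv →
          ContinuousOn h (Hrect RR) → (∀ p ∈ Hrect RR, 0 ≤ h p) →
          ∀ x₁ : ℝ, x₀ ≤ x₁ → x₁ < RR ^ 3 / 2 →
            h (x₀, v₀) ≤ c * h (x₁, v₀)) ∧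
    -- part (b)
    (∀ v₀ : ℝ, -(RR / 2) ≤ v₀ → v₀ < 0 →
      ∃ c : ℝ, 0 < c ∧
        ∀ h hv : P2 → ℝ, IsWeakSolOpen (Hrect RR) h hv →
          ContinuousOn h (({(0:ℝ)} ×ˢ Set.Ioo (-RR) (0:ℝ)) ∪ Hrect RR) →
          (∀ p ∈ Hrect RR, 0 ≤ h p) →
          ∀ x₀ x₁ : ℝ, 0 ≤ x₀ → x₀ ≤ x₁ → x₁ < RR ^ 3 / 2 →
            h (x₁, v₀) ≤ c * h (x₀, v₀)) := by
  have hX : RR ^ 3 / 2 < RR ^ 3 := half_lt_self (by positivity)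
  exact ⟨fun v₀ hv₀ hv₀R x₀ hx₀ _ =>
      (statement_11_general RR).1 v₀ hv₀ (by linarith) x₀ _ hx₀ hX,
    fun v₀ hv₀R hv₀ => (statement_11_general RR).2 v₀ (by linarith) hv₀ _ hX⟩
end
end

section
/- Let v₀ < 0 and R > 0 with v₀ ≤ −2R. Let h be a bounded smooth function on (0, 8R³)×(v₀ − 2R, v₀ + 2R) satisfying v ∂ₓh(x,v) = ∂_vvh(x,v) at every point. Then for all integers i, j ≥ 0 there exists a constant c > 0 depending only on i and j such that sup over (0, R³)×(v₀ − R, v₀ + R) of |∂ₓ^i ∂_v^j h| ≤ c R^{−(3i+j)} (|v₀|/R)^{(3i+j)/2} · sup over (0, 8R³)×(v₀ − 2R, v₀ + 2R) of |h|. -/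
noncomputable section

open MeasureTheory Set Filter
open scoped ENNReal

/-- partial derivative in the first (space) variable -/
def pdx (h : P2 → ℝ) : P2 → ℝ := fun p => fderiv ℝ h p ((1:ℝ), (0:ℝ))

/-- partial derivative in the second (velocity) variable -/
def pdv (h : P2 → ℝ) : P2 → ℝ := fun p => fderiv ℝ h p ((0:ℝ), (1:ℝ))

/-!
The equation is parabolic with time `-x`: it reads `∂ᵥᵥh + a(v) ∂ₓh = 0` with `a(v) = -v > 0`, and
`∂ₓ` commutes with this operator. The interior estimates come from Bernstein's method. With a cutoff
`η` vanishing on the parabolic boundary of a cylinder, the function `(η² ∂ₓh)² + A (η ∂ᵥh)² + B h²`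
is a subsolution once `A` and then `B` are large: the first term costs a multiple of `(η ∂ₓh)²`,
which the second one provides because `∂ᵥᵥh = -a ∂ₓh`, and the second costs a multiple of `(∂ᵥh)²`,
which the third one provides. The maximum principle then bounds the gradient where `η = 1`, and
iterating in `x` over shrinking cylinders bounds every `∂ₓⁱh`. Derivatives in `v` of order at least
two are traded for derivatives in `x` through the equation.

At each point the estimate is applied on a cylinder of size `τ = R³/4` in `x` and
`ℓ = R / (2√(|v₀|/R))` in `v`, for which the rescaled coefficient `-v ℓ²/τ` stays in `[1/4, 7/4]`.
Only the `v`-derivatives lose a factor `√(|v₀|/R)`, so the resulting power of `|v₀|/R` is `j/2`.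
-/

open scoped Topology ContDiff

section PartialDerivatives

variable {f g : P2 → ℝ} {p : P2} {n m : WithTop ℕ∞}

theorem contDiffAt_pdx (hf : ContDiffAt ℝ n f p) (hmn : m + 1 ≤ n) : ContDiffAt ℝ m (pdx f) p :=
  (hf.fderiv_right hmn).clm_apply contDiffAt_const

theorem contDiffAt_pdv (hf : ContDiffAt ℝ n f p) (hmn : m + 1 ≤ n) : ContDiffAt ℝ m (pdv f) p :=
  (hf.fderiv_right hmn).clm_apply contDiffAt_const

theorem pdx_congr (h : f =ᶠ[𝓝 p] g) : pdx f =ᶠ[𝓝 p] pdx g := by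
  filter_upwards [h.fderiv (𝕜 := ℝ)] with q hq
  simp only [pdx, hq]

theorem pdv_congr (h : f =ᶠ[𝓝 p] g) : pdv f =ᶠ[𝓝 p] pdv g := by
  filter_upwards [h.fderiv (𝕜 := ℝ)] with q hq
  simp only [pdv, hq]

theorem pdx_add (hf : DifferentiableAt ℝ f p) (hg : DifferentiableAt ℝ g p) :
    pdx (f + g) p = pdx f p + pdx g p := by
  simp [pdx, fderiv_add hf hg]

theorem pdv_add (hf : DifferentiableAt ℝ f p) (hg : DifferentiableAt ℝ g p) :
    pdv (f + g) p = pdv f p + pdv g p := by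
  simp [pdv, fderiv_add hf hg]

theorem pdx_mul (hf : DifferentiableAt ℝ f p) (hg : DifferentiableAt ℝ g p) :
    pdx (f * g) p = f p * pdx g p + g p * pdx f p := by
  simp [pdx, fderiv_mul hf hg]

theorem pdv_mul (hf : DifferentiableAt ℝ f p) (hg : DifferentiableAt ℝ g p) :
    pdv (f * g) p = f p * pdv g p + g p * pdv f p := by
  simp [pdv, fderiv_mul hf hg]

theorem hasDerivAt_pdv {x v : ℝ} (hf : DifferentiableAt ℝ f (x, v)) :
    HasDerivAt (fun t => f (x, t)) (pdv f (x, v)) v :=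
  hf.hasFDerivAt.comp_hasDerivAt v ((hasDerivAt_const v x).prodMk (hasDerivAt_id v))

theorem pdx_comp_snd {a : ℝ → ℝ} (ha : DifferentiableAt ℝ a p.2) :
    pdx (fun q => a q.2) p = 0 := by
  have : HasFDerivAt (fun q : P2 => a q.2) _ p := ha.hasFDerivAt.comp p hasFDerivAt_snd
  simp [pdx, this.fderiv]

theorem pdv_comp_snd {a : ℝ → ℝ} (ha : DifferentiableAt ℝ a p.2) :
    pdv (fun q => a q.2) p = deriv a p.2 := by
  have : HasFDerivAt (fun q : P2 => a q.2) _ p := ha.hasFDerivAt.comp p hasFDerivAt_snd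
  simp [pdv, this.fderiv]

theorem pdx_pdv_comm (hf : ContDiffAt ℝ 2 f p) : pdx (pdv f) p = pdv (pdx f) p := by
  have hd : DifferentiableAt ℝ (fderiv ℝ f) p :=
    (hf.fderiv_right (m := 1) (by norm_num)).differentiableAt one_ne_zero
  have second (a b : P2) :
      fderiv ℝ (fun q => fderiv ℝ f q a) p b = fderiv ℝ (fderiv ℝ f) p b a := by
    simp [fderiv_clm_apply hd (differentiableAt_const a)]
  exact (second _ _).trans ((hf.isSymmSndFDerivAt (by simp) _ _).trans (second _ _).symm)

theorem eventuallyEq_pdx_pdv_comm (hf : ContDiffAt ℝ 2 f p) :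
    pdx (pdv f) =ᶠ[𝓝 p] pdv (pdx f) :=
  (hf.eventually (by simp)).mono fun _ hq => pdx_pdv_comm hq

end PartialDerivatives

theorem deriv_deriv_nonpos_of_isLocalMax {f : ℝ → ℝ} {x : ℝ} (hf : ContinuousAt f x)
    (hm : IsLocalMax f x) : deriv (deriv f) x ≤ 0 := by
  by_contra! hpos
  have hmin : IsLocalMin f x := isLocalMin_of_deriv_deriv_pos hpos hm.deriv_eq_zero hf
  have hconst : f =ᶠ[𝓝 x] fun _ => f x := by
    filter_upwards [hm, hmin] with t h₁ h₂ using le_antisymm h₁ h₂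
  simp [hconst.deriv.deriv_eq] at hpos

theorem pdv_pdv_nonpos_of_isLocalMax {F : P2 → ℝ} {p : P2} (hF : ContDiffAt ℝ 2 F p)
    (hmax : IsLocalMax (fun t => F (p.1, t)) p.2) : pdv (pdv F) p ≤ 0 := by
  have hslice : Tendsto (fun t : ℝ => (p.1, t)) (𝓝 p.2) (𝓝 p) := by
    simpa using (Continuous.prodMk_right p.1).tendsto p.2
  have hderiv : deriv (fun t => F (p.1, t)) =ᶠ[𝓝 p.2] fun t => pdv F (p.1, t) :=
    (hslice.eventually (hF.eventually (by simp))).mono fun t ht =>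
      (hasDerivAt_pdv (ht.differentiableAt two_ne_zero)).deriv
  have hderiv₂ : deriv (fun t => pdv F (p.1, t)) p.2 = pdv (pdv F) p :=
    (hasDerivAt_pdv ((contDiffAt_pdv hF one_add_one_eq_two.le).differentiableAt one_ne_zero)).deriv
  rw [← hderiv₂, ← hderiv.deriv_eq]
  exact deriv_deriv_nonpos_of_isLocalMax (hF.continuousAt.tendsto.comp hslice) hmax

theorem pdx_nonpos_of_isMaxOn {F : P2 → ℝ} {p : P2} {x₂ : ℝ} {s : Set P2}
    (hF : DifferentiableAt ℝ F p) (hx : p.1 < x₂) (hs : Icc p.1 x₂ ×ˢ {p.2} ⊆ s)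
    (hmax : IsMaxOn F s p) : pdx F p ≤ 0 := by
  have hcone : (x₂ - p.1, (0 : ℝ)) ∈ posTangentConeAt s p := by
    refine mem_posTangentConeAt_of_segment_subset (Subset.trans ?_ hs)
    have hend : p + (x₂ - p.1, 0) = (x₂, p.2) := by ext <;> simp
    rw [hend, ← Prod.mk.eta (p := p), ← Prod.image_mk_segment_left, segment_eq_Icc hx.le]
    rintro _ ⟨t, ht, rfl⟩
    exact ⟨ht, rfl⟩
  have hdir : (x₂ - p.1, (0 : ℝ)) = (x₂ - p.1) • ((1 : ℝ), (0 : ℝ)) := by simp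
  have hle := hmax.localize.hasFDerivWithinAt_nonpos hF.hasFDerivAt.hasFDerivWithinAt hcone
  rw [hdir, map_smul, smul_eq_mul] at hle
  exact nonpos_of_mul_nonpos_right hle (sub_pos.2 hx)

section ParabolicOperator

/-- The (possibly degenerate) parabolic operator `∂ᵥᵥ + a(v) ∂ₓ`, whose time is `-x`; the kinetic
equation `v ∂ₓh = ∂ᵥᵥh` is the case `a v = -v`. -/
def parabolicOp (a : ℝ → ℝ) (f : P2 → ℝ) : P2 → ℝ := fun p => pdv (pdv f) p + a p.2 * pdx f p

variable {a : ℝ → ℝ} {f g : P2 → ℝ} {p : P2}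

theorem parabolicOp_add (hf : ContDiffAt ℝ 2 f p) (hg : ContDiffAt ℝ 2 g p) :
    parabolicOp a (f + g) p = parabolicOp a f p + parabolicOp a g p := by
  have hpdv : pdv (f + g) =ᶠ[𝓝 p] pdv f + pdv g := by
    filter_upwards [hf.eventually (by simp), hg.eventually (by simp)] with q hfq hgq
    exact pdv_add (hfq.differentiableAt two_ne_zero) (hgq.differentiableAt two_ne_zero)
  rw [parabolicOp, (pdv_congr hpdv).eq_of_nhds,
    pdv_add ((contDiffAt_pdv hf one_add_one_eq_two.le).differentiableAt one_ne_zero)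
      ((contDiffAt_pdv hg one_add_one_eq_two.le).differentiableAt one_ne_zero),
    pdx_add (hf.differentiableAt two_ne_zero) (hg.differentiableAt two_ne_zero)]
  simp only [parabolicOp]
  ring

theorem parabolicOp_const_smul (c : ℝ) : parabolicOp a (c • f) p = c * parabolicOp a f p := by
  have hpdv : pdv (c • f) = c • pdv f := by ext q; simp [pdv, fderiv_const_smul_field]
  have hpdv₂ : pdv (c • pdv f) = c • pdv (pdv f) := by
    ext q; simp [pdv, fderiv_const_smul_field]
  have hpdx : pdx (c • f) = c • pdx f := by ext q; simp [pdx, fderiv_const_smul_field]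
  simp only [parabolicOp, hpdv, hpdv₂, hpdx, Pi.smul_apply, smul_eq_mul]
  ring

theorem parabolicOp_mul (hf : ContDiffAt ℝ 2 f p) (hg : ContDiffAt ℝ 2 g p) :
    parabolicOp a (f * g) p
      = f p * parabolicOp a g p + g p * parabolicOp a f p + 2 * (pdv f p * pdv g p) := by
  have hpdv : pdv (f * g) =ᶠ[𝓝 p] f * pdv g + g * pdv f := by
    filter_upwards [hf.eventually (by simp), hg.eventually (by simp)] with q hfq hgq
    exact pdv_mul (hfq.differentiableAt two_ne_zero) (hgq.differentiableAt two_ne_zero)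
  have df := hf.differentiableAt two_ne_zero
  have dg := hg.differentiableAt two_ne_zero
  have df' := (contDiffAt_pdv hf one_add_one_eq_two.le).differentiableAt one_ne_zero
  have dg' := (contDiffAt_pdv hg one_add_one_eq_two.le).differentiableAt one_ne_zero
  rw [parabolicOp, (pdv_congr hpdv).eq_of_nhds, pdv_add (df.mul dg') (dg.mul df'),
    pdv_mul df dg', pdv_mul dg df', pdx_mul df dg]
  simp only [parabolicOp]
  ring

theorem parabolicOp_sq (hf : ContDiffAt ℝ 2 f p) :
    parabolicOp a (f ^ 2) p = 2 * f p * parabolicOp a f p + 2 * pdv f p ^ 2 := by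
  rw [pow_two, parabolicOp_mul hf hf]
  ring

theorem parabolicOp_comp_snd {b : ℝ → ℝ} (hb : ContDiff ℝ 2 b) :
    parabolicOp a (fun q => b q.2) p = deriv (deriv b) p.2 := by
  have hpdv : pdv (fun q => b q.2) = fun q => deriv b q.2 :=
    funext fun q => pdv_comp_snd (hb.differentiable two_ne_zero q.2)
  rw [parabolicOp, hpdv, pdv_comp_snd (hb.differentiable_deriv_two p.2),
    pdx_comp_snd (hb.differentiable two_ne_zero p.2), mul_zero, add_zero]

theorem parabolicOp_nonpos_of_isMaxOn {x₁ x₂ v₁ v₂ : ℝ} (hf : ContDiffAt ℝ 2 f p)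
    (ha : 0 ≤ a p.2) (hp : p ∈ Ico x₁ x₂ ×ˢ Ioo v₁ v₂)
    (hmax : IsMaxOn f (Icc x₁ x₂ ×ˢ Icc v₁ v₂) p) : parabolicOp a f p ≤ 0 := by
  obtain ⟨hx, hv⟩ := hp
  have hloc : IsLocalMax (fun t => f (p.1, t)) p.2 := by
    filter_upwards [Icc_mem_nhds hv.1 hv.2] with t ht
    exact hmax ⟨Ico_subset_Icc_self hx, ht⟩
  have hsub : Icc p.1 x₂ ×ˢ {p.2} ⊆ Icc x₁ x₂ ×ˢ Icc v₁ v₂ :=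
    prod_mono (Icc_subset_Icc_left hx.1) (singleton_subset_iff.2 (Ioo_subset_Icc_self hv))
  exact add_nonpos (pdv_pdv_nonpos_of_isLocalMax hf hloc) <|
    mul_nonpos_of_nonneg_of_nonpos ha <|
      pdx_nonpos_of_isMaxOn (hf.differentiableAt two_ne_zero) hx.2 hsub hmax

-- Time being `-x`, the initial side is `x = x₂`; `x = x₁` carries no boundary condition.
theorem le_of_parabolicOp_nonneg {x₁ x₂ v₁ v₂ K : ℝ} (ha : ∀ v ∈ Ioo v₁ v₂, 0 ≤ a v)
    (hf : ∀ p ∈ Icc x₁ x₂ ×ˢ Icc v₁ v₂, ContDiffAt ℝ 2 f p)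
    (hL : ∀ p ∈ Ico x₁ x₂ ×ˢ Ioo v₁ v₂, 0 ≤ parabolicOp a f p)
    (hbdry : ∀ p ∈ Icc x₁ x₂ ×ˢ Icc v₁ v₂, p.1 = x₂ ∨ p.2 = v₁ ∨ p.2 = v₂ → f p ≤ K)
    (hp : p ∈ Icc x₁ x₂ ×ˢ Icc v₁ v₂) : f p ≤ K := by
  by_contra! hlt
  obtain ⟨ε, hε, hεp⟩ := exists_pos_mul_lt (sub_pos.2 hlt) ((p.2 - v₁) * (v₂ - p.2))
  -- a nonpositive perturbation, zero on the lateral sides, that makes the inequality strict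
  let b : ℝ → ℝ := fun v => ε * ((v - v₁) * (v - v₂))
  have hb : ContDiff ℝ 2 b := by fun_prop
  have hbL (q : P2) : parabolicOp a (fun q => b q.2) q = 2 * ε := by
    have hderiv (v : ℝ) : HasDerivAt b (ε * (2 * v - v₁ - v₂)) v := by
      refine ((((hasDerivAt_id v).sub_const v₁).mul
        ((hasDerivAt_id v).sub_const v₂)).const_mul ε).congr_deriv ?_
      simp only [id_eq]
      ring
    rw [parabolicOp_comp_snd hb, funext fun v => (hderiv v).deriv]
    simp only [deriv_const_mul_field', deriv_sub_const_fun, deriv_const_mul_id']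
    ring
  have hbsnd (q : P2) : ContDiffAt ℝ 2 (fun q : P2 => b q.2) q := by fun_prop
  have hcont : ContinuousOn (f + fun q => b q.2) (Icc x₁ x₂ ×ˢ Icc v₁ v₂) := fun q hq =>
    ((hf q hq).add (hbsnd q)).continuousAt.continuousWithinAt
  obtain ⟨q, hq, hmax⟩ := (isCompact_Icc.prod isCompact_Icc).exists_isMaxOn ⟨p, hp⟩ hcont
  have hbq : b q.2 ≤ 0 :=
    mul_nonpos_of_nonneg_of_nonpos hε.le <|
      mul_nonpos_of_nonneg_of_nonpos (sub_nonneg.2 hq.2.1) (sub_nonpos.2 hq.2.2)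
  by_cases hqb : q.1 = x₂ ∨ q.2 = v₁ ∨ q.2 = v₂
  · have hpq : f p + b p.2 ≤ f q + b q.2 := hmax hp
    have hfq := hbdry q hq hqb
    simp only [b] at hpq hbq
    linarith
  · push Not at hqb
    have hq' : q ∈ Ico x₁ x₂ ×ˢ Ioo v₁ v₂ :=
      ⟨⟨hq.1.1, hq.1.2.lt_of_ne hqb.1⟩, hq.2.1.lt_of_ne' hqb.2.1, hq.2.2.lt_of_ne hqb.2.2⟩
    have hLq := parabolicOp_nonpos_of_isMaxOn (f := f + fun q => b q.2)
      ((hf q hq).add (hbsnd q)) (ha _ hq'.2) hq' hmax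
    rw [parabolicOp_add (hf q hq) (hbsnd q), hbL] at hLq
    linarith [hL q hq']

end ParabolicOperator

section Commutators

variable {a : ℝ → ℝ} {f h : P2 → ℝ} {p : P2}

theorem parabolicOp_pdx (ha : DifferentiableAt ℝ a p.2) (hf : ContDiffAt ℝ 3 f p) :
    parabolicOp a (pdx f) p = pdx (parabolicOp a f) p := by
  have hfx : ContDiffAt ℝ 2 (pdx f) p := contDiffAt_pdx hf (by norm_num)
  have hfv : ContDiffAt ℝ 2 (pdv f) p := contDiffAt_pdv hf (by norm_num)
  have hfvv : ContDiffAt ℝ 1 (pdv (pdv f)) p := contDiffAt_pdv hfv (by norm_num)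
  have hasnd : DifferentiableAt ℝ (fun q : P2 => a q.2) p := ha.comp p differentiableAt_snd
  have hcomm : pdx (pdv (pdv f)) p = pdv (pdv (pdx f)) p :=
    (pdx_pdv_comm hfv).trans
      (pdv_congr (eventuallyEq_pdx_pdv_comm (hf.of_le (by norm_num)))).eq_of_nhds
  have hL : parabolicOp a f = pdv (pdv f) + (fun q => a q.2) * pdx f := rfl
  rw [hL, pdx_add (hfvv.differentiableAt one_ne_zero)
    (hasnd.mul (hfx.differentiableAt two_ne_zero)),
    pdx_mul hasnd (hfx.differentiableAt two_ne_zero), pdx_comp_snd ha, hcomm, parabolicOp]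
  ring

theorem parabolicOp_pdv (ha : DifferentiableAt ℝ a p.2) (hf : ContDiffAt ℝ 3 f p) :
    parabolicOp a (pdv f) p = pdv (parabolicOp a f) p - deriv a p.2 * pdx f p := by
  have hfx : ContDiffAt ℝ 2 (pdx f) p := contDiffAt_pdx hf (by norm_num)
  have hfv : ContDiffAt ℝ 2 (pdv f) p := contDiffAt_pdv hf (by norm_num)
  have hfvv : ContDiffAt ℝ 1 (pdv (pdv f)) p := contDiffAt_pdv hfv (by norm_num)
  have hasnd : DifferentiableAt ℝ (fun q : P2 => a q.2) p := ha.comp p differentiableAt_snd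
  have hL : parabolicOp a f = pdv (pdv f) + (fun q => a q.2) * pdx f := rfl
  rw [hL, pdv_add (hfvv.differentiableAt one_ne_zero)
    (hasnd.mul (hfx.differentiableAt two_ne_zero)),
    pdv_mul hasnd (hfx.differentiableAt two_ne_zero), pdv_comp_snd ha, parabolicOp,
    pdx_pdv_comm (hf.of_le (by norm_num))]
  ring

/-- `h` is a smooth solution of `∂ᵥᵥh + a(v) ∂ₓh = 0` near `p`. -/
structure IsSolutionAt (a : ℝ → ℝ) (h : P2 → ℝ) (p : P2) : Prop where
  contDiffAt : ContDiffAt ℝ ∞ h p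
  eventually_eq_zero : parabolicOp a h =ᶠ[𝓝 p] 0

theorem IsSolutionAt.contDiffAt_two (hh : IsSolutionAt a h p) : ContDiffAt ℝ 2 h p :=
  contDiffAt_infty.1 hh.contDiffAt 2

theorem IsSolutionAt.contDiffAt_three (hh : IsSolutionAt a h p) : ContDiffAt ℝ 3 h p :=
  contDiffAt_infty.1 hh.contDiffAt 3

theorem IsSolutionAt.contDiffAt_two_pdx (hh : IsSolutionAt a h p) :
    ContDiffAt ℝ 2 (pdx h) p :=
  contDiffAt_pdx hh.contDiffAt_three (by norm_num)

theorem IsSolutionAt.contDiffAt_two_pdv (hh : IsSolutionAt a h p) :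
    ContDiffAt ℝ 2 (pdv h) p :=
  contDiffAt_pdv hh.contDiffAt_three (by norm_num)

theorem isSolutionAt_pdx (ha : Differentiable ℝ a) (hh : IsSolutionAt a h p) :
    IsSolutionAt a (pdx h) p where
  contDiffAt := contDiffAt_pdx hh.contDiffAt le_rfl
  eventually_eq_zero := by
    have hsmooth : ∀ᶠ q in 𝓝 p, ContDiffAt ℝ 3 h q :=
      hh.contDiffAt_three.eventually (by simp)
    filter_upwards [hsmooth, pdx_congr hh.eventually_eq_zero] with q hq hzero
    rw [parabolicOp_pdx (ha q.2) hq, hzero]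
    simp [pdx]

theorem IsSolutionAt.parabolicOp_pdv_eq (ha : Differentiable ℝ a)
    (hh : IsSolutionAt a h p) : parabolicOp a (pdv h) p = -(deriv a p.2 * pdx h p) := by
  rw [parabolicOp_pdv (ha p.2) hh.contDiffAt_three,
    (pdv_congr hh.eventually_eq_zero).eq_of_nhds]
  simp [pdv]

end Commutators

section Zoom

/-- The affine change of variables taking the unit cylinder at the origin to the cylinder of size
`τ × ℓ` at `p`. -/
def zoom (p : P2) (τ ℓ : ℝ) : P2 → P2 := fun q => (p.1 + τ * q.1, p.2 + ℓ * q.2)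

variable {a : ℝ → ℝ} {f h : P2 → ℝ} {p q : P2} {τ ℓ : ℝ}

theorem hasFDerivAt_zoom : HasFDerivAt (zoom p τ ℓ)
    ((τ • ContinuousLinearMap.fst ℝ ℝ ℝ).prod (ℓ • ContinuousLinearMap.snd ℝ ℝ ℝ)) q :=
  ((hasFDerivAt_fst.const_mul τ).const_add p.1).prodMk
    ((hasFDerivAt_snd.const_mul ℓ).const_add p.2)

theorem contDiff_zoom {n : WithTop ℕ∞} : ContDiff ℝ n (zoom p τ ℓ) := by
  unfold zoom
  fun_prop

theorem pdx_comp_zoom (hf : DifferentiableAt ℝ f (zoom p τ ℓ q)) :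
    pdx (f ∘ zoom p τ ℓ) q = τ * pdx f (zoom p τ ℓ q) := by
  simp only [pdx, (hf.hasFDerivAt.comp q hasFDerivAt_zoom).fderiv]
  rw [← smul_eq_mul, ← map_smul]
  simp

theorem pdv_comp_zoom (hf : DifferentiableAt ℝ f (zoom p τ ℓ q)) :
    pdv (f ∘ zoom p τ ℓ) q = ℓ * pdv f (zoom p τ ℓ q) := by
  simp only [pdv, (hf.hasFDerivAt.comp q hasFDerivAt_zoom).fderiv]
  rw [← smul_eq_mul, ← map_smul]
  simp

theorem parabolicOp_comp_zoom (hτ : τ ≠ 0) (hf : ContDiffAt ℝ 2 f (zoom p τ ℓ q)) :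
    parabolicOp (fun v => ℓ ^ 2 / τ * a (p.2 + ℓ * v)) (f ∘ zoom p τ ℓ) q
      = ℓ ^ 2 * parabolicOp a f (zoom p τ ℓ q) := by
  have hpdv : pdv (f ∘ zoom p τ ℓ) =ᶠ[𝓝 q] ℓ • (pdv f ∘ zoom p τ ℓ) :=
    ((contDiff_zoom (n := 0)).continuous.continuousAt.eventually (hf.eventually (by simp))).mono
      fun r hr => pdv_comp_zoom (hr.differentiableAt two_ne_zero)
  have hpdv₂ : pdv (ℓ • (pdv f ∘ zoom p τ ℓ)) q = ℓ * pdv (pdv f ∘ zoom p τ ℓ) q := by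
    simp [pdv, fderiv_const_smul_field]
  rw [parabolicOp, (pdv_congr hpdv).eq_of_nhds, hpdv₂,
    pdv_comp_zoom ((contDiffAt_pdv hf one_add_one_eq_two.le).differentiableAt one_ne_zero),
    pdx_comp_zoom (hf.differentiableAt two_ne_zero), parabolicOp]
  simp only [zoom]
  field_simp

theorem IsSolutionAt.comp_zoom (hτ : τ ≠ 0) (hh : IsSolutionAt a h (zoom p τ ℓ q)) :
    IsSolutionAt (fun v => ℓ ^ 2 / τ * a (p.2 + ℓ * v)) (h ∘ zoom p τ ℓ) q where
  contDiffAt := hh.contDiffAt.comp q contDiff_zoom.contDiffAt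
  eventually_eq_zero := by
    have hsmooth := hh.contDiffAt_two.eventually (by simp)
    filter_upwards [(contDiff_zoom (n := 0)).continuous.continuousAt.eventually
      (hsmooth.and hh.eventually_eq_zero)] with r ⟨hr, hzero⟩
    simp [parabolicOp_comp_zoom hτ hr, hzero]

end Zoom

section BernsteinEstimate

/-- The cylinder `[x, x + τ] × [v - ℓ, v + ℓ]` over which a solution is observed to control its
derivatives at `p = (x, v)`; as time is `-x`, the point `p` lies on its final side. -/
def parabolicCylinder (p : P2) (τ ℓ : ℝ) : Set P2 := Icc p.1 (p.1 + τ) ×ˢ Icc (p.2 - ℓ) (p.2 + ℓ)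

/-- Uniform parabolicity of `∂ᵥᵥ + a(v) ∂ₓ` on the velocities `[v - ℓ, v + ℓ]`, normalized by the
size `τ × ℓ` of a cylinder: after rescaling that cylinder to unit size, the coefficient lies in
`[m, M]` and its derivative in `[-M, M]`. -/
structure IsUniformlyParabolic (m M : ℝ) (a : ℝ → ℝ) (v τ ℓ : ℝ) : Prop where
  differentiable : Differentiable ℝ a
  pos_time : 0 < τ
  pos_velocity : 0 < ℓ
  le_coeff : ∀ w ∈ Icc (v - ℓ) (v + ℓ), m * τ ≤ a w * ℓ ^ 2
  coeff_le : ∀ w ∈ Icc (v - ℓ) (v + ℓ), a w * ℓ ^ 2 ≤ M * τ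
  deriv_le : ∀ w ∈ Icc (v - ℓ) (v + ℓ), |deriv a w| * ℓ ^ 3 ≤ M * τ

/-- `h` solves `∂ᵥᵥh + a(v) ∂ₓh = 0`, uniformly parabolic with constants `m, M`, near the cylinder
of size `τ × ℓ` at `p`, and is bounded by `K` there. -/
structure IsBoundedSolution (m M : ℝ) (a : ℝ → ℝ) (p : P2) (τ ℓ : ℝ) (h : P2 → ℝ) (K : ℝ) :
    Prop where
  isUniformlyParabolic : IsUniformlyParabolic m M a p.2 τ ℓ
  isSolutionAt : ∀ q ∈ parabolicCylinder p τ ℓ, IsSolutionAt a h q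
  abs_le : ∀ q ∈ parabolicCylinder p τ ℓ, |h q| ≤ K

/-- The cutoff of the Bernstein argument, vanishing on the parabolic boundary of the unit cylinder
at the origin and equal to `1` at the origin. -/
def cutoff : P2 → ℝ := fun q => (1 - q.1) * (1 - q.2 ^ 2)

variable {m M A B K : ℝ} {a : ℝ → ℝ} {h η w : P2 → ℝ} {p q : P2}

theorem contDiff_cutoff {n : WithTop ℕ∞} : ContDiff ℝ n cutoff := by
  unfold cutoff
  fun_prop

theorem hasFDerivAt_cutoff : HasFDerivAt cutoff
    ((1 - q.1) • -((2 * q.2) • ContinuousLinearMap.snd ℝ ℝ ℝ)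
      + (1 - q.2 ^ 2) • -ContinuousLinearMap.fst ℝ ℝ ℝ) q := by
  have hfst : HasFDerivAt (fun q : P2 => 1 - q.1) (-ContinuousLinearMap.fst ℝ ℝ ℝ) q :=
    hasFDerivAt_fst.const_sub 1
  have hsnd : HasFDerivAt (fun q : P2 => 1 - q.2 ^ 2)
      (-((2 * q.2) • ContinuousLinearMap.snd ℝ ℝ ℝ)) q := by
    simpa using ((hasFDerivAt_snd (𝕜 := ℝ) (p := q)).pow 2).const_sub 1
  exact hfst.mul hsnd

theorem pdx_cutoff : pdx cutoff q = -(1 - q.2 ^ 2) := by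
  simp [pdx, hasFDerivAt_cutoff.fderiv]

theorem pdv_cutoff : pdv cutoff q = -(2 * q.2) * (1 - q.1) := by
  have hpdv : pdv cutoff q = (1 - q.1) * -(2 * q.2) := by simp [pdv, hasFDerivAt_cutoff.fderiv]
  rw [hpdv, mul_comm]

theorem parabolicOp_cutoff :
    parabolicOp a cutoff q = -(2 * (1 - q.1)) - a q.2 * (1 - q.2 ^ 2) := by
  have hderiv : HasDerivAt (fun t => -(2 * t) * (1 - q.1)) (-(2 * 1) * (1 - q.1)) q.2 :=
    (((hasDerivAt_id q.2).const_mul 2).neg).mul_const _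
  have hpdv : DifferentiableAt ℝ (pdv cutoff) (q.1, q.2) :=
    (contDiffAt_pdv contDiff_cutoff.contDiffAt (m := 1) le_rfl).differentiableAt one_ne_zero
  have hvv : pdv (pdv cutoff) q = -(2 * 1) * (1 - q.1) :=
    (hasDerivAt_pdv hpdv).unique (by simpa only [pdv_cutoff] using hderiv)
  rw [parabolicOp, hvv, pdx_cutoff]
  ring

theorem mem_parabolicCylinder_zero :
    q ∈ parabolicCylinder 0 1 1 ↔ (0 ≤ q.1 ∧ q.1 ≤ 1) ∧ -1 ≤ q.2 ∧ q.2 ≤ 1 := by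
  simp [parabolicCylinder, -Icc_prod_Icc]

theorem cutoff_mem_Icc (hq : q ∈ parabolicCylinder 0 1 1) : cutoff q ∈ Icc 0 1 := by
  obtain ⟨⟨hx₀, hx₁⟩, hv₀, hv₁⟩ := mem_parabolicCylinder_zero.1 hq
  have hv : q.2 ^ 2 ≤ 1 := (sq_le_one_iff_abs_le_one _).2 (abs_le.2 ⟨hv₀, hv₁⟩)
  exact ⟨mul_nonneg (sub_nonneg.2 hx₁) (sub_nonneg.2 hv),
    mul_le_one₀ (by linarith) (sub_nonneg.2 hv) (by linarith [sq_nonneg q.2])⟩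

theorem abs_pdv_cutoff_le (hq : q ∈ parabolicCylinder 0 1 1) : |pdv cutoff q| ≤ 2 := by
  obtain ⟨⟨hx₀, hx₁⟩, hv⟩ := mem_parabolicCylinder_zero.1 hq
  rw [pdv_cutoff, neg_mul, abs_neg, mul_assoc, abs_mul, abs_mul, abs_two]
  have hprod : |q.2| * |1 - q.1| ≤ 1 :=
    mul_le_one₀ (abs_le.2 hv) (abs_nonneg _) (abs_le.2 ⟨by linarith, by linarith⟩)
  linarith

theorem IsUniformlyParabolic.coeff_unit_mem_Icc (ha : IsUniformlyParabolic m M a 0 1 1)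
    (hq : q ∈ parabolicCylinder 0 1 1) : a q.2 ∈ Icc m M :=
  ⟨by simpa using ha.le_coeff q.2 hq.2, by simpa using ha.coeff_le q.2 hq.2⟩

theorem IsUniformlyParabolic.parabolicOp_cutoff_ge (ha : IsUniformlyParabolic m M a 0 1 1)
    (hm : 0 ≤ m) (hq : q ∈ parabolicCylinder 0 1 1) :
    -(M + 2) ≤ cutoff q * parabolicOp a cutoff q := by
  have hx₀ : 0 ≤ q.1 := (mem_parabolicCylinder_zero.1 hq).1.1
  obtain ⟨hη₀, hη₁⟩ := cutoff_mem_Icc hq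
  obtain ⟨hm_le, hle_M⟩ := ha.coeff_unit_mem_Icc hq
  have hL : -(M + 2) ≤ parabolicOp a cutoff q := by
    rw [parabolicOp_cutoff]
    nlinarith [mul_nonneg (hm.trans hm_le) (sq_nonneg q.2)]
  nlinarith

theorem parabolicOp_mul_sq (hη : ContDiffAt ℝ 2 η q) (hw : ContDiffAt ℝ 2 w q) :
    parabolicOp a ((η * w) ^ 2) q
      = 2 * η q ^ 2 * w q * parabolicOp a w q + 2 * η q * parabolicOp a η q * w q ^ 2
        + 4 * η q * pdv η q * w q * pdv w q + 2 * (η q * pdv w q + w q * pdv η q) ^ 2 := by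
  rw [parabolicOp_sq (f := η * w) (hη.mul hw), parabolicOp_mul hη hw,
    pdv_mul (hη.differentiableAt two_ne_zero) (hw.differentiableAt two_ne_zero), Pi.mul_apply]
  ring

theorem parabolicOp_sq_mul_sq (hη : ContDiffAt ℝ 2 η q) (hw : ContDiffAt ℝ 2 w q) :
    parabolicOp a ((η ^ 2 * w) ^ 2) q
      = 2 * η q ^ 4 * w q * parabolicOp a w q + 4 * (η q * parabolicOp a η q) * (η q * w q) ^ 2
        - 20 * pdv η q ^ 2 * (η q * w q) ^ 2
        + 2 * (η q ^ 2 * pdv w q + 4 * η q * pdv η q * w q) ^ 2 := by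
  have hη' := hη.differentiableAt two_ne_zero
  rw [parabolicOp_mul_sq (η := η ^ 2) (hη.pow 2) hw, parabolicOp_sq hη, pow_two η, pdv_mul hη' hη']
  simp only [Pi.mul_apply]
  ring

theorem IsUniformlyParabolic.parabolicOp_cutoff_sq_mul_pdx_ge
    (ha : IsUniformlyParabolic m M a 0 1 1) (hm : 0 ≤ m) (hq : q ∈ parabolicCylinder 0 1 1)
    (hh : IsSolutionAt a h q) :
    -(4 * M + 88) * (cutoff q * pdx h q) ^ 2 ≤ parabolicOp a ((cutoff ^ 2 * pdx h) ^ 2) q := by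
  have hX := isSolutionAt_pdx ha.differentiable hh
  have hη_sq : pdv cutoff q ^ 2 ≤ 4 := by
    nlinarith [abs_le.1 (abs_pdv_cutoff_le hq)]
  rw [parabolicOp_sq_mul_sq contDiff_cutoff.contDiffAt hX.contDiffAt_two,
    hX.eventually_eq_zero.eq_of_nhds, Pi.zero_apply]
  have hcutoff := mul_le_mul_of_nonneg_right (ha.parabolicOp_cutoff_ge hm hq)
    (sq_nonneg (cutoff q * pdx h q))
  have hpdv := mul_le_mul_of_nonneg_right hη_sq (sq_nonneg (cutoff q * pdx h q))
  linarith [sq_nonneg (cutoff q ^ 2 * pdv (pdx h) q + 4 * cutoff q * pdv cutoff q * pdx h q)]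

-- The good term `2 a² (η ∂ₓh)²` comes from `(∂ᵥ(η ∂ᵥh))²`, since `∂ᵥᵥh = -a ∂ₓh`.
theorem IsSolutionAt.parabolicOp_mul_pdv_sq (hh : IsSolutionAt a h q) (ha : Differentiable ℝ a)
    (hη : ContDiffAt ℝ 2 η q) :
    parabolicOp a ((η * pdv h) ^ 2) q
      = 2 * a q.2 ^ 2 * (η q * pdx h q) ^ 2
        - 2 * ((4 * a q.2 * pdv η q + deriv a q.2 * η q) * pdv h q) * (η q * pdx h q)
        + 2 * (η q * parabolicOp a η q) * pdv h q ^ 2 + 2 * (pdv η q * pdv h q) ^ 2 := by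
  have hvv : pdv (pdv h) q = -(a q.2 * pdx h q) :=
    eq_neg_of_add_eq_zero_left hh.eventually_eq_zero.eq_of_nhds
  rw [parabolicOp_mul_sq hη hh.contDiffAt_two_pdv,
    hh.parabolicOp_pdv_eq ha, hvv]
  ring

theorem IsUniformlyParabolic.abs_cross_coeff_le (ha : IsUniformlyParabolic m M a 0 1 1)
    (hm : 0 ≤ m) (hq : q ∈ parabolicCylinder 0 1 1) :
    |4 * a q.2 * pdv cutoff q + deriv a q.2 * cutoff q| ≤ 9 * M := by
  obtain ⟨hη₀, hη₁⟩ := cutoff_mem_Icc hq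
  have ha₀ : 0 ≤ a q.2 := hm.trans (ha.coeff_unit_mem_Icc hq).1
  have haM : a q.2 ≤ M := (ha.coeff_unit_mem_Icc hq).2
  have hderiv : |deriv a q.2| ≤ M := by simpa using ha.deriv_le q.2 hq.2
  calc |4 * a q.2 * pdv cutoff q + deriv a q.2 * cutoff q|
      ≤ |4 * a q.2 * pdv cutoff q| + |deriv a q.2 * cutoff q| := abs_add_le _ _
    _ = 4 * a q.2 * |pdv cutoff q| + |deriv a q.2| * cutoff q := by
      rw [abs_mul, abs_mul (deriv a q.2), abs_of_nonneg hη₀, abs_of_nonneg (by positivity)]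
    _ ≤ 4 * M * 2 + M * 1 := by
      have := ha₀.trans haM
      gcongr
      exact abs_pdv_cutoff_le hq
    _ = 9 * M := by ring

theorem IsUniformlyParabolic.parabolicOp_cutoff_mul_pdv_ge
    (ha : IsUniformlyParabolic m M a 0 1 1) (hm : 0 < m) (hq : q ∈ parabolicCylinder 0 1 1)
    (hh : IsSolutionAt a h q) :
    m ^ 2 * (cutoff q * pdx h q) ^ 2 - (2 * (M + 2) + (9 * M / m) ^ 2) * pdv h q ^ 2
      ≤ parabolicOp a ((cutoff * pdv h) ^ 2) q := by
  rw [hh.parabolicOp_mul_pdv_sq ha.differentiable contDiff_cutoff.contDiffAt]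
  set Y := cutoff q * pdx h q
  set c := 4 * a q.2 * pdv cutoff q + deriv a q.2 * cutoff q
  have hyoung : 2 * (c * pdv h q) * Y ≤ m ^ 2 * Y ^ 2 + (9 * M / m) ^ 2 * pdv h q ^ 2 := by
    have hc_sq : (c / m) ^ 2 ≤ (9 * M / m) ^ 2 := by
      rw [div_pow, div_pow]
      gcongr ?_ / _
      exact sq_le_sq.2 ((ha.abs_cross_coeff_le hm.le hq).trans (le_abs_self _))
    calc 2 * (c * pdv h q) * Y = 2 * (m * Y) * (c / m * pdv h q) := by field_simp
      _ ≤ (m * Y) ^ 2 + (c / m * pdv h q) ^ 2 := two_mul_le_add_sq _ _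
      _ = m ^ 2 * Y ^ 2 + (c / m) ^ 2 * pdv h q ^ 2 := by ring
      _ ≤ m ^ 2 * Y ^ 2 + (9 * M / m) ^ 2 * pdv h q ^ 2 := by gcongr
  have ha_sq : m ^ 2 * Y ^ 2 ≤ a q.2 ^ 2 * Y ^ 2 := by
    gcongr
    exact (ha.coeff_unit_mem_Icc hq).1
  have hcutoff := mul_le_mul_of_nonneg_right (ha.parabolicOp_cutoff_ge hm.le hq)
    (sq_nonneg (pdv h q))
  linarith [sq_nonneg (pdv cutoff q * pdv h q)]

/-- Bernstein's auxiliary function: a subsolution for suitable `A` and `B`, which equals `B h²` on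
the parabolic boundary of the unit cylinder and controls the gradient of `h` at the origin. -/
def bernsteinFun (A B : ℝ) (h : P2 → ℝ) : P2 → ℝ :=
  (cutoff ^ 2 * pdx h) ^ 2 + A • (cutoff * pdv h) ^ 2 + B • h ^ 2

theorem contDiffAt_bernsteinFun (hh : IsSolutionAt a h q) :
    ContDiffAt ℝ 2 (bernsteinFun A B h) q :=
  have hcutoff : ContDiffAt ℝ 2 cutoff q := contDiff_cutoff.contDiffAt
  ((((hcutoff.pow 2).mul hh.contDiffAt_two_pdx).pow 2).add
    (((hcutoff.mul hh.contDiffAt_two_pdv).pow 2).const_smul A)).add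
    ((hh.contDiffAt_two.pow 2).const_smul B)

theorem parabolicOp_bernsteinFun (hh : IsSolutionAt a h q) :
    parabolicOp a (bernsteinFun A B h) q
      = parabolicOp a ((cutoff ^ 2 * pdx h) ^ 2) q
        + A * parabolicOp a ((cutoff * pdv h) ^ 2) q + B * (2 * pdv h q ^ 2) := by
  have hcutoff : ContDiffAt ℝ 2 cutoff q := contDiff_cutoff.contDiffAt
  have hX : ContDiffAt ℝ 2 ((cutoff ^ 2 * pdx h) ^ 2) q :=
    ((hcutoff.pow 2).mul hh.contDiffAt_two_pdx).pow 2
  have hV : ContDiffAt ℝ 2 (A • (cutoff * pdv h) ^ 2) q :=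
    ((hcutoff.mul hh.contDiffAt_two_pdv).pow 2).const_smul A
  have hH : ContDiffAt ℝ 2 (B • h ^ 2) q := (hh.contDiffAt_two.pow 2).const_smul B
  have hXV : ContDiffAt ℝ 2 ((cutoff ^ 2 * pdx h) ^ 2 + A • (cutoff * pdv h) ^ 2) q := hX.add hV
  rw [bernsteinFun, parabolicOp_add hXV hH, parabolicOp_add hX hV, parabolicOp_const_smul,
    parabolicOp_const_smul, parabolicOp_sq hh.contDiffAt_two, hh.eventually_eq_zero.eq_of_nhds]
  simp

theorem IsUniformlyParabolic.parabolicOp_bernsteinFun_nonneg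
    (ha : IsUniformlyParabolic m M a 0 1 1) (hm : 0 < m) (hA : 4 * M + 88 ≤ A * m ^ 2)
    (hB : A * (2 * (M + 2) + (9 * M / m) ^ 2) ≤ 2 * B) (hA₀ : 0 ≤ A)
    (hq : q ∈ parabolicCylinder 0 1 1) (hh : IsSolutionAt a h q) :
    0 ≤ parabolicOp a (bernsteinFun A B h) q := by
  have hX := ha.parabolicOp_cutoff_sq_mul_pdx_ge hm.le hq hh
  have hV := mul_le_mul_of_nonneg_left (ha.parabolicOp_cutoff_mul_pdv_ge hm hq hh) hA₀
  have hY := mul_le_mul_of_nonneg_right hA (sq_nonneg (cutoff q * pdx h q))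
  have hH := mul_le_mul_of_nonneg_right hB (sq_nonneg (pdv h q))
  rw [parabolicOp_bernsteinFun hh]
  linarith

theorem IsBoundedSolution.bernsteinFun_le (hh : IsBoundedSolution m M a 0 1 1 h K) (hm : 0 < m)
    (hA : 4 * M + 88 ≤ A * m ^ 2) (hB : A * (2 * (M + 2) + (9 * M / m) ^ 2) ≤ 2 * B)
    (hA₀ : 0 ≤ A) (hB₀ : 0 ≤ B) (hq : q ∈ parabolicCylinder 0 1 1) :
    bernsteinFun A B h q ≤ B * K ^ 2 := by
  have ha := hh.isUniformlyParabolic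
  refine le_of_parabolicOp_nonneg (a := a) (fun v hv => ?_)
    (fun r hr => contDiffAt_bernsteinFun (hh.isSolutionAt r hr)) (fun r hr => ?_)
    (fun r hr hbdry => ?_) hq
  · have hmem : ((0, v) : P2) ∈ parabolicCylinder 0 1 1 := ⟨by simp, Ioo_subset_Icc_self hv⟩
    exact hm.le.trans (ha.coeff_unit_mem_Icc hmem).1
  · have hr' := prod_mono Ico_subset_Icc_self Ioo_subset_Icc_self hr
    exact ha.parabolicOp_bernsteinFun_nonneg hm hA hB hA₀ hr' (hh.isSolutionAt r hr')
  · have hcutoff : cutoff r = 0 := by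
      simp only [Prod.fst_zero, Prod.snd_zero, zero_add, zero_sub] at hbdry
      rcases hbdry with hx | hv | hv <;> simp [cutoff, *]
    have hK : h r ^ 2 ≤ K ^ 2 := sq_le_sq.2 ((hh.abs_le r hr).trans (le_abs_self K))
    simpa [bernsteinFun, hcutoff] using mul_le_mul_of_nonneg_left hK hB₀

theorem exists_gradient_bound_unit (hm : 0 < m) :
    ∃ C, ∀ {a h K}, IsBoundedSolution m M a 0 1 1 h K →
      |pdx h 0| ≤ C * K ∧ |pdv h 0| ≤ C * K := by
  set A := (4 * M + 88) / m ^ 2 + 1 with hA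
  set B := A * (2 * (M + 2) + (9 * M / m) ^ 2) / 2 with hB
  refine ⟨√B, fun {a h K} hh => ?_⟩
  have h0 : (0 : P2) ∈ parabolicCylinder 0 1 1 := mem_parabolicCylinder_zero.2 (by norm_num)
  have hM : 0 ≤ M := by
    obtain ⟨hma, haM⟩ := hh.isUniformlyParabolic.coeff_unit_mem_Icc h0
    exact hm.le.trans (hma.trans haM)
  have hK : 0 ≤ K := (abs_nonneg _).trans (hh.abs_le 0 h0)
  have hA₁ : 1 ≤ A := by
    rw [hA]
    exact le_add_of_nonneg_left (by positivity)
  have hB₀ : 0 ≤ B := by positivity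
  have hAm : 4 * M + 88 ≤ A * m ^ 2 := by
    rw [hA, add_mul, div_mul_cancel₀ _ (by positivity)]
    exact le_add_of_nonneg_right (by positivity)
  have hle := hh.bernsteinFun_le hm hAm (by rw [hB]; linarith) (by linarith) hB₀ h0
  have hF : pdx h 0 ^ 2 + A * pdv h 0 ^ 2 + B * h 0 ^ 2 ≤ B * K ^ 2 := by
    simpa [bernsteinFun, cutoff] using hle
  have habs {t : ℝ} (ht : t ^ 2 ≤ B * K ^ 2) : |t| ≤ √B * K := by
    calc |t| ≤ √(B * K ^ 2) := Real.abs_le_sqrt ht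
      _ = √B * K := by rw [Real.sqrt_mul hB₀, Real.sqrt_sq hK]
  have hH : 0 ≤ B * h 0 ^ 2 := by positivity
  have hV : pdv h 0 ^ 2 ≤ A * pdv h 0 ^ 2 := le_mul_of_one_le_left (sq_nonneg _) hA₁
  exact ⟨habs (by nlinarith [sq_nonneg (pdv h 0)]), habs (by nlinarith [sq_nonneg (pdx h 0)])⟩

end BernsteinEstimate

section InteriorEstimates

variable {m M K v w τ ℓ : ℝ} {a : ℝ → ℝ} {h : P2 → ℝ} {p q : P2}

theorem zoom_mem_parabolicCylinder (hτ : 0 < τ) (hℓ : 0 < ℓ) (hq : q ∈ parabolicCylinder 0 1 1) :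
    zoom p τ ℓ q ∈ parabolicCylinder p τ ℓ := by
  obtain ⟨⟨hx₀, hx₁⟩, hv₀, hv₁⟩ := mem_parabolicCylinder_zero.1 hq
  refine ⟨⟨?_, ?_⟩, ?_, ?_⟩ <;> simp only [zoom] <;> nlinarith

theorem IsUniformlyParabolic.comp_zoom (ha : IsUniformlyParabolic m M a v τ ℓ) :
    IsUniformlyParabolic m M (fun w => ℓ ^ 2 / τ * a (v + ℓ * w)) 0 1 1 := by
  have hτ := ha.pos_time
  have hℓ := ha.pos_velocity
  have hmem {w : ℝ} (hw : w ∈ Icc (0 - 1 : ℝ) (0 + 1)) : v + ℓ * w ∈ Icc (v - ℓ) (v + ℓ) :=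
    ⟨by nlinarith [hw.1], by nlinarith [hw.2]⟩
  have hderiv (w : ℝ) : HasDerivAt (fun w => ℓ ^ 2 / τ * a (v + ℓ * w))
      (ℓ ^ 2 / τ * (deriv a (v + ℓ * w) * ℓ)) w := by
    have haff : HasDerivAt (fun w => v + ℓ * w) ℓ w := by
      simpa using ((hasDerivAt_id w).const_mul ℓ).const_add v
    exact ((ha.differentiable _).hasDerivAt.comp w haff).const_mul _
  refine ⟨fun w => (hderiv w).differentiableAt, one_pos, one_pos, fun w hw => ?_, fun w hw => ?_,
    fun w hw => ?_⟩
  · rw [mul_one, one_pow, mul_one, div_mul_eq_mul_div, le_div_iff₀ hτ, mul_comm (ℓ ^ 2)]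
    exact ha.le_coeff _ (hmem hw)
  · rw [mul_one, one_pow, mul_one, div_mul_eq_mul_div, div_le_iff₀ hτ, mul_comm (ℓ ^ 2)]
    exact ha.coeff_le _ (hmem hw)
  · rw [(hderiv w).deriv, abs_mul, abs_mul, abs_of_pos hℓ, abs_of_pos (by positivity)]
    calc ℓ ^ 2 / τ * (|deriv a (v + ℓ * w)| * ℓ) * 1 ^ 3
        = |deriv a (v + ℓ * w)| * ℓ ^ 3 / τ := by ring
      _ ≤ M * 1 := by
        rw [div_le_iff₀ hτ, mul_one]
        exact ha.deriv_le _ (hmem hw)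

theorem IsBoundedSolution.comp_zoom (hh : IsBoundedSolution m M a p τ ℓ h K) :
    IsBoundedSolution m M (fun w => ℓ ^ 2 / τ * a (p.2 + ℓ * w)) 0 1 1 (h ∘ zoom p τ ℓ) K where
  isUniformlyParabolic := hh.isUniformlyParabolic.comp_zoom
  isSolutionAt q hq := by
    obtain ⟨_, hτ, hℓ, _⟩ := hh.isUniformlyParabolic
    exact (hh.isSolutionAt _ (zoom_mem_parabolicCylinder hτ hℓ hq)).comp_zoom hτ.ne'
  abs_le q hq := by
    obtain ⟨_, hτ, hℓ, _⟩ := hh.isUniformlyParabolic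
    exact hh.abs_le _ (zoom_mem_parabolicCylinder hτ hℓ hq)

theorem IsBoundedSolution.mem_self (hh : IsBoundedSolution m M a p τ ℓ h K) :
    p ∈ parabolicCylinder p τ ℓ := by
  obtain ⟨_, hτ, hℓ, _⟩ := hh.isUniformlyParabolic
  exact ⟨⟨le_rfl, by linarith⟩, by linarith, by linarith⟩

theorem exists_gradient_bound (hm : 0 < m) :
    ∃ C, ∀ {a p τ ℓ h K}, IsBoundedSolution m M a p τ ℓ h K →
      τ * |pdx h p| ≤ C * K ∧ ℓ * |pdv h p| ≤ C * K := by
  obtain ⟨C, hC⟩ := exists_gradient_bound_unit (M := M) hm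
  refine ⟨C, fun {a p τ ℓ h K} hh => ?_⟩
  have hzoom : zoom p τ ℓ 0 = p := by simp [zoom]
  have hd : DifferentiableAt ℝ h (zoom p τ ℓ 0) := by
    rw [hzoom]
    exact (hh.isSolutionAt p hh.mem_self).contDiffAt_two.differentiableAt two_ne_zero
  obtain ⟨hpdx, hpdv⟩ := hC hh.comp_zoom
  rw [pdx_comp_zoom hd, hzoom, abs_mul, abs_of_pos hh.isUniformlyParabolic.pos_time] at hpdx
  rw [pdv_comp_zoom hd, hzoom, abs_mul, abs_of_pos hh.isUniformlyParabolic.pos_velocity] at hpdv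
  exact ⟨hpdx, hpdv⟩

theorem IsUniformlyParabolic.shrink (ha : IsUniformlyParabolic m M a v τ ℓ)
    (hw : w ∈ Icc (v - ℓ / 2) (v + ℓ / 2)) : IsUniformlyParabolic m M a w (τ / 4) (ℓ / 2) := by
  have hτ := ha.pos_time
  have hℓ := ha.pos_velocity
  have hmem {u : ℝ} (hu : u ∈ Icc (w - ℓ / 2) (w + ℓ / 2)) : u ∈ Icc (v - ℓ) (v + ℓ) :=
    ⟨by linarith [hw.1, hu.1], by linarith [hw.2, hu.2]⟩
  refine ⟨ha.differentiable, by positivity, by positivity, fun u hu => ?_, fun u hu => ?_,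
    fun u hu => ?_⟩
  · linarith [ha.le_coeff u (hmem hu)]
  · linarith [ha.coeff_le u (hmem hu)]
  · have hnonneg : 0 ≤ |deriv a u| * ℓ ^ 3 := by positivity
    linarith [ha.deriv_le u (hmem hu)]

theorem parabolicCylinder_subset (hq : q ∈ parabolicCylinder p (τ / 4) (ℓ / 2)) (hτ : 0 ≤ τ) :
    parabolicCylinder q (τ / 4) (ℓ / 2) ⊆ parabolicCylinder p τ ℓ := by
  rintro r ⟨⟨hx₀, hx₁⟩, hv₀, hv₁⟩
  obtain ⟨⟨hqx₀, hqx₁⟩, hqv₀, hqv₁⟩ := hq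
  exact ⟨⟨by linarith, by linarith⟩, by linarith, by linarith⟩

theorem IsBoundedSolution.shrink (hh : IsBoundedSolution m M a p τ ℓ h K)
    (hq : q ∈ parabolicCylinder p (τ / 4) (ℓ / 2)) :
    IsBoundedSolution m M a q (τ / 4) (ℓ / 2) h K :=
  have hsub := parabolicCylinder_subset hq hh.isUniformlyParabolic.pos_time.le
  ⟨hh.isUniformlyParabolic.shrink hq.2, fun r hr => hh.isSolutionAt r (hsub hr),
    fun r hr => hh.abs_le r (hsub hr)⟩

theorem exists_isBoundedSolution_pdx (hm : 0 < m) :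
    ∃ C, ∀ {a p τ ℓ h K}, IsBoundedSolution m M a p τ ℓ h K →
      IsBoundedSolution m M a p (τ / 4) (ℓ / 2) (pdx h) (C * K / τ) := by
  obtain ⟨C, hC⟩ := exists_gradient_bound (M := M) hm
  refine ⟨4 * C, fun {a p τ ℓ h K} hh => ?_⟩
  have hτ := hh.isUniformlyParabolic.pos_time
  have hself : IsBoundedSolution m M a p (τ / 4) (ℓ / 2) h K := hh.shrink
    ⟨⟨le_rfl, by linarith⟩, by linarith [hh.isUniformlyParabolic.pos_velocity],
      by linarith [hh.isUniformlyParabolic.pos_velocity]⟩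
  refine ⟨hself.isUniformlyParabolic, fun q hq =>
    isSolutionAt_pdx hh.isUniformlyParabolic.differentiable (hself.isSolutionAt q hq),
    fun q hq => ?_⟩
  rw [le_div_iff₀ hτ]
  linarith [(hC (hh.shrink hq)).1]

theorem exists_isBoundedSolution_iterate_pdx (hm : 0 < m) (i : ℕ) :
    ∃ C, ∀ {a p τ ℓ h K}, IsBoundedSolution m M a p τ ℓ h K →
      IsBoundedSolution m M a p (τ / 4 ^ i) (ℓ / 2 ^ i) (pdx^[i] h) (C * K / τ ^ i) := by
  induction i with
  | zero => exact ⟨1, fun hh => by simpa using hh⟩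
  | succ i ih =>
    obtain ⟨C, hC⟩ := ih
    obtain ⟨C₁, hC₁⟩ := exists_isBoundedSolution_pdx (M := M) hm
    refine ⟨C₁ * C * 4 ^ i, fun {a p τ ℓ h K} hh => ?_⟩
    have hτ := hh.isUniformlyParabolic.pos_time
    have hbound : C₁ * (C * K / τ ^ i) / (τ / 4 ^ i) = C₁ * C * 4 ^ i * K / τ ^ (i + 1) := by
      rw [pow_succ τ]
      field_simp
    rw [Function.iterate_succ_apply', ← hbound, pow_succ, pow_succ, ← div_div, ← div_div]
    exact hC₁ (hC hh)

end InteriorEstimates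

section IteratedDerivatives

variable {f g : P2 → ℝ} {p : P2}

theorem eventuallyEq_iterate {D : (P2 → ℝ) → P2 → ℝ}
    (hD : ∀ {f g : P2 → ℝ}, f =ᶠ[𝓝 p] g → D f =ᶠ[𝓝 p] D g) (n : ℕ) (h : f =ᶠ[𝓝 p] g) :
    D^[n] f =ᶠ[𝓝 p] D^[n] g := by
  induction n generalizing f g with
  | zero => exact h
  | succ _ ih => exact ih (hD h)

theorem contDiffAt_iterate_pdv (hf : ContDiffAt ℝ ∞ f p) (n : ℕ) :
    ContDiffAt ℝ ∞ (pdv^[n] f) p := by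
  induction n generalizing f with
  | zero => exact hf
  | succ _ ih => exact ih (contDiffAt_pdv hf le_rfl)

theorem eventuallyEq_pdx_iterate_pdv_comm (hf : ContDiffAt ℝ ∞ f p) (j : ℕ) :
    pdx (pdv^[j] f) =ᶠ[𝓝 p] pdv^[j] (pdx f) := by
  induction j generalizing f with
  | zero => rfl
  | succ j ih =>
    exact (ih (contDiffAt_pdv hf le_rfl)).trans <|
      eventuallyEq_iterate pdv_congr j (eventuallyEq_pdx_pdv_comm (contDiffAt_infty.1 hf 2))

theorem eventuallyEq_iterate_pdx_iterate_pdv_comm (hf : ContDiffAt ℝ ∞ f p) (i j : ℕ) :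
    pdx^[i] (pdv^[j] f) =ᶠ[𝓝 p] pdv^[j] (pdx^[i] f) := by
  induction i generalizing f with
  | zero => rfl
  | succ i ih =>
    exact (eventuallyEq_iterate pdx_congr i (eventuallyEq_pdx_iterate_pdv_comm hf j)).trans <|
      ih (contDiffAt_pdx hf le_rfl)

theorem pdv_snd_mul (hf : DifferentiableAt ℝ f p) :
    pdv (fun q => q.2 * f q) p = p.2 * pdv f p + f p := by
  have hsnd : pdv (fun q => q.2) p = 1 := by simp [pdv_comp_snd (a := fun v => v)]
  have := pdv_mul (f := fun q => q.2) differentiableAt_snd hf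
  rw [hsnd, mul_one] at this
  exact this

theorem eventuallyEq_iterate_pdv_snd_mul (hf : ContDiffAt ℝ ∞ f p) (n : ℕ) :
    pdv^[n + 1] (fun q => q.2 * f q) =ᶠ[𝓝 p]
      fun q => q.2 * pdv^[n + 1] f q + (n + 1) * pdv^[n] f q := by
  induction n with
  | zero =>
    filter_upwards [(contDiffAt_infty.1 hf 1).eventually (by simp)] with q hq
    simp [pdv_snd_mul (hq.differentiableAt one_ne_zero)]
  | succ n ih =>
    rw [Function.iterate_succ_apply']
    refine (pdv_congr ih).trans ?_
    have hsmooth (k : ℕ) : ∀ᶠ q in 𝓝 p, DifferentiableAt ℝ (pdv^[k] f) q :=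
      ((contDiffAt_infty.1 (contDiffAt_iterate_pdv hf k) 1).eventually (by simp)).mono
        fun q hq => hq.differentiableAt one_ne_zero
    filter_upwards [hsmooth n, hsmooth (n + 1)] with q hn hn₁
    have hadd := pdv_add (f := fun q => q.2 * pdv^[n + 1] f q)
      (g := fun q => (n + 1) * pdv^[n] f q) (differentiableAt_snd.mul hn₁) (hn.const_mul _)
    have hconst : pdv (fun q => (n + 1) * pdv^[n] f q) q = (n + 1) * pdv (pdv^[n] f) q := by
      simp [pdv, fderiv_const_mul hn]
    refine hadd.trans ?_
    rw [pdv_snd_mul hn₁, hconst, ← Function.iterate_succ_apply' pdv,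
      ← Function.iterate_succ_apply' pdv]
    push_cast
    ring

end IteratedDerivatives

section KineticEquation

variable {m M K τ ℓ : ℝ} {h : P2 → ℝ} {p : P2}

theorem IsSolutionAt.pdv_pdv_eventuallyEq (hh : IsSolutionAt (fun v => -v) h p) :
    pdv (pdv h) =ᶠ[𝓝 p] fun q => q.2 * pdx h q := by
  filter_upwards [hh.eventually_eq_zero] with q hq
  rw [parabolicOp, Pi.zero_apply, neg_mul] at hq
  linarith

theorem IsSolutionAt.iterate_pdv_add_three_eq (hh : IsSolutionAt (fun v => -v) h p) (n : ℕ) :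
    pdv^[n + 3] h p = p.2 * pdv^[n + 1] (pdx h) p + (n + 1) * pdv^[n] (pdx h) p :=
  ((eventuallyEq_iterate pdv_congr (n + 1) hh.pdv_pdv_eventuallyEq).trans
    (eventuallyEq_iterate_pdv_snd_mul (contDiffAt_pdx hh.contDiffAt le_rfl) n)).eq_of_nhds

theorem IsUniformlyParabolic.abs_velocity_le {v : ℝ}
    (ha : IsUniformlyParabolic m M (fun v => -v) v τ ℓ) (hm : 0 < m) : |v| * ℓ ^ 2 ≤ M * τ := by
  have hℓ := ha.pos_velocity
  have hv : v ∈ Icc (v - ℓ) (v + ℓ) := ⟨by linarith, by linarith⟩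
  have hneg : 0 < -v * ℓ ^ 2 := (mul_pos hm ha.pos_time).trans_le (ha.le_coeff v hv)
  rw [abs_of_neg (neg_pos.1 (pos_of_mul_pos_left hneg (by positivity)))]
  exact ha.coeff_le v hv

theorem IsUniformlyParabolic.pow_three_le {v : ℝ}
    (ha : IsUniformlyParabolic m M (fun v => -v) v τ ℓ) : ℓ ^ 3 ≤ M * τ := by
  have hℓ := ha.pos_velocity
  simpa using ha.deriv_le v ⟨by linarith, by linarith⟩

theorem IsBoundedSolution.iterate_pdv_add_three_le
    (hh : IsBoundedSolution m M (fun v => -v) p τ ℓ h K) (hm : 0 < m) {n : ℕ} {A₀ A₁ : ℝ}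
    (h₀ : ℓ ^ n * |pdv^[n] (pdx h) p| ≤ A₀) (h₁ : ℓ ^ (n + 1) * |pdv^[n + 1] (pdx h) p| ≤ A₁) :
    ℓ ^ (n + 3) * |pdv^[n + 3] h p| ≤ M * τ * (A₁ + (n + 1) * A₀) := by
  have ha := hh.isUniformlyParabolic
  have hℓ := ha.pos_velocity
  set V₁ := pdv^[n + 1] (pdx h) p
  set V₀ := pdv^[n] (pdx h) p
  calc ℓ ^ (n + 3) * |pdv^[n + 3] h p|
      ≤ ℓ ^ (n + 3) * (|p.2| * |V₁| + (n + 1) * |V₀|) := by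
        rw [(hh.isSolutionAt p hh.mem_self).iterate_pdv_add_three_eq n]
        gcongr
        refine (abs_add_le _ _).trans_eq ?_
        rw [abs_mul, abs_mul, abs_of_nonneg (by positivity : (0 : ℝ) ≤ n + 1)]
    _ = |p.2| * ℓ ^ 2 * (ℓ ^ (n + 1) * |V₁|) + ℓ ^ 3 * ((n + 1) * (ℓ ^ n * |V₀|)) := by ring
    _ ≤ M * τ * (ℓ ^ (n + 1) * |V₁|) + M * τ * ((n + 1) * (ℓ ^ n * |V₀|)) := by
        gcongr ?_ * _ + ?_ * _
        exacts [ha.abs_velocity_le hm, ha.pow_three_le]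
    _ = M * τ * (ℓ ^ (n + 1) * |V₁| + (n + 1) * (ℓ ^ n * |V₀|)) := by ring
    _ ≤ M * τ * (A₁ + (n + 1) * A₀) := by
        have hMτ : 0 ≤ M * τ := (by positivity : 0 ≤ ℓ ^ 3).trans ha.pow_three_le
        gcongr

theorem exists_iterate_pdv_bound (hm : 0 < m) : ∀ j : ℕ, ∃ C, ∀ {p τ ℓ h K},
    IsBoundedSolution m M (fun v => -v) p τ ℓ h K → ℓ ^ j * |pdv^[j] h p| ≤ C * K
  | 0 => ⟨1, fun hh => by simpa using hh.abs_le _ hh.mem_self⟩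
  | 1 => by
    obtain ⟨C, hC⟩ := exists_gradient_bound (M := M) hm
    exact ⟨C, fun hh => by simpa using (hC hh).2⟩
  | 2 => by
    obtain ⟨C, hC⟩ := exists_gradient_bound (M := M) hm
    refine ⟨M * C, fun {p τ ℓ h K} hh => ?_⟩
    have hτ := hh.isUniformlyParabolic.pos_time
    have hM := nonneg_of_mul_nonneg_left
      ((by positivity : 0 ≤ |p.2| * ℓ ^ 2).trans (hh.isUniformlyParabolic.abs_velocity_le hm)) hτ
    calc ℓ ^ 2 * |pdv^[2] h p| = |p.2| * ℓ ^ 2 * |pdx h p| := by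
          rw [show pdv^[2] h p = _ from
            (hh.isSolutionAt p hh.mem_self).pdv_pdv_eventuallyEq.eq_of_nhds, abs_mul]
          ring
      _ ≤ M * τ * |pdx h p| := by
          gcongr ?_ * _
          exact hh.isUniformlyParabolic.abs_velocity_le hm
      _ ≤ M * C * K := by
          rw [mul_assoc, mul_assoc]
          exact mul_le_mul_of_nonneg_left (hC hh).1 hM
  | n + 3 => by
    obtain ⟨C, hC⟩ := exists_isBoundedSolution_pdx (M := M) hm
    obtain ⟨C₀, hC₀⟩ := exists_iterate_pdv_bound hm n
    obtain ⟨C₁, hC₁⟩ := exists_iterate_pdv_bound hm (n + 1)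
    refine ⟨M * (2 ^ (n + 1) * C₁ + (n + 1) * 2 ^ n * C₀) * C, fun {p τ ℓ h K} hh => ?_⟩
    have hτ := hh.isUniformlyParabolic.pos_time
    have hX := hC hh
    have h₀ : ℓ ^ n * |pdv^[n] (pdx h) p| ≤ 2 ^ n * (C₀ * (C * K / τ)) := by
      rw [← div_le_iff₀' (by positivity), mul_div_right_comm, ← div_pow]
      exact hC₀ hX
    have h₁ : ℓ ^ (n + 1) * |pdv^[n + 1] (pdx h) p| ≤ 2 ^ (n + 1) * (C₁ * (C * K / τ)) := by
      rw [← div_le_iff₀' (by positivity), mul_div_right_comm, ← div_pow]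
      exact hC₁ hX
    refine (hh.iterate_pdv_add_three_le hm h₀ h₁).trans_eq ?_
    field_simp

theorem exists_iterate_pdx_iterate_pdv_bound (hm : 0 < m) (i j : ℕ) : ∃ C, ∀ {p τ ℓ h K},
    IsBoundedSolution m M (fun v => -v) p τ ℓ h K →
      τ ^ i * ℓ ^ j * |pdx^[i] (pdv^[j] h) p| ≤ C * K := by
  obtain ⟨C, hC⟩ := exists_isBoundedSolution_iterate_pdx (M := M) hm i
  obtain ⟨C', hC'⟩ := exists_iterate_pdv_bound (M := M) hm j
  refine ⟨2 ^ (i * j) * C' * C, fun {p τ ℓ h K} hh => ?_⟩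
  have hτ := hh.isUniformlyParabolic.pos_time
  have hcomm : pdx^[i] (pdv^[j] h) p = pdv^[j] (pdx^[i] h) p :=
    (eventuallyEq_iterate_pdx_iterate_pdv_comm
      (hh.isSolutionAt p hh.mem_self).contDiffAt i j).eq_of_nhds
  have hle := hC' (hC hh)
  rw [div_pow, ← pow_mul, ← mul_div_assoc, le_div_iff₀ (by positivity), div_mul_eq_mul_div,
    div_mul_eq_mul_div, div_le_iff₀ (by positivity)] at hle
  rw [hcomm]
  linarith

theorem isSolutionAt_of_isOpen {D : Set P2} (hD : IsOpen D) (hh : ContDiffOn ℝ ∞ h D)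
    (heq : ∀ p ∈ D, p.2 * pdx h p = pdv (pdv h) p) (hp : p ∈ D) :
    IsSolutionAt (fun v => -v) h p where
  contDiffAt := hh.contDiffAt (hD.mem_nhds hp)
  eventually_eq_zero := by
    filter_upwards [hD.mem_nhds hp] with q hq
    simp [parabolicOp, ← heq q hq]

section Scaling

variable {v₀ R : ℝ}

theorem one_le_abs_div (hR : 0 < R) (hv₀ : v₀ ≤ -(2 * R)) : 1 ≤ |v₀| / R := by
  rw [one_le_div hR]
  linarith [neg_le_abs v₀]

theorem one_le_sqrt_abs_div (hR : 0 < R) (hv₀ : v₀ ≤ -(2 * R)) : 1 ≤ √(|v₀| / R) :=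
  Real.one_le_sqrt.2 (one_le_abs_div hR hv₀)

theorem div_two_mul_sqrt_le (hR : 0 < R) (hv₀ : v₀ ≤ -(2 * R)) :
    R / (2 * √(|v₀| / R)) ≤ R / 2 := by
  have hρ := one_le_sqrt_abs_div hR hv₀
  gcongr
  linarith

-- The velocity size `ℓ = R / (2√(|v₀|/R))` is chosen so that `-w ℓ² = (w / v₀) τ` for `τ = R³/4`.
theorem isUniformlyParabolic_neg {v : ℝ} (hR : 0 < R) (hv₀ : v₀ ≤ -(2 * R))
    (hv : v ∈ Ioo (v₀ - R) (v₀ + R)) :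
    IsUniformlyParabolic (1 / 4) (7 / 4) (fun v => -v) v (R ^ 3 / 4) (R / (2 * √(|v₀| / R))) := by
  have hρ := one_le_sqrt_abs_div hR hv₀
  have hneg : v₀ < 0 := by linarith
  have hsq : (R / (2 * √(|v₀| / R))) ^ 2 = R ^ 3 / 4 / -v₀ := by
    rw [div_pow, mul_pow, Real.sq_sqrt (by positivity), abs_of_neg hneg]
    field_simp
    norm_num
  have hcoeff (w : ℝ) : -w * (R / (2 * √(|v₀| / R))) ^ 2 = -w / -v₀ * (R ^ 3 / 4) := by
    rw [hsq, mul_div_assoc', mul_div_right_comm]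
  have hle := div_two_mul_sqrt_le hR hv₀
  refine ⟨differentiable_neg, by positivity, by positivity, fun w hw => ?_, fun w hw => ?_,
    fun w _ => ?_⟩
  · rw [hcoeff]
    have hratio : 1 / 4 ≤ -w / -v₀ := (le_div_iff₀ (neg_pos.2 hneg)).2 (by linarith [hw.2, hv.2])
    gcongr
  · rw [hcoeff]
    have hratio : -w / -v₀ ≤ 7 / 4 := (div_le_iff₀ (neg_pos.2 hneg)).2 (by linarith [hw.1, hv.1])
    gcongr
  · have hcube : (R / (2 * √(|v₀| / R))) ^ 3 ≤ (R / 2) ^ 3 := by gcongr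
    have hR₃ : 0 < R ^ 3 := by positivity
    simp only [deriv_neg', abs_neg, abs_one, one_mul]
    linarith

theorem parabolicCylinder_subset_prod (hℓ : ℓ ≤ R / 2)
    (hp : p ∈ Ioo 0 (R ^ 3) ×ˢ Ioo (v₀ - R) (v₀ + R)) :
    parabolicCylinder p (R ^ 3 / 4) ℓ ⊆
      Ioo 0 (8 * R ^ 3) ×ˢ Ioo (v₀ - 2 * R) (v₀ + 2 * R) := by
  rintro q ⟨⟨hx₀, hx₁⟩, hv₀, hv₁⟩
  obtain ⟨⟨hpx₀, hpx₁⟩, hpv₀, hpv₁⟩ := hp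
  exact ⟨⟨by linarith, by linarith⟩, by linarith, by linarith⟩

theorem isBoundedSolution_of_contDiffOn (hR : 0 < R) (hv₀ : v₀ ≤ -(2 * R))
    (hh : ContDiffOn ℝ ∞ h (Ioo 0 (8 * R ^ 3) ×ˢ Ioo (v₀ - 2 * R) (v₀ + 2 * R)))
    (heq : ∀ p ∈ Ioo 0 (8 * R ^ 3) ×ˢ Ioo (v₀ - 2 * R) (v₀ + 2 * R),
      p.2 * pdx h p = pdv (pdv h) p)
    (hK : ∀ p ∈ Ioo 0 (8 * R ^ 3) ×ˢ Ioo (v₀ - 2 * R) (v₀ + 2 * R), |h p| ≤ K)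
    (hp : p ∈ Ioo 0 (R ^ 3) ×ˢ Ioo (v₀ - R) (v₀ + R)) :
    IsBoundedSolution (1 / 4) (7 / 4) (fun v => -v) p (R ^ 3 / 4) (R / (2 * √(|v₀| / R))) h K := by
  have hsub := parabolicCylinder_subset_prod (div_two_mul_sqrt_le hR hv₀) hp
  exact ⟨isUniformlyParabolic_neg hR hv₀ hp.2,
    fun q hq => isSolutionAt_of_isOpen (isOpen_Ioo.prod isOpen_Ioo) hh heq (hsub hq),
    fun q hq => hK q (hsub hq)⟩

theorem rpow_scaling_eq (hR : 0 < R) (i j : ℕ) :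
    R ^ (-(3 * (i : ℝ) + (j : ℝ))) * (|v₀| / R) ^ ((j : ℝ) / 2)
      = √(|v₀| / R) ^ j / R ^ (3 * i + j) := by
  rw [Real.rpow_div_two_eq_sqrt _ (by positivity), Real.rpow_natCast, Real.rpow_neg hR.le,
    ← Real.rpow_natCast R]
  push_cast
  ring

theorem le_mul_rpow_of_le_mul_rpow {A K r s t y : ℝ} (hr : 1 ≤ r) (hst : s ≤ t) (hA : 0 < A)
    (hy : 0 ≤ y) (hle : y ≤ A * r ^ s * K) : y ≤ A * r ^ t * K := by
  have hrs : 0 < r ^ s := Real.rpow_pos_of_pos (one_pos.trans_le hr) s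
  have hK : 0 ≤ K := nonneg_of_mul_nonneg_right (hy.trans hle) (mul_pos hA hrs)
  refine hle.trans ?_
  gcongr

end Scaling

end KineticEquation

theorem statement_15_general (i j : ℕ) : ∃ c : ℝ, 0 < c ∧
    ∀ (v₀ R : ℝ) (h : P2 → ℝ), 0 < R → v₀ ≤ -(2 * R) →
      ContDiffOn ℝ ∞ h (Ioo 0 (8 * R ^ 3) ×ˢ Ioo (v₀ - 2 * R) (v₀ + 2 * R)) →
      (∀ p ∈ Ioo 0 (8 * R ^ 3) ×ˢ Ioo (v₀ - 2 * R) (v₀ + 2 * R),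
        p.2 * pdx h p = pdv (pdv h) p) →
      ∀ K : ℝ, (∀ p ∈ Ioo 0 (8 * R ^ 3) ×ˢ Ioo (v₀ - 2 * R) (v₀ + 2 * R), |h p| ≤ K) →
        ∀ p ∈ Ioo 0 (R ^ 3) ×ˢ Ioo (v₀ - R) (v₀ + R),
          |(pdx^[i] (pdv^[j] h)) p|
            ≤ c * R ^ (-(3 * (i : ℝ) + (j : ℝ))) * (|v₀| / R) ^ ((j : ℝ) / 2) * K := by
  obtain ⟨C, hC⟩ :=
    exists_iterate_pdx_iterate_pdv_bound (m := 1 / 4) (M := 7 / 4) (by norm_num) i j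
  refine ⟨4 ^ i * 2 ^ j * (|C| + 1), by positivity, fun v₀ R h hR hv₀ hh heq K hK p hp => ?_⟩
  have hsol := isBoundedSolution_of_contDiffOn hR hv₀ hh heq hK hp
  have hρ : 0 < √(|v₀| / R) := one_pos.trans_le (one_le_sqrt_abs_div hR hv₀)
  have hK₀ : 0 ≤ K := (abs_nonneg _).trans (hsol.abs_le p hsol.mem_self)
  have hbound : (R ^ 3 / 4) ^ i * (R / (2 * √(|v₀| / R))) ^ j * |(pdx^[i] (pdv^[j] h)) p|
      ≤ (|C| + 1) * K :=
    (hC hsol).trans (mul_le_mul_of_nonneg_right (by linarith [le_abs_self C]) hK₀)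
  rw [mul_assoc (4 ^ i * 2 ^ j * (|C| + 1)), rpow_scaling_eq hR]
  calc |(pdx^[i] (pdv^[j] h)) p|
      ≤ (|C| + 1) * K / ((R ^ 3 / 4) ^ i * (R / (2 * √(|v₀| / R))) ^ j) :=
        (le_div_iff₀' (by positivity)).2 hbound
    _ = 4 ^ i * 2 ^ j * (|C| + 1) * (√(|v₀| / R) ^ j / R ^ (3 * i + j)) * K := by
        rw [div_pow, div_pow, mul_pow, ← pow_mul, pow_add]
        field_simp

theorem statement_15 :
    ∀ i j : ℕ, ∃ c : ℝ, 0 < c ∧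
      ∀ (v₀ R : ℝ) (h : P2 → ℝ),
        v₀ < 0 → 0 < R → v₀ ≤ -(2 * R) →
        ContDiffOn ℝ ((⊤ : ℕ∞) : WithTop ℕ∞) h
          (Set.Ioo 0 (8 * R ^ 3) ×ˢ Set.Ioo (v₀ - 2 * R) (v₀ + 2 * R)) →
        (∀ p ∈ Set.Ioo 0 (8 * R ^ 3) ×ˢ Set.Ioo (v₀ - 2 * R) (v₀ + 2 * R),
          p.2 * pdx h p = pdv (pdv h) p) →
        ∀ K : ℝ,
          (∀ p ∈ Set.Ioo 0 (8 * R ^ 3) ×ˢ Set.Ioo (v₀ - 2 * R) (v₀ + 2 * R), |h p| ≤ K) →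
          ∀ p ∈ Set.Ioo 0 (R ^ 3) ×ˢ Set.Ioo (v₀ - R) (v₀ + R),
            |(pdx^[i] (pdv^[j] h)) p|
              ≤ c * R ^ (-(3 * (i : ℝ) + (j : ℝ))) * (|v₀| / R) ^ ((3 * (i : ℝ) + (j : ℝ)) / 2)
                * K := by
  intro i j
  obtain ⟨c, hc, hbound⟩ := statement_15_general i j
  exact ⟨c, hc, fun v₀ R h _ hR hv₀ hh heq K hK p hp =>
    le_mul_rpow_of_le_mul_rpow (one_le_abs_div hR hv₀) (by linarith [i.cast_nonneg (α := ℝ)])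
      (by positivity) (abs_nonneg _) (hbound v₀ R h hR hv₀ hh heq K hK p hp)⟩
end
end
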